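/- arXiv:2503.07844 — 2 statements merged into one kernel-verified Lean document; each statement's English description precedes it below -/
import Mathlib

section
/- Let V, W ⊂ ℙⁿ be irreducible closed subvarieties over ℂ with dim V + dim W > n. Then the intersection V ∩ W is connected (and nonempty). -/
open MvPolynomial

noncomputable section

/-- An (affine) algebraic subset of `ℂ^ι`: the common zero locus of a set of polynomials. -/
def IsAlgSet {ι : Type*} (S : Set (ι → ℂ)) : Prop :=
  ∃ T : Set (MvPolynomial ι ℂ), S = {x | ∀ p ∈ T, eval x p = 0}

/-- Irreducibility of a set in the Zariski sense. -/
def AlgIrreducible {ι : Type*} (S : Set (ι → ℂ)) : Prop :=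
  S.Nonempty ∧ ∀ A B : Set (ι → ℂ), IsAlgSet A → IsAlgSet B →
    S ⊆ A ∪ B → S ⊆ A ∨ S ⊆ B

/-- Krull dimension of a set, via chains of irreducible algebraic subsets. -/
def algDim {ι : Type*} (S : Set (ι → ℂ)) : WithBot ℕ∞ :=
  Order.krullDim {T : Set (ι → ℂ) // IsAlgSet T ∧ AlgIrreducible T ∧ T ⊆ S}

/-- A polynomial function on a complex vector space. -/
def IsPolynomialFun {M : Type*} [AddCommGroup M] [Module ℂ M] (g : M → ℂ) : Prop :=
  ∃ (k : ℕ) (l : Fin k → (M →ₗ[ℂ] ℂ)) (p : MvPolynomial (Fin k) ℂ),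
    ∀ m, g m = eval (fun i => l i m) p

/-- A Zariski-open subset of a complex vector space: the complement of a common zero
locus of polynomial functions. -/
def IsZariskiOpen {M : Type*} [AddCommGroup M] [Module ℂ M] (U : Set M) : Prop :=
  ∃ T : Set (M → ℂ), (∀ g ∈ T, IsPolynomialFun g) ∧ Uᶜ = {m | ∀ g ∈ T, g m = 0}


theorem fh_liouville (f : ℂ → ℂ) (hf : Differentiable ℂ f) (C : ℝ) (M : ℕ)
    (hb : ∀ z, ‖f z‖ ≤ C * (1 + ‖z‖) ^ M) :
    ∃ P : Polynomial ℂ, P.natDegree ≤ M ∧ ∀ z, f z = P.eval z := by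
  have hC : 0 ≤ C := by
    have := (norm_nonneg _).trans (hb 0)
    simpa using this
  have hz : ∀ n, M < n → iteratedDeriv n f 0 = 0 := by
    intro n hn
    rw [← norm_le_zero_iff]
    have h1 : ∀ R : ℝ, 1 ≤ R → ‖iteratedDeriv n f 0‖ ≤ (n.factorial * C * 2 ^ M) * R⁻¹ := by
      intro R hR
      have hR0 : 0 < R := by linarith
      have h2 := Complex.norm_iteratedDeriv_le_of_forall_mem_sphere_norm_le (c := 0) (R := R)
        (C := C * (2 * R) ^ M) n hR0 hf.diffContOnCl (by
          intro z hz
          refine (hb z).trans ?_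
          have : ‖z‖ = R := by simpa using hz
          rw [this]
          gcongr
          linarith)
      refine h2.trans ?_
      obtain ⟨k, rfl⟩ := Nat.exists_eq_add_of_lt hn
      have h3 : (R ^ k)⁻¹ ≤ 1 := inv_le_one_of_one_le₀ (one_le_pow₀ hR)
      have : ((M + k + 1).factorial : ℝ) * (C * (2 * R) ^ M) / R ^ (M + k + 1)
        = ((M + k + 1).factorial * C * 2 ^ M) * R⁻¹ * (R ^ k)⁻¹ := by
        field_simp
        ring
      rw [this]
      refine mul_le_of_le_one_right (by positivity) h3
    have h2 : Filter.Tendsto (fun R : ℝ => (n.factorial * C * 2 ^ M) * R⁻¹) Filter.atTop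
        (nhds ((n.factorial * C * 2 ^ M) * 0)) :=
      tendsto_inv_atTop_zero.const_mul _
    rw [mul_zero] at h2
    exact ge_of_tendsto h2 (Filter.eventually_atTop.2 ⟨1, fun R hR => h1 R hR⟩)
  refine ⟨∑ n ∈ Finset.range (M + 1),
    Polynomial.C ((n.factorial : ℂ)⁻¹ * iteratedDeriv n f 0) * Polynomial.X ^ n, ?_, ?_⟩
  · refine Polynomial.natDegree_sum_le_of_forall_le _ _ ?_
    intro i hi
    refine (Polynomial.natDegree_C_mul_X_pow_le _ _).trans ?_
    have := Finset.mem_range.1 hi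
    omega
  · intro z
    have h1 := Complex.hasSum_taylorSeries_of_entire hf 0 z
    have h2 := hasSum_sum_of_ne_finset_zero (L := SummationFilter.unconditional ℕ)
      (s := Finset.range (M + 1))
      (f := fun n : ℕ => (n.factorial : ℂ)⁻¹ • (z - 0) ^ n • iteratedDeriv n f 0) (by
        intro b hb
        have : M < b := by simpa using hb
        simp [hz b this])
    rw [h1.unique h2, Polynomial.eval_finset_sum]
    refine Finset.sum_congr rfl fun i _ => ?_
    simp
    ring

theorem fh_removable (T : Set ℂ) (hT : T.Finite) (f : ℂ → ℂ)
    (hf : ∀ z, z ∉ T → DifferentiableAt ℂ f z) (C : ℝ) (M : ℕ)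
    (hb : ∀ z, z ∉ T → ‖f z‖ ≤ C * (1 + ‖z‖) ^ M) :
    ∃ P : Polynomial ℂ, P.natDegree ≤ M ∧ ∀ z, z ∉ T → f z = P.eval z := by
  classical
  set g : ℂ → ℂ := fun z => Filter.limUnder (nhdsWithin z {z}ᶜ) f with hg
  have hgf : ∀ z, z ∉ T → g z = f z := by
    intro z hz
    have : Filter.Tendsto f (nhdsWithin z {z}ᶜ) (nhds (f z)) :=
      (hf z hz).continuousAt.tendsto.mono_left nhdsWithin_le_nhds
    exact this.limUnder_eq
  have hC : 0 ≤ C := by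
    obtain ⟨z, hz⟩ := hT.infinite_compl.nonempty
    have h1 := (norm_nonneg _).trans (hb z hz)
    exact nonneg_of_mul_nonneg_left h1 (by positivity)
  have hgd : Differentiable ℂ g := by
    intro c
    set U : Set ℂ := (T \ {c})ᶜ ∩ Metric.ball c 1
    have hU : U ∈ nhds c := by
      refine Filter.inter_mem ?_ (Metric.ball_mem_nhds c one_pos)
      exact (hT.subset Set.sdiff_subset).isClosed.isOpen_compl.mem_nhds (by simp)
    have hUT : ∀ z ∈ U \ {c}, z ∉ T := by
      rintro z ⟨⟨h1, -⟩, h2⟩ h3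
      exact h1 ⟨h3, h2⟩
    have h1 := Complex.differentiableOn_update_limUnder_of_bddAbove (f := f) hU
      (fun z hz => (hf z (hUT z hz)).differentiableWithinAt) (by
        refine ⟨C * (1 + (‖c‖ + 1)) ^ M, ?_⟩
        rintro _ ⟨z, hz, rfl⟩
        refine (hb z (hUT z hz)).trans ?_
        have h3 : ‖z‖ ≤ ‖c‖ + 1 := by
          have h4 : dist z c < 1 := hz.1.2
          rw [dist_eq_norm] at h4
          have := norm_le_norm_add_norm_sub' z c
          linarith
        gcongr)
    have h2 : ∀ᶠ z in nhds c, g z = Function.update f c (Filter.limUnder (nhdsWithin c {c}ᶜ) f) z := by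
      filter_upwards [hU] with z hz
      by_cases hzc : z = c
      · subst hzc; simp [hg]
      · rw [Function.update_of_ne hzc, hgf z (hUT z ⟨hz, hzc⟩)]
    exact (h1.differentiableAt hU).congr_of_eventuallyEq h2
  have hgb : ∀ z, ‖g z‖ ≤ C * (1 + ‖z‖) ^ M := by
    have hd : Dense Tᶜ := hT.countable.dense_compl ℂ
    have hcl : IsClosed {z | ‖g z‖ ≤ C * (1 + ‖z‖) ^ M} :=
      isClosed_le hgd.continuous.norm (by fun_prop)
    intro z
    have : Tᶜ ⊆ {z | ‖g z‖ ≤ C * (1 + ‖z‖) ^ M} := fun z hz => by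
      simpa [hgf z hz] using hb z hz
    exact (hcl.closure_subset_iff.2 this) (hd z)
  obtain ⟨P, hP, hP2⟩ := fh_liouville g hgd C M hgb
  exact ⟨P, hP, fun z hz => by rw [← hgf z hz, hP2]⟩

open Filter Topology in
theorem fh_implicit (G : Polynomial (Polynomial ℂ)) (s0 α : ℂ)
    (h : (G.map (Polynomial.evalRingHom s0)).eval α = 0)
    (h1 : (G.map (Polynomial.evalRingHom s0)).derivative.eval α ≠ 0) :
    ∃ ζ : ℂ → ℂ, ζ s0 = α ∧ DifferentiableAt ℂ ζ s0 ∧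
      ∀ᶠ s in 𝓝 s0, (G.map (Polynomial.evalRingHom s)).eval (ζ s) = 0 := by
  set f : ℂ × ℂ → ℂ := fun v => (G.map (Polynomial.evalRingHom v.1)).eval v.2 with hf
  have hfe : f = fun v => ∑ i ∈ Finset.range (G.natDegree + 1), (G.coeff i).eval v.1 * v.2 ^ i := by
    ext v
    simp only [hf]
    rw [Polynomial.eval_map, Polynomial.eval₂_eq_sum_range]
    simp
  have hcd : ContDiff ℂ 1 f := by
    rw [hfe]
    refine ContDiff.sum fun i _ => ?_
    refine ContDiff.mul ?_ (contDiff_snd.pow _)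
    have := (Polynomial.contDiff_aeval (𝕜 := ℂ) (G.coeff i) 1).comp
      (contDiff_fst (𝕜 := ℂ) (E := ℂ) (F := ℂ))
    simpa [Function.comp_def] using this
  have hs : HasStrictFDerivAt f (fderiv ℂ f (s0, α)) (s0, α) :=
    hcd.contDiffAt.hasStrictFDerivAt (by simp)
  have hd : HasDerivAt (fun z => f (s0, z))
      ((G.map (Polynomial.evalRingHom s0)).derivative.eval α) α :=
    Polynomial.hasDerivAt (G.map (Polynomial.evalRingHom s0)) α
  have hd2 : HasFDerivAt (fun z => f (s0, z))
      (fderiv ℂ f (s0, α) ∘L .inr ℂ ℂ ℂ) α :=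
    HasFDerivAt.comp (g := f) (f := fun z : ℂ => (s0, z)) α hs.hasFDerivAt (hasFDerivAt_prodMk_right s0 α)
  have h3 : (fderiv ℂ f (s0, α) ∘L .inr ℂ ℂ ℂ) = ContinuousLinearMap.toSpanSingleton ℂ
      ((G.map (Polynomial.evalRingHom s0)).derivative.eval α) := hd2.unique hd.hasFDerivAt
  have hinv : (fderiv ℂ f (s0, α) ∘L .inr ℂ ℂ ℂ).IsInvertible := by
    rw [h3]
    refine ⟨ContinuousLinearEquiv.unitsEquivAut ℂ (Units.mk0 _ h1), ?_⟩
    ext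
    simp
  refine ⟨hs.implicitFunctionOfProdDomain hinv, ?_, ?_, ?_⟩
  · exact (hs.eventually_apply_eq_iff_implicitFunctionOfProdDomain hinv).self_of_nhds.mp rfl
  · exact (hs.hasStrictFDerivAt_implicitFunctionOfProdDomain hinv).hasFDerivAt.differentiableAt
  · have := hs.eventually_apply_implicitFunctionOfProdDomain hinv
    filter_upwards [this] with s hs
    rw [← h]
    exact hs


theorem fh_coeff_diff {α : Type*} (S : Finset α) (ζ : α → ℂ → ℂ) (s0 : ℂ)
    (hζ : ∀ a ∈ S, DifferentiableAt ℂ (ζ a) s0) (j : ℕ) :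
    DifferentiableAt ℂ (fun s => (∏ a ∈ S, (Polynomial.X - Polynomial.C (ζ a s))).coeff j) s0 := by
  classical
  induction S using Finset.induction_on generalizing j with
  | empty => simp
  | insert a S ha ih =>
    have ih' := fun j => ih (fun b hb => hζ b (Finset.mem_insert_of_mem hb)) j
    have hz := hζ a (Finset.mem_insert_self _ _)
    simp only [Finset.prod_insert ha, sub_mul, Polynomial.coeff_sub, Polynomial.coeff_C_mul]
    cases j with
    | zero =>
      simp only [Polynomial.mul_coeff_zero, Polynomial.coeff_X_zero, zero_mul, zero_sub]
      exact (hz.mul (ih' 0)).neg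
    | succ j =>
      simp only [Polynomial.coeff_X_mul]
      exact (ih' j).sub (hz.mul (ih' (j+1)))

theorem fh_coeff_bound {α : Type*} (S : Finset α) (ζ : α → ℂ) (B : ℝ) (hB : 0 ≤ B)
    (hζ : ∀ a ∈ S, ‖ζ a‖ ≤ B) (j : ℕ) :
    ‖(∏ a ∈ S, (Polynomial.X - Polynomial.C (ζ a))).coeff j‖ ≤ (1 + B) ^ S.card := by
  classical
  induction S using Finset.induction_on generalizing j with
  | empty =>
    simp only [Finset.prod_empty, Polynomial.coeff_one, Finset.card_empty, pow_zero]
    split_ifs <;> simp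
  | insert a S ha ih =>
    have ih' := fun j => ih (fun b hb => hζ b (Finset.mem_insert_of_mem hb)) j
    have hz := hζ a (Finset.mem_insert_self _ _)
    simp only [Finset.prod_insert ha, sub_mul, Polynomial.coeff_sub, Polynomial.coeff_C_mul,
      Finset.card_insert_of_notMem ha]
    have key : ∀ j, ‖ζ a * (∏ a ∈ S, (Polynomial.X - Polynomial.C (ζ a))).coeff j‖
        ≤ B * (1 + B) ^ S.card := by
      intro j
      rw [norm_mul]
      exact mul_le_mul hz (ih' j) (norm_nonneg _) hB
    have hp : 0 ≤ (1 + B) ^ S.card := by positivity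
    cases j with
    | zero =>
      have := key 0
      simp only [Polynomial.mul_coeff_zero, Polynomial.coeff_X_zero, zero_mul, zero_sub, norm_neg]
      rw [pow_succ]
      nlinarith
    | succ j =>
      simp only [Polynomial.coeff_X_mul]
      refine (norm_sub_le _ _).trans ?_
      have h1 := key (j+1)
      have h2 := ih' j
      rw [pow_succ]
      nlinarith

theorem fh_sep_prod (g : Polynomial ℂ) (hm : g.Monic) (hs : g.Separable) :
    g.roots.toFinset.card = g.natDegree ∧
    ∏ z ∈ g.roots.toFinset, (Polynomial.X - Polynomial.C z) = g := by
  have hsp := IsAlgClosed.splits g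
  have hnd := Polynomial.nodup_roots hs
  constructor
  · rw [Multiset.toFinset_card_of_nodup hnd, hsp.natDegree_eq_card_roots]
  · rw [Finset.prod_eq_multiset_prod, Multiset.toFinset_val, hnd.dedup]
    exact (hsp.eq_prod_roots_of_monic hm).symm

open Filter Topology Classical in
theorem fh_local (G : Polynomial (Polynomial ℂ)) (hG : G.Monic) (T : Set ℂ) (hT : T.Finite)
    (hsep : ∀ s ∉ T, (G.map (Polynomial.evalRingHom s)).Separable)
    (𝒜 : ℂ → ℂ → Prop)
    (hop : ∀ s0 ∉ T, ∀ z0, (G.map (Polynomial.evalRingHom s0)).eval z0 = 0 → 𝒜 s0 z0 →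
      ∀ᶠ v : ℂ × ℂ in 𝓝 (s0, z0), v.1 ∉ T →
        (G.map (Polynomial.evalRingHom v.1)).eval v.2 = 0 → 𝒜 v.1 v.2)
    (hcl : ∀ s0 ∉ T, ∀ z0, (G.map (Polynomial.evalRingHom s0)).eval z0 = 0 → ¬ 𝒜 s0 z0 →
      ∀ᶠ v : ℂ × ℂ in 𝓝 (s0, z0), v.1 ∉ T →
        (G.map (Polynomial.evalRingHom v.1)).eval v.2 = 0 → ¬ 𝒜 v.1 v.2)
    (s0 : ℂ) (hs0 : s0 ∉ T) :
    ∃ (S : Finset ℂ) (ζ : ℂ → ℂ → ℂ), (∀ a ∈ S, DifferentiableAt ℂ (ζ a) s0) ∧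
      ∀ᶠ s in 𝓝 s0, 
        ∏ z ∈ (G.map (Polynomial.evalRingHom s)).roots.toFinset.filter (𝒜 s),
          (Polynomial.X - Polynomial.C z) = ∏ a ∈ S, (Polynomial.X - Polynomial.C (ζ a s)) := by
  set R0 := (G.map (Polynomial.evalRingHom s0)).roots.toFinset with hR0
  have hne : ∀ s, G.map (Polynomial.evalRingHom s) ≠ 0 := fun s => (hG.map _).ne_zero
  have hroot : ∀ s z, z ∈ (G.map (Polynomial.evalRingHom s)).roots.toFinset ↔
      (G.map (Polynomial.evalRingHom s)).eval z = 0 := by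
    intro s z
    simp [Polynomial.mem_roots (hne s), Polynomial.IsRoot]
  have h1 : ∀ α, ∃ ζ : ℂ → ℂ, α ∈ R0 → ζ s0 = α ∧ DifferentiableAt ℂ ζ s0 ∧
      ∀ᶠ s in 𝓝 s0, (G.map (Polynomial.evalRingHom s)).eval (ζ s) = 0 := by
    intro α
    by_cases hα : α ∈ R0
    · have h0 := (hroot s0 α).1 hα
      obtain ⟨ζ, hζ⟩ := fh_implicit G s0 α h0 (by
        have := (hsep s0 hs0).eval₂_derivative_ne_zero (RingHom.id ℂ) (x := α) (by
          simpa [Polynomial.eval₂_id] using h0)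
        simpa [Polynomial.eval₂_id] using this)
      exact ⟨ζ, fun _ => hζ⟩
    · exact ⟨0, fun h => absurd h hα⟩
  choose ζ hζ using h1
  refine ⟨R0.filter (𝒜 s0), ζ, fun a ha => (hζ a (Finset.mem_filter.1 ha).1).2.1, ?_⟩
  have hTo : ∀ᶠ s in 𝓝 s0, s ∉ T := hT.isClosed.isOpen_compl.mem_nhds hs0
  have hzr : ∀ᶠ s in 𝓝 s0, ∀ a ∈ R0, (G.map (Polynomial.evalRingHom s)).eval (ζ a s) = 0 :=
    (Filter.eventually_all_finset R0).2 fun a ha => (hζ a ha).2.2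
  have hdist : ∀ᶠ s in 𝓝 s0, ∀ a ∈ R0, ∀ b ∈ R0, a ≠ b → ζ a s ≠ ζ b s := by
    refine (Filter.eventually_all_finset R0).2 fun a ha => ?_
    refine (Filter.eventually_all_finset R0).2 fun b hb => ?_
    by_cases hab : a = b
    · simp [hab]
    · have h3 := (hζ a ha).2.1.continuousAt
      have h4 := (hζ b hb).2.1.continuousAt
      have : ζ a s0 ≠ ζ b s0 := by rwa [(hζ a ha).1, (hζ b hb).1]
      have h5 := (h3.sub h4).eventually_ne (sub_ne_zero.2 this)
      filter_upwards [h5] with s hs _ h6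
      exact hs (sub_eq_zero.2 h6)
  have hA : ∀ᶠ s in 𝓝 s0, ∀ a ∈ R0, (𝒜 s (ζ a s) ↔ 𝒜 s0 a) := by
    refine (Filter.eventually_all_finset R0).2 fun a ha => ?_
    have hc : Tendsto (fun s => (s, ζ a s)) (𝓝 s0) (𝓝 (s0, a)) := by
      have := (hζ a ha).2.1.continuousAt.tendsto
      rw [(hζ a ha).1] at this
      exact tendsto_id.prodMk_nhds this
    by_cases h : 𝒜 s0 a
    · filter_upwards [hTo, hzr, hc.eventually (hop s0 hs0 a ((hroot _ _).1 ha) h)] with s h1 h2 h3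
      simp [h, h3 h1 (h2 a ha)]
    · filter_upwards [hTo, hzr, hc.eventually (hcl s0 hs0 a ((hroot _ _).1 ha) h)] with s h1 h2 h3
      simp [h, h3 h1 (h2 a ha)]
  filter_upwards [hTo, hzr, hdist, hA] with s h1 h2 h3 h4
  have hinj : Set.InjOn (fun a => ζ a s) R0 := by
    intro a ha b hb hab
    by_contra hne
    exact h3 a ha b hb hne hab
  have himg : R0.image (fun a => ζ a s) = (G.map (Polynomial.evalRingHom s)).roots.toFinset := by
    refine Finset.eq_of_subset_of_card_le ?_ ?_
    · intro z hz
      obtain ⟨a, ha, rfl⟩ := Finset.mem_image.1 hz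
      exact (hroot _ _).2 (h2 a ha)
    · rw [Finset.card_image_of_injOn hinj, (fh_sep_prod _ (hG.map _) (hsep s h1)).1,
        (fh_sep_prod _ (hG.map _) (hsep s0 hs0)).1, hG.natDegree_map, hG.natDegree_map]
  have hf : (G.map (Polynomial.evalRingHom s)).roots.toFinset.filter (𝒜 s)
      = (R0.filter (𝒜 s0)).image (fun a => ζ a s) := by
    rw [← himg, Finset.filter_image]
    congr 1
    ext a
    simp only [Finset.mem_filter]
    constructor
    · rintro ⟨ha, hb⟩; exact ⟨ha, (h4 a ha).1 hb⟩
    · rintro ⟨ha, hb⟩; exact ⟨ha, (h4 a ha).2 hb⟩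
  rw [hf, Finset.prod_image]
  intro a ha b hb hab
  exact hinj (Finset.mem_filter.1 ha).1 (Finset.mem_filter.1 hb).1 hab

open Filter Topology Classical in
theorem fh_clopen (G : Polynomial (Polynomial ℂ)) (hG : G.Monic) (T : Set ℂ) (hT : T.Finite)
    (hsep : ∀ s ∉ T, (G.map (Polynomial.evalRingHom s)).Separable)
    (C : ℝ) (m : ℕ)
    (hb : ∀ s ∉ T, ∀ z, (G.map (Polynomial.evalRingHom s)).eval z = 0 → ‖z‖ ≤ C * (1 + ‖s‖) ^ m)
    (𝒜 : ℂ → ℂ → Prop)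
    (hop : ∀ s0 ∉ T, ∀ z0, (G.map (Polynomial.evalRingHom s0)).eval z0 = 0 → 𝒜 s0 z0 →
      ∀ᶠ v : ℂ × ℂ in 𝓝 (s0, z0), v.1 ∉ T →
        (G.map (Polynomial.evalRingHom v.1)).eval v.2 = 0 → 𝒜 v.1 v.2)
    (hcl : ∀ s0 ∉ T, ∀ z0, (G.map (Polynomial.evalRingHom s0)).eval z0 = 0 → ¬ 𝒜 s0 z0 →
      ∀ᶠ v : ℂ × ℂ in 𝓝 (s0, z0), v.1 ∉ T →
        (G.map (Polynomial.evalRingHom v.1)).eval v.2 = 0 → ¬ 𝒜 v.1 v.2) :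
    ∃ H : Polynomial (Polynomial ℂ), H.Monic ∧ (∀ j, (H.coeff j).natDegree ≤ m * G.natDegree) ∧
      H ∣ G ∧ ∀ s ∉ T, H.map (Polynomial.evalRingHom s) =
        ∏ z ∈ (G.map (Polynomial.evalRingHom s)).roots.toFinset.filter (𝒜 s),
          (Polynomial.X - Polynomial.C z) := by
  set Pi0 : ℂ → Polynomial ℂ := fun s =>
    ∏ z ∈ (G.map (Polynomial.evalRingHom s)).roots.toFinset.filter (𝒜 s),
          (Polynomial.X - Polynomial.C z) with hPi0
  have hne : ∀ s, G.map (Polynomial.evalRingHom s) ≠ 0 := fun s => (hG.map _).ne_zero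
  have hroot : ∀ s z, z ∈ (G.map (Polynomial.evalRingHom s)).roots.toFinset ↔
      (G.map (Polynomial.evalRingHom s)).eval z = 0 := by
    intro s z
    simp [Polynomial.mem_roots (hne s), Polynomial.IsRoot]
  have hPi0m : ∀ s, (Pi0 s).Monic := fun s => Polynomial.monic_prod_of_monic _ _
    fun z _ => Polynomial.monic_X_sub_C z
  have hcard : ∀ s, s ∉ T → ((G.map (Polynomial.evalRingHom s)).roots.toFinset.filter (𝒜 s)).card
      ≤ G.natDegree := by
    intro s hs
    refine (Finset.card_filter_le _ _).trans ?_
    rw [(fh_sep_prod _ (hG.map _) (hsep s hs)).1, hG.natDegree_map]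
  have hPi0d : ∀ s, s ∉ T → (Pi0 s).natDegree ≤ G.natDegree := by
    intro s hs
    rw [hPi0, Polynomial.natDegree_prod_of_monic _ _ fun z _ => Polynomial.monic_X_sub_C z]
    simpa using hcard s hs
  have hP : ∀ j, ∃ P : Polynomial ℂ, P.natDegree ≤ m * G.natDegree ∧
      ∀ s, s ∉ T → (Pi0 s).coeff j = P.eval s := by
    intro j
    refine fh_removable T hT _ ?_ ((1 + |C|) ^ G.natDegree) _ ?_
    · intro s0 hs0
      obtain ⟨S, ζ, h1, h2⟩ := fh_local G hG T hT hsep 𝒜 hop hcl s0 hs0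
      refine (fh_coeff_diff S ζ s0 h1 j).congr_of_eventuallyEq ?_
      filter_upwards [h2] with s hs
      simp only [hPi0, hs]
    · intro s hs
      have h1 : (1:ℝ) ≤ (1 + ‖s‖) ^ m := one_le_pow₀ (by simp)
      have h0 : 0 ≤ |C| := abs_nonneg C
      refine (fh_coeff_bound _ (fun z => z) (|C| * (1 + ‖s‖) ^ m) (by positivity) ?_ j).trans ?_
      · intro z hz
        refine (hb s hs z ((hroot _ _).1 (Finset.mem_filter.1 hz).1)).trans ?_
        gcongr
        exact le_abs_self C
      · have h2 : 1 + |C| * (1 + ‖s‖) ^ m ≤ (1 + |C|) * (1 + ‖s‖) ^ m := by nlinarith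
        calc _ ≤ ((1 + |C|) * (1 + ‖s‖) ^ m) ^ (_ : ℕ) := by gcongr
          _ ≤ ((1 + |C|) * (1 + ‖s‖) ^ m) ^ G.natDegree := by
            refine pow_le_pow_right₀ ?_ (hcard s hs)
            nlinarith
          _ = _ := by rw [mul_pow, pow_mul]
  choose P hPd hPe using hP
  set H : Polynomial (Polynomial ℂ) := ∑ j ∈ Finset.range (G.natDegree + 1),
    Polynomial.C (P j) * Polynomial.X ^ j with hH
  have hHc : ∀ j, H.coeff j = if j < G.natDegree + 1 then P j else 0 := by
    intro j
    simp [hH]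
  have hHs : ∀ s, s ∉ T → H.map (Polynomial.evalRingHom s) = Pi0 s := by
    intro s hs
    ext j
    rw [Polynomial.coeff_map, hHc]
    split_ifs with h
    · simp [hPe j s hs]
    · rw [Polynomial.coeff_eq_zero_of_natDegree_lt]
      · simp
      · have := hPi0d s hs
        omega
  have hinf : (Tᶜ).Infinite := hT.infinite_compl
  have hzero : ∀ Q : Polynomial ℂ, (∀ s, s ∉ T → Q.eval s = 0) → Q = 0 := by
    intro Q hQ
    exact Polynomial.eq_zero_of_infinite_isRoot Q (hinf.mono fun s hs => hQ s hs)
  have hH0 : H ≠ 0 := by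
    intro h0
    obtain ⟨s, hs⟩ := hinf.nonempty
    have := hHs s hs
    rw [h0, Polynomial.map_zero] at this
    exact (hPi0m s).ne_zero this.symm
  have hHm : H.Monic := by
    have h1 : H.leadingCoeff * (H.leadingCoeff - 1) = 0 := by
      refine hzero _ ?_
      intro s hs
      by_cases h : H.leadingCoeff.eval s = 0
      · simp [h]
      · have h2 : (H.map (Polynomial.evalRingHom s)).leadingCoeff = H.leadingCoeff.eval s :=
          Polynomial.leadingCoeff_map_of_leadingCoeff_ne_zero _ h
        rw [hHs s hs, (hPi0m s).leadingCoeff] at h2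
        simp [← h2]
    rcases mul_eq_zero.1 h1 with h | h
    · exact absurd (Polynomial.leadingCoeff_eq_zero.1 h) hH0
    · exact sub_eq_zero.1 h
  refine ⟨H, hHm, ?_, ?_, hHs⟩
  · intro j
    rw [hHc]
    split_ifs
    · exact hPd j
    · simp
  · rw [← Polynomial.modByMonic_eq_zero_iff_dvd hHm]
    ext1 j
    rw [Polynomial.coeff_zero]
    refine hzero _ fun s hs => ?_
    have h1 : (G %ₘ H).map (Polynomial.evalRingHom s) = 0 := by
      rw [Polynomial.map_modByMonic _ hHm, hHs s hs, Polynomial.modByMonic_eq_zero_iff_dvd (hPi0m s),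
        ← (fh_sep_prod _ (hG.map _) (hsep s hs)).2]
      exact Finset.prod_dvd_prod_of_subset _ _ _ (Finset.filter_subset _ _)
    have := congrArg (fun p => p.coeff j) h1
    simpa using this


theorem fh_cauchy (p : Polynomial ℂ) (hp : p.Monic) (z : ℂ) (hz : p.eval z = 0) :
    ‖z‖ ≤ 1 + ∑ i ∈ Finset.range p.natDegree, ‖p.coeff i‖ := by
  have h := Polynomial.IsRoot.norm_lt_cauchyBound hp.ne_zero hz
  rw [Polynomial.cauchyBound, hp.leadingCoeff] at h
  have h2 : (Finset.sup (Finset.range p.natDegree) fun x => ‖p.coeff x‖₊) ≤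
      ∑ i ∈ Finset.range p.natDegree, ‖p.coeff i‖₊ := by
    refine Finset.sup_le fun i hi => ?_
    exact Finset.single_le_sum (f := fun i => ‖p.coeff i‖₊) (fun _ _ => zero_le) hi
  have h3 : ((‖z‖₊ : NNReal) : ℝ) ≤ ((∑ i ∈ Finset.range p.natDegree, ‖p.coeff i‖₊ + 1 : NNReal) : ℝ) := by
    have : ‖z‖₊ < _ := h
    refine NNReal.coe_le_coe.2 (this.le.trans ?_)
    simpa using h2
  push_cast at h3
  simpa [add_comm] using h3

theorem fh_eval_bound (P : Polynomial ℂ) (N : ℕ) (hN : P.natDegree ≤ N) (s : ℂ) :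
    ‖P.eval s‖ ≤ (∑ i ∈ Finset.range (N + 1), ‖P.coeff i‖) * (1 + ‖s‖) ^ N := by
  rw [Polynomial.eval_eq_sum_range' (Nat.lt_succ_of_le hN), Finset.sum_mul]
  refine (norm_sum_le _ _).trans (Finset.sum_le_sum fun i hi => ?_)
  rw [norm_mul, norm_pow]
  refine mul_le_mul_of_nonneg_left ?_ (norm_nonneg _)
  have h1 : ‖s‖ ^ i ≤ (1 + ‖s‖) ^ i := by gcongr; linarith
  refine h1.trans (pow_le_pow_right₀ (by linarith [norm_nonneg s]) ?_)
  simpa [Nat.lt_succ_iff] using hi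

theorem fh_root_bound (G : Polynomial (Polynomial ℂ)) (hG : G.Monic) (N : ℕ)
    (hN : ∀ j, (G.coeff j).natDegree ≤ N) :
    ∃ C : ℝ, ∀ s z : ℂ, (G.map (Polynomial.evalRingHom s)).eval z = 0 →
      ‖z‖ ≤ C * (1 + ‖s‖) ^ N := by
  refine ⟨1 + ∑ j ∈ Finset.range G.natDegree, ∑ i ∈ Finset.range (N + 1), ‖(G.coeff j).coeff i‖, ?_⟩
  intro s z hz
  have h := fh_cauchy _ (hG.map (Polynomial.evalRingHom s)) z hz
  rw [hG.natDegree_map] at h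
  refine h.trans ?_
  rw [add_mul, Finset.sum_mul, one_mul]
  refine add_le_add (one_le_pow₀ (by linarith [norm_nonneg s])) (Finset.sum_le_sum fun j _ => ?_)
  rw [Polynomial.coeff_map]
  exact fh_eval_bound _ N (hN j) s

theorem fh_open_zero {κ : Type*} [Finite κ] (g : MvPolynomial κ ℂ) (O : Set (κ → ℂ)) (hO : IsOpen O)
    (hne : O.Nonempty) (h : ∀ x ∈ O, eval x g = 0) : g = 0 := by
  cases nonempty_fintype κ
  obtain ⟨x, hx⟩ := hne
  obtain ⟨ε, hε, hb⟩ := Metric.isOpen_iff.1 hO x hx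
  refine MvPolynomial.funext_set (fun i => Metric.ball (x i) ε) ?_ ?_
  · intro i
    exact infinite_of_mem_nhds (x i) (Metric.ball_mem_nhds _ hε)
  · intro y hy
    rw [map_zero]
    refine h y (hb ?_)
    rw [Metric.mem_ball, dist_pi_lt_iff hε]
    intro i
    exact hy i trivial

theorem fh_prod_dvd {R α : Type*} [CommRing R] [IsDomain R] (F : Polynomial R) (hF : F ≠ 0)
    (S : Finset α) (ζ : α → R) (hi : Set.InjOn ζ S) (hr : ∀ a ∈ S, F.eval (ζ a) = 0) :
    ∏ a ∈ S, (Polynomial.X - Polynomial.C (ζ a)) ∣ F := by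
  classical
  have h := (Multiset.prod_X_sub_C_dvd_iff_le_roots hF (S.val.map ζ)).2 (by
    rw [Multiset.le_iff_subset]
    · intro x hx
      obtain ⟨a, ha, rfl⟩ := Multiset.mem_map.1 hx
      exact (Polynomial.mem_roots hF).2 (hr a ha)
    · exact Multiset.Nodup.map_on (fun x hx y hy hxy => hi hx hy hxy) S.nodup)
  rw [Multiset.map_map] at h
  exact h

/-- restriction to the line through `p` and `q` -/
def fhLine {κ : Type*} (p q : κ → ℂ) : MvPolynomial κ ℂ →+* Polynomial ℂ :=
  eval₂Hom Polynomial.C (fun i => Polynomial.C (p i) + Polynomial.C (q i - p i) * Polynomial.X)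

theorem fhLine_eval {κ : Type*} (p q : κ → ℂ) (s : ℂ) :
    (Polynomial.evalRingHom s).comp (fhLine p q) = eval (p + s • (q - p)) := by
  apply MvPolynomial.ringHom_ext
  · intro r; simp [fhLine]
  · intro i; simp [fhLine]; ring

/-- generic line through `p` -/
def fhGen {κ : Type*} (p : κ → ℂ) : MvPolynomial κ ℂ →+* Polynomial (MvPolynomial κ ℂ) :=
  eval₂Hom (Polynomial.C.comp C) (fun i => Polynomial.C (C (p i)) + Polynomial.C (X i) * Polynomial.X)

theorem fhGen_spec {κ : Type*} (p : κ → ℂ) :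
    (Polynomial.eval₂RingHom (eval₂Hom C (fun i => X i - C (p i)) :
      MvPolynomial κ ℂ →+* MvPolynomial κ ℂ) 1).comp (fhGen p) = RingHom.id _ := by
  apply MvPolynomial.ringHom_ext
  · intro r; simp [fhGen]
  · intro i; simp [fhGen]

theorem fh_hensel {κ : Type*} [Finite κ] (F : Polynomial (MvPolynomial κ ℂ)) (hF : F.Monic)
    (hirr : Irreducible F) (p : κ → ℂ) (hsep : (F.map (eval p)).Separable) (S : Finset ℂ)
    (hS : ∀ α ∈ S, (F.map (eval p)).eval α = 0) (h0 : S.Nonempty) (h1 : S.card < F.natDegree)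
    (O : Set (κ → ℂ)) (hO : IsOpen O) (hOne : O.Nonempty) (M : ℕ)
    (hH : ∀ q ∈ O, ∃ H : Polynomial (Polynomial ℂ), H.Monic ∧ (∀ j, (H.coeff j).natDegree ≤ M) ∧
      H.map (Polynomial.evalRingHom 0) = ∏ α ∈ S, (Polynomial.X - Polynomial.C α) ∧
      H ∣ F.map (fhLine p q)) : False := by
  classical
  set A0 := MvPolynomial κ ℂ with hA0
  set ι0 : Polynomial A0 →+* PowerSeries A0 := Polynomial.coeToPowerSeries.ringHom with hι0
  have hinj : Function.Injective ι0 := Polynomial.coe_injective A0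
  set F1 := F.map (fhGen p) with hF1
  set F2 := F1.map ι0 with hF2
  have hF2m : F2.Monic := (hF.map _).map _
  -- constant coefficient
  have hcc : ((PowerSeries.constantCoeff (R := A0)).comp ι0).comp (fhGen p) = C.comp (eval p) := by
    apply MvPolynomial.ringHom_ext
    · intro r; simp [fhGen, hι0]
    · intro i; simp [fhGen, hι0]
  have hF2c : F2.map PowerSeries.constantCoeff = (F.map (eval p)).map C := by
    rw [hF2, hF1, Polynomial.map_map, Polynomial.map_map, Polynomial.map_map, ← hcc]
  have hroots : ∀ α, ∃ ζ : PowerSeries A0, α ∈ S → F2.eval ζ = 0 ∧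
      PowerSeries.constantCoeff ζ = C α := by
    intro α
    by_cases hα : α ∈ S
    swap
    · exact ⟨0, fun h => absurd h hα⟩
    set I : Ideal (PowerSeries A0) := Ideal.span {PowerSeries.X}
    have hI : ∀ f : PowerSeries A0, f ∈ I ↔ PowerSeries.constantCoeff f = 0 := by
      intro f
      rw [Ideal.mem_span_singleton, PowerSeries.X_dvd_iff]
    have hev : ∀ g : Polynomial (PowerSeries A0), PowerSeries.constantCoeff
        (g.eval (PowerSeries.C (C α))) = (g.map PowerSeries.constantCoeff).eval (C α) := by
      intro g
      rw [← Polynomial.eval₂_at_apply, Polynomial.eval_map]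
      simp
    have hd0 : (F.map (eval p)).derivative.eval α ≠ 0 := by
      have := hsep.eval₂_derivative_ne_zero (RingHom.id ℂ) (x := α) (by
          simpa [Polynomial.eval₂_id] using hS α hα)
      simpa [Polynomial.eval₂_id] using this
    obtain ⟨ζ, hζ1, hζ2⟩ := HenselianRing.is_henselian (I := I) F2 hF2m (PowerSeries.C (C α)) (by
      rw [hI, hev, hF2c, Polynomial.eval_map, Polynomial.eval₂_at_apply, hS α hα, map_zero]) (by
      have h2 : (Ideal.Quotient.mk I) (F2.derivative.eval (PowerSeries.C (C α))) =
          (Ideal.Quotient.mk I) (PowerSeries.C (C ((F.map (eval p)).derivative.eval α))) := by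
        rw [Ideal.Quotient.eq, hI, map_sub, hev, ← Polynomial.derivative_map, hF2c,
          Polynomial.derivative_map, Polynomial.eval_map, Polynomial.eval₂_at_apply]
        simp
      rw [h2]
      exact (((isUnit_iff_ne_zero.2 hd0).map C).map PowerSeries.C).map _)
    refine ⟨ζ, fun _ => ⟨hζ1, ?_⟩⟩
    rw [hI, map_sub, sub_eq_zero] at hζ2
    simpa using hζ2
  choose ζ hζ using hroots
  set Φ := ∏ a ∈ S, (Polynomial.X - Polynomial.C (ζ a)) with hΦ
  have hζinj : Set.InjOn ζ S := by
    intro a ha b hb hab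
    have h2 := (hζ a ha).2
    rw [hab, (hζ b hb).2] at h2
    exact (MvPolynomial.C_injective κ ℂ h2).symm
  have hΦF : Φ ∣ F2 := fh_prod_dvd F2 hF2m.ne_zero S ζ hζinj fun a ha => (hζ a ha).1
  have hΦm : Φ.Monic := Polynomial.monic_prod_of_monic _ _ fun z _ => Polynomial.monic_X_sub_C _
  have hΦd : Φ.natDegree = S.card := by
    rw [hΦ, Polynomial.natDegree_prod_of_monic _ _ fun z _ => Polynomial.monic_X_sub_C _]
    simp
  -- specialisation
  have hspec : ∀ q ∈ O, ∃ H : Polynomial (Polynomial ℂ), (∀ j, (H.coeff j).natDegree ≤ M) ∧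
      Φ.map (PowerSeries.map (eval (q - p))) = H.map Polynomial.coeToPowerSeries.ringHom := by
    intro q hq
    obtain ⟨H, hHm, hHd, hH0, K, hK⟩ := hH q hq
    refine ⟨H, hHd, ?_⟩
    set ev := PowerSeries.map (eval (q - p) : A0 →+* ℂ) with hev
    set ι1 : Polynomial ℂ →+* PowerSeries ℂ := Polynomial.coeToPowerSeries.ringHom with hι1
    have hcomm : (ev.comp ι0).comp (fhGen p) = ι1.comp (fhLine p q) := by
      apply MvPolynomial.ringHom_ext
      · intro r; simp [fhGen, fhLine, hev, hι0, hι1]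
      · intro i; simp [fhGen, fhLine, hev, hι0, hι1]
    have hcc1 : (PowerSeries.constantCoeff (R := ℂ)).comp ι1 = Polynomial.evalRingHom 0 := by
      ext x <;> simp [hι1]
    have hF2q : F2.map ev = H.map ι1 * K.map ι1 := by
      rw [hF2, hF1, Polynomial.map_map, Polynomial.map_map, hcomm, ← Polynomial.map_map, hK,
        Polynomial.map_mul]
    have hcξ : ∀ a ∈ S, PowerSeries.constantCoeff (ev (ζ a)) = a := by
      intro a ha
      have := congrArg (eval (q - p)) (hζ a ha).2
      rw [eval_C] at this
      rw [← PowerSeries.coeff_zero_eq_constantCoeff_apply, hev, PowerSeries.coeff_map,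
        PowerSeries.coeff_zero_eq_constantCoeff_apply]
      exact this
    have hHroot : ∀ a ∈ S, (H.map ι1).eval (ev (ζ a)) = 0 := by
      intro a ha
      have h2 : (F2.map ev).eval (ev (ζ a)) = 0 := by
        rw [Polynomial.eval_map, Polynomial.eval₂_at_apply, (hζ a ha).1, map_zero]
      rw [hF2q, Polynomial.eval_mul] at h2
      rcases mul_eq_zero.1 h2 with h | h
      · exact h
      exfalso
      have h3 : (K.map (Polynomial.evalRingHom 0)).eval a = 0 := by
        have := congrArg PowerSeries.constantCoeff h
        rw [map_zero, ← Polynomial.eval₂_at_apply, ← Polynomial.eval_map, Polynomial.map_map, hcc1,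
          hcξ a ha] at this
        exact this
      have h4 : F.map (eval p) = H.map (Polynomial.evalRingHom 0) * K.map (Polynomial.evalRingHom 0) := by
        rw [← Polynomial.map_mul, ← hK, Polynomial.map_map, fhLine_eval]
        simp
      have h5 : (H.map (Polynomial.evalRingHom 0)).eval a = 0 := by
        rw [hH0, Polynomial.eval_prod]
        exact Finset.prod_eq_zero ha (by simp)
      have h6 := hsep.eval₂_derivative_ne_zero (RingHom.id ℂ) (x := a) (by
          simpa [Polynomial.eval₂_id] using hS a ha)
      apply h6
      rw [Polynomial.eval₂_id, h4]
      simp only [Polynomial.derivative_mul, Polynomial.eval_add, Polynomial.eval_mul, h3, h5]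
      simp
    have hξinj : Set.InjOn (fun a => ev (ζ a)) S := by
      intro a ha b hb hab
      have h2 := hcξ a ha
      simp only at hab
      rw [hab, hcξ b hb] at h2
      exact h2.symm
    have hdv := fh_prod_dvd (H.map ι1) (hHm.map ι1).ne_zero S _ hξinj hHroot
    have hΦev : Φ.map ev = ∏ a ∈ S, (Polynomial.X - Polynomial.C (ev (ζ a))) := by
      rw [hΦ, Polynomial.map_prod]
      simp
    rw [← hΦev] at hdv
    refine (Polynomial.eq_of_monic_of_dvd_of_natDegree_le (hΦm.map _) (hHm.map _) hdv ?_).symm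
    rw [hHm.natDegree_map, hΦm.natDegree_map, hΦd, ← hHm.natDegree_map (Polynomial.evalRingHom 0),
      hH0, Polynomial.natDegree_prod_of_monic _ _ fun z _ => Polynomial.monic_X_sub_C _]
    simp
  have hvan : ∀ j m, M < m → PowerSeries.coeff m (Φ.coeff j) = 0 := by
    intro j m hm
    refine fh_open_zero _ ((fun q => q + p) ⁻¹' O) (hO.preimage (by fun_prop)) ?_ ?_
    · obtain ⟨q, hq⟩ := hOne
      exact ⟨q - p, by simpa using hq⟩
    · intro w hw
      obtain ⟨H, hHd, hHe⟩ := hspec (w + p) hw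
      have := congrArg (fun P => PowerSeries.coeff m (P.coeff j)) hHe
      simp only [Polynomial.coeff_map, PowerSeries.coeff_map, add_sub_cancel_right,
        Polynomial.coeToPowerSeries.ringHom_apply, Polynomial.coeff_coe] at this
      rw [this]
      exact Polynomial.coeff_eq_zero_of_natDegree_lt (lt_of_le_of_lt (hHd j) hm)
  have hlift : Φ ∈ Polynomial.lifts ι0 := by
    rw [Polynomial.lifts_iff_coeff_lifts]
    intro j
    refine ⟨PowerSeries.trunc (M+1) (Φ.coeff j), ?_⟩
    ext1 m
    rw [hι0, Polynomial.coeToPowerSeries.ringHom_apply, Polynomial.coeff_coe, PowerSeries.coeff_trunc]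
    split_ifs with h
    · rfl
    · exact (hvan j m (by omega)).symm
  obtain ⟨Ψ, hΨ⟩ := (Polynomial.mem_lifts _).1 hlift
  have hΨm : Ψ.Monic := by
    rw [hinj.monic_map_iff, hΨ]; exact hΦm
  have hΨF : Ψ ∣ F1 := by
    rw [← Polynomial.map_dvd_map ι0 hinj hΨm, hΨ]
    exact hΦF
  set χ : Polynomial A0 →+* A0 := Polynomial.eval₂RingHom
    (eval₂Hom C (fun i => X i - C (p i)) : MvPolynomial κ ℂ →+* MvPolynomial κ ℂ) 1 with hχ
  have hχF : F1.map χ = F := by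
    have : χ.comp (fhGen p) = RingHom.id _ := fhGen_spec p
    rw [hF1, Polynomial.map_map, this, Polynomial.map_id]
  obtain ⟨Q, hQ⟩ : Ψ.map χ ∣ F := by
    rw [← hχF]
    exact Polynomial.map_dvd χ hΨF
  have hΨd : (Ψ.map χ).natDegree = S.card := by
    rw [hΨm.natDegree_map, ← hΦd, ← hΨ, hΨm.natDegree_map]
  have hQm : Q.Monic := (hΨm.map χ).of_mul_monic_left (hQ ▸ hF)
  have hcard := h0.card_pos
  have hdeg : F.natDegree = S.card + Q.natDegree := by
    rw [hQ, (hΨm.map χ).natDegree_mul hQm, hΨd]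
  rcases hirr.isUnit_or_isUnit hQ with h | h
  · rw [(hΨm.map χ).isUnit_iff] at h
    rw [h] at hΨd
    simp at hΨd
    omega
  · rw [hQm.isUnit_iff] at h
    rw [h] at hdeg
    simp at hdeg
    omega


theorem fh_prod_pow {B σ : Type*} [CommRing B] (s : Finset σ) (p : σ → Polynomial B) (m : σ → ℕ)
    (hp : ∀ i, (p i).natDegree ≤ 1) :
    (∏ i ∈ s, p i ^ m i).natDegree ≤ ∑ i ∈ s, m i ∧
    (∏ i ∈ s, p i ^ m i).coeff (∑ i ∈ s, m i) = ∏ i ∈ s, ((p i).coeff 1) ^ m i := by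
  classical
  induction s using Finset.induction_on with
  | empty => simp
  | insert a s ha ih =>
    have h1 : (p a ^ m a).natDegree ≤ m a := by
      have := Polynomial.natDegree_pow_le_of_le (m a) (hp a)
      simpa using this
    rw [Finset.prod_insert ha, Finset.sum_insert ha, Finset.prod_insert ha]
    refine ⟨Polynomial.natDegree_mul_le_of_le h1 ih.1, ?_⟩
    rw [Polynomial.coeff_mul_add_eq_of_natDegree_le h1 ih.1, ih.2]
    congr 1
    have := Polynomial.coeff_pow_of_natDegree_le (m := m a) (hp a)
    simpa using this

theorem fh_top_coeff {B σ : Type*} [CommRing B] [Algebra ℂ B] (f : MvPolynomial σ ℂ)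
    (a : σ → B) (w : σ → ℂ) (P : Polynomial B)
    (hP : P = aeval (fun i => Polynomial.C (a i) +
      Polynomial.C (algebraMap ℂ B (w i)) * Polynomial.X) f) :
    P.natDegree ≤ f.totalDegree ∧ P.coeff f.totalDegree =
      algebraMap ℂ B (eval w (homogeneousComponent f.totalDegree f)) := by
  classical
  set p : σ → Polynomial B := fun i => Polynomial.C (a i) +
      Polynomial.C (algebraMap ℂ B (w i)) * Polynomial.X with hp
  have hp1 : ∀ i, (p i).natDegree ≤ 1 := by
    intro i
    simp only [hp]
    rw [add_comm]
    exact Polynomial.natDegree_linear_le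
  have hp2 : ∀ i, (p i).coeff 1 = algebraMap ℂ B (w i) := by
    intro i
    simp [hp, Polynomial.coeff_C]
  rw [aeval_def, eval₂_eq] at hP
  have hdeg : ∀ d ∈ f.support, ∑ i ∈ d.support, d i ≤ f.totalDegree := fun d hd => le_totalDegree hd
  have halg : ∀ c : ℂ, algebraMap ℂ (Polynomial B) c = Polynomial.C (algebraMap ℂ B c) := fun c => rfl
  constructor
  · rw [hP]
    refine Polynomial.natDegree_sum_le_of_forall_le _ _ fun d hd => ?_
    rw [halg]
    exact (Polynomial.natDegree_C_mul_le _ _).trans ((fh_prod_pow _ p d hp1).1.trans (hdeg d hd))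
  · rw [homogeneousComponent_apply, hP, Polynomial.finsetSum_coeff, map_sum, map_sum,
      Finset.sum_filter]
    refine Finset.sum_congr rfl fun d hd => ?_
    rw [halg, Polynomial.coeff_C_mul]
    obtain ⟨h1, h2⟩ := fh_prod_pow d.support p d hp1
    split_ifs with h
    · rw [Finsupp.degree_apply] at h
      rw [← h, h2, eval_monomial, map_mul]
      congr 1
      simp [hp2, Finsupp.prod]
    · rw [Polynomial.coeff_eq_zero_of_natDegree_lt, mul_zero]
      rw [Finsupp.degree_apply] at h
      have := hdeg d hd
      omega

theorem fh_integral_trans {R : Type*} [CommRing R] [Algebra ℂ R] (S : Set R) (B : Subalgebra ℂ R)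
    (h1 : ∀ r : R, IsIntegral (Algebra.adjoin ℂ S) r) (h2 : ∀ s ∈ S, IsIntegral B s) (r : R) :
    IsIntegral B r := by
  set D : Subalgebra ℂ R := (integralClosure B R).restrictScalars ℂ with hD
  have hle : Algebra.adjoin ℂ S ≤ D := Algebra.adjoin_le h2
  have h3 : IsIntegral (integralClosure B R) r := by
    obtain ⟨f, hf, hf2⟩ := h1 r
    refine ⟨f.map ((algebraMap (Algebra.adjoin ℂ S) R).codRestrict (integralClosure B R)
      fun x => hle x.2), hf.map _, ?_⟩
    rw [Polynomial.eval₂_map]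
    exact hf2
  exact isIntegral_trans (A := integralClosure B R) r h3

theorem fh_step {R σ : Type*} [Finite σ] [CommRing R] [Algebra ℂ R] (v : Option σ → R)
    (hdep : ¬ AlgebraicIndependent ℂ v) (ε : ℝ) (hε : 0 < ε) :
    ∃ c : σ → ℂ, (∀ i, ‖c i‖ < ε) ∧
      IsIntegral (Algebra.adjoin ℂ (Set.range fun i => v (some i) - c i • v none)) (v none) := by
  classical
  cases nonempty_fintype σ
  rw [algebraicIndependent_iff] at hdep
  push Not at hdep
  obtain ⟨f, hf0, hfne⟩ := hdep
  set g := homogeneousComponent f.totalDegree f with hg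
  have hgne : g ≠ 0 := by
    intro h0
    obtain ⟨d, hd, hd2⟩ : ∃ d ∈ f.support, Finsupp.degree d = f.totalDegree := by
      obtain ⟨d, hd, hd2⟩ := Finset.exists_mem_eq_sup f.support
        (MvPolynomial.support_nonempty.2 hfne) (fun s => s.sum fun _ e => e)
      exact ⟨d, hd, by rw [Finsupp.degree_apply]; exact hd2.symm⟩
    have := congrArg (coeff d) h0
    rw [hg, coeff_homogeneousComponent, if_pos hd2, coeff_zero] at this
    exact (mem_support_iff.1 hd) this
  set e : Option σ → ℂ := Pi.single none 1 with he
  obtain ⟨w, hw, hgw⟩ : ∃ w ∈ Metric.ball e (min (1/2) (ε/2)), eval w g ≠ 0 := by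
    by_contra! hcon
    exact hgne (fh_open_zero g _ Metric.isOpen_ball ⟨e, Metric.mem_ball_self (by positivity)⟩ hcon)
  have hwd : ∀ o, ‖w o - e o‖ < min (1/2) (ε/2) := by
    intro o
    rw [Metric.mem_ball] at hw
    have := (dist_pi_lt_iff (by positivity)).1 hw o
    rwa [dist_eq_norm] at this
  have hwn : 1/2 < ‖w none‖ := by
    have h1 := (hwd none).trans_le (min_le_left _ _)
    have h2 : e none = 1 := by simp [he]
    rw [h2] at h1
    have h3 := norm_sub_norm_le (1:ℂ) (w none)
    rw [norm_sub_rev] at h3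
    simp at h3
    linarith
  have hwn0 : w none ≠ 0 := by
    intro h; rw [h] at hwn; simp at hwn; linarith
  have hws : ∀ i, ‖w (some i)‖ < ε/2 := by
    intro i
    have h1 := (hwd (some i)).trans_le (min_le_right _ _)
    have h2 : e (some i) = 0 := by simp [he]
    rwa [h2, sub_zero] at h1
  refine ⟨fun i => w (some i) / w none, ?_, ?_⟩
  · intro i
    rw [norm_div, div_lt_iff₀ (by linarith)]
    have := hws i
    nlinarith
  · set B := Algebra.adjoin ℂ (Set.range fun i => v (some i) - (w (some i) / w none) • v none) with hB
    set t : R := (w none)⁻¹ • v none with ht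
    have hvt : v none = w none • t := by rw [ht, smul_smul, mul_inv_cancel₀ hwn0, one_smul]
    let a : Option σ → B := fun o => match o with
      | none => 0
      | some i => ⟨v (some i) - (w (some i) / w none) • v none, Algebra.subset_adjoin ⟨i, rfl⟩⟩
    obtain ⟨hP1, hP2⟩ := fh_top_coeff f a w _ rfl
    set P : Polynomial B := aeval (fun i => Polynomial.C (a i) +
      Polynomial.C (algebraMap ℂ B (w i)) * Polynomial.X) f with hP
    have hPt : Polynomial.aeval t P = 0 := by
      have : ((Polynomial.aeval (R := B) t).restrictScalars ℂ).comp (aeval (fun i => Polynomial.C (a i) +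
          Polynomial.C (algebraMap ℂ B (w i)) * Polynomial.X)) = aeval (R := ℂ) v := by
        apply MvPolynomial.algHom_ext
        intro o
        cases o with
        | none =>
          simp only [AlgHom.comp_apply, aeval_X, AlgHom.restrictScalars_apply]
          simp only [a, map_zero, zero_add, map_mul, Polynomial.aeval_X, Polynomial.aeval_C]
          rw [hvt, Algebra.smul_def]
          rfl
        | some i =>
          simp only [AlgHom.comp_apply, aeval_X, AlgHom.restrictScalars_apply]
          simp only [a, map_add, map_mul, Polynomial.aeval_X, Polynomial.aeval_C]
          change (v (some i) - (w (some i) / w none) • v none) + algebraMap ℂ R (w (some i)) * t = _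
          rw [ht, ← Algebra.smul_def, smul_smul, ← div_eq_mul_inv, sub_add_cancel]
      have h2 := congrArg (fun φ => φ f) this
      rw [hf0] at h2
      exact h2
    have htint : IsIntegral B t := by
      refine ⟨Polynomial.C (algebraMap ℂ B (eval w g)⁻¹) * P, ?_, ?_⟩
      · refine Polynomial.monic_of_natDegree_le_of_coeff_eq_one f.totalDegree
          ((Polynomial.natDegree_C_mul_le _ _).trans hP1) ?_
        rw [Polynomial.coeff_C_mul, hP2, ← map_mul, inv_mul_cancel₀ hgw, map_one]
      · rw [← Polynomial.aeval_def, map_mul, hPt, mul_zero]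
    rw [hvt, Algebra.smul_def]
    exact IsIntegral.mul (isIntegral_algebraMap (A := R) (R := B) (x := algebraMap ℂ B (w none))) htint

theorem fh_normalize {R κ : Type} [Fintype κ] [CommRing R] [Algebra ℂ R]
    (htr : Algebra.trdeg ℂ R ≤ Fintype.card κ) (j : ℕ) : ∀ (u : κ → R) (v : Fin j → R) 
    (_ : ∀ r : R, IsIntegral (Algebra.adjoin ℂ (Set.range u ∪ Set.range v)) r) (ε : ℝ) (_ : 0 < ε),
    ∃ N : κ → Fin j → ℂ, (∀ i k, ‖N i k‖ < ε) ∧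
      ∀ r : R, IsIntegral (Algebra.adjoin ℂ (Set.range fun i => u i + ∑ k, N i k • v k)) r := by
  classical
  induction j with
  | zero =>
    intro u v h ε hε
    refine ⟨fun _ _ => 0, fun i k => by simpa using hε, ?_⟩
    intro r
    have h1 : (Set.range fun i => u i + ∑ k, (0 : ℂ) • v k) = Set.range u ∪ Set.range v := by
      simp [Set.range_eq_empty v]
    rw [h1]
    exact h r
  | succ j ih =>
    intro u v h ε hε
    set V : Option (κ ⊕ Fin j) → R := fun o => match o with
      | none => v (Fin.last j)
      | some (Sum.inl i) => u i
      | some (Sum.inr k) => v k.castSucc with hV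
    have hdep : ¬ AlgebraicIndependent ℂ V := by
      intro hi
      have h1 := hi.cardinalMk_le_trdeg.trans htr
      rw [Cardinal.mk_fintype, Nat.cast_le] at h1
      simp at h1
    obtain ⟨c, hc, hint⟩ := fh_step V hdep (min 1 (ε/2)) (by positivity)
    set B := Algebra.adjoin ℂ (Set.range fun i => V (some i) - c i • V none) with hB
    set u' : κ → R := fun i => u i - c (Sum.inl i) • v (Fin.last j) with hu'
    set v' : Fin j → R := fun k => v k.castSucc - c (Sum.inr k) • v (Fin.last j) with hv'
    have hBe : B = Algebra.adjoin ℂ (Set.range u' ∪ Set.range v') := by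
      rw [hB]
      congr 1
      ext x
      simp [hu', hv', hV]
    have hel : ∀ (c : ℂ) (x : R), x - c • V none ∈ B → IsIntegral B x := by
      intro c x hx
      have h2 : x = (x - c • V none) + c • V none := by ring
      rw [h2]
      refine IsIntegral.add (isIntegral_algebraMap (R := B) (x := ⟨_, hx⟩)) ?_
      rw [Algebra.smul_def]
      exact IsIntegral.mul (isIntegral_algebraMap (R := B) (x := algebraMap ℂ B c)) hint
    have h1 : ∀ r : R, IsIntegral B r := by
      refine fh_integral_trans _ B h ?_
      rintro s (⟨i, rfl⟩ | ⟨k, rfl⟩)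
      · exact hel (c (Sum.inl i)) _ (Algebra.subset_adjoin ⟨Sum.inl i, rfl⟩)
      · refine Fin.lastCases ?_ (fun k => ?_) k
        · exact hint
        · exact hel (c (Sum.inr k)) _ (Algebra.subset_adjoin ⟨Sum.inr k, rfl⟩)
    rw [hBe] at h1
    obtain ⟨N, hN1, hN2⟩ := ih u' v' h1 (ε / (2 * (j + 1))) (by positivity)
    refine ⟨fun i => Fin.snoc (N i) (- c (Sum.inl i) - ∑ k, N i k * c (Sum.inr k)), ?_, ?_⟩
    · intro i k
      refine Fin.lastCases ?_ (fun k => ?_) k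
      · simp only [Fin.snoc_last]
        have h2 : ‖∑ k, N i k * c (Sum.inr k)‖ ≤ ε / 2 := by
          refine (norm_sum_le _ _).trans ?_
          calc ∑ k, ‖N i k * c (Sum.inr k)‖ ≤ ∑ k : Fin j, ε / (2 * (j + 1)) := by
                refine Finset.sum_le_sum fun k _ => ?_
                rw [norm_mul]
                have h3 := (hc (Sum.inr k)).trans_le (min_le_left _ _)
                have h4 := hN1 i k
                have h5 := norm_nonneg (N i k)
                have h6 := norm_nonneg (c (Sum.inr k))
                nlinarith
            _ = j * (ε / (2 * (j + 1))) := by simp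
            _ ≤ ε / 2 := by
                rw [mul_div_assoc', div_le_div_iff₀ (by positivity) (by positivity)]
                nlinarith
        have h3 := (hc (Sum.inl i)).trans_le (min_le_right _ _)
        calc _ ≤ ‖- c (Sum.inl i)‖ + ‖∑ k, N i k * c (Sum.inr k)‖ := norm_sub_le _ _
          _ < ε := by rw [norm_neg]; linarith
      · simp only [Fin.snoc_castSucc]
        refine (hN1 i k).trans_le ?_
        rw [div_le_iff₀ (by positivity)]
        have : (0:ℝ) ≤ j := by positivity
        nlinarith
    · have h2 : (fun i => u i + ∑ k, (Fin.snoc (N i) (- c (Sum.inl i) - ∑ k, N i k * c (Sum.inr k)) :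
          Fin (j+1) → ℂ) k • v k) = fun i => u' i + ∑ k, N i k • v' k := by
        funext i
        rw [Fin.sum_univ_castSucc]
        simp only [Fin.snoc_castSucc, Fin.snoc_last, hu', hv', smul_sub, Finset.sum_sub_distrib,
          sub_smul, neg_smul, Finset.sum_smul, smul_smul]
        abel
      rw [h2]
      exact hN2

theorem fh_lemmaP {R κ ι : Type} [Fintype κ] [Fintype ι] [CommRing R] [IsDomain R] [Algebra ℂ R]
    (x : ι → R) (hx : ∀ r : R, r ∈ Algebra.adjoin ℂ (Set.range x))
    (htr : Algebra.trdeg ℂ R = Fintype.card κ) (M0 : κ → ι → ℂ) (ε : ℝ) (hε : 0 < ε) :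
    ∃ M : κ → ι → ℂ, (∀ i j, ‖M i j - M0 i j‖ < ε) ∧
      Function.Injective (aeval (R := ℂ) (fun i => ∑ j, M i j • x j)) ∧
      (aeval (R := ℂ) (fun i => ∑ j, M i j • x j)).toRingHom.IsIntegral := by
  classical
  set e := Fintype.equivFin ι
  obtain ⟨N, hN1, hN2⟩ := fh_normalize (R := R) htr.le (Fintype.card ι) (fun i => ∑ j, M0 i j • x j)
    (fun k => x (e.symm k)) (by
      intro r
      have hr : r ∈ Algebra.adjoin ℂ ((Set.range fun i => ∑ j, M0 i j • x j) ∪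
          Set.range fun k => x (e.symm k)) := by
        refine Algebra.adjoin_mono ?_ (hx r)
        rintro _ ⟨j, rfl⟩
        exact Or.inr ⟨e j, by simp⟩
      exact isIntegral_algebraMap (R := Algebra.adjoin ℂ _) (x := ⟨r, hr⟩)) ε hε
  set M : κ → ι → ℂ := fun i j => M0 i j + N i (e j) with hM
  have hfe : (fun i => ∑ j, M i j • x j) =
      fun i => ∑ j, M0 i j • x j + ∑ k, N i k • x (e.symm k) := by
    funext i
    rw [← Equiv.sum_comp e]
    simp [hM, add_smul, Finset.sum_add_distrib]
  rw [← hfe] at hN2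
  refine ⟨M, ?_, ?_, ?_⟩
  · intro i j
    simpa [hM] using hN1 i (e j)
  · have : Algebra.IsIntegral (Algebra.adjoin ℂ (Set.range (fun i => ∑ j, M i j • x j))) R := ⟨hN2⟩
    have := Algebra.IsAlgebraic.isTranscendenceBasis_of_lift_le_trdeg_of_finite ℂ
      (fun i => ∑ j, M i j • x j) (by simp [htr])
    exact this.1
  · intro r
    obtain ⟨f, hf, hf2⟩ := hN2 r
    have hmem : ∀ b : Algebra.adjoin ℂ (Set.range (fun i => ∑ j, M i j • x j)),
        (b : R) ∈ (aeval (R := ℂ) (fun i => ∑ j, M i j • x j)).range := by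
      intro b
      rw [← Algebra.adjoin_range_eq_range_aeval]
      exact b.2
    have hlift : f ∈ Polynomial.lifts ((aeval (R := ℂ) (fun i => ∑ j, M i j • x j)).codRestrict
        (Algebra.adjoin ℂ (Set.range (fun i => ∑ j, M i j • x j))) (by
          intro p
          rw [Algebra.adjoin_range_eq_range_aeval]
          exact ⟨p, rfl⟩)).toRingHom := by
      rw [Polynomial.lifts_iff_coeff_lifts]
      intro n
      obtain ⟨p, hp⟩ := hmem (f.coeff n)
      exact ⟨p, Subtype.ext hp⟩
    obtain ⟨g, hg1, -, hg2⟩ := Polynomial.lifts_and_natDegree_eq_and_monic hlift hf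
    refine ⟨g, hg2, ?_⟩
    rw [← hg1, Polynomial.eval₂_map] at hf2
    exact hf2


/-- Coordinate ring data for a subset of affine space. -/
structure FhCoord {ι : Type} (X0 : Set (ι → ℂ)) (R : Type) [CommRing R] [Algebra ℂ R] where
  μ : MvPolynomial ι ℂ →ₐ[ℂ] R
  surj : Function.Surjective μ
  ev : ∀ z ∈ X0, ∃ e : R →ₐ[ℂ] ℂ, ∀ p, e (μ p) = eval z p
  pt : ∀ Q : Ideal R, Q.IsMaximal → ∃ z ∈ X0, ∀ p, μ p ∈ Q ↔ eval z p = 0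

theorem fh_van_prime {ι : Type} (X0 : Set (ι → ℂ)) (hirr : AlgIrreducible X0) :
    (vanishingIdeal ℂ X0 : Ideal (MvPolynomial ι ℂ)).IsPrime := by
  refine ⟨?_, ?_⟩
  · intro h
    obtain ⟨z, hz⟩ := hirr.1
    have : (1 : MvPolynomial ι ℂ) ∈ (vanishingIdeal ℂ X0 : Ideal (MvPolynomial ι ℂ)) := h ▸ trivial
    have := this z hz
    simp at this
  · intro p q hpq
    have h := hirr.2 {x | ∀ f ∈ ({p} : Set (MvPolynomial ι ℂ)), eval x f = 0}
      {x | ∀ f ∈ ({q} : Set (MvPolynomial ι ℂ)), eval x f = 0} ⟨_, rfl⟩ ⟨_, rfl⟩ (by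
        intro z hz
        have := hpq z hz
        rw [map_mul, mul_eq_zero] at this
        rcases this with h | h
        · left; simpa using h
        · right; simpa using h)
    rcases h with h | h
    · left; intro z hz; have := h hz; simpa using this
    · right; intro z hz; have := h hz; simpa using this

theorem fh_alg_eq {ι : Type} (X0 : Set (ι → ℂ)) (hX : IsAlgSet X0) (z : ι → ℂ)
    (h : ∀ p ∈ (vanishingIdeal ℂ X0 : Ideal (MvPolynomial ι ℂ)), eval z p = 0) : z ∈ X0 := by
  obtain ⟨T, hT⟩ := hX
  rw [hT]
  intro p hp
  refine h p ?_
  intro y hy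
  rw [hT] at hy
  simpa using hy p hp

/-- The standard coordinate ring. -/
def fhCoordStd {ι : Type} [Finite ι] (X0 : Set (ι → ℂ)) (hX : IsAlgSet X0) :
    FhCoord X0 (MvPolynomial ι ℂ ⧸ (vanishingIdeal ℂ X0 : Ideal (MvPolynomial ι ℂ))) where
  μ := Ideal.Quotient.mkₐ ℂ _
  surj := Ideal.Quotient.mkₐ_surjective ℂ _
  ev := by
    intro z hz
    refine ⟨Ideal.Quotient.liftₐ _ (aeval z) (fun p hp => hp z hz), ?_⟩
    intro p
    simp
  pt := by
    intro Q hQ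
    have h1 : (Q.comap (Ideal.Quotient.mk
        (vanishingIdeal ℂ X0 : Ideal (MvPolynomial ι ℂ)))).IsMaximal :=
      Ideal.comap_isMaximal_of_surjective _ Ideal.Quotient.mk_surjective
    obtain ⟨z, hz⟩ := isMaximal_iff_eq_vanishingIdeal_singleton.1 h1
    have h2 : ∀ p : MvPolynomial ι ℂ, Ideal.Quotient.mk
        (vanishingIdeal ℂ X0 : Ideal (MvPolynomial ι ℂ)) p ∈ Q ↔ eval z p = 0 := by
      intro p
      rw [← Ideal.mem_comap, hz, mem_vanishingIdeal_singleton_iff]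
      simp
    refine ⟨z, fh_alg_eq X0 hX z fun p hp => ?_, h2⟩
    rw [← h2, Ideal.Quotient.eq_zero_iff_mem.2 hp]
    exact Q.zero_mem

section

variable {ι κ : Type} [Fintype ι] [Finite κ] {X0 : Set (ι → ℂ)} {R : Type} [CommRing R]
  [Algebra ℂ R] [Algebra (MvPolynomial κ ℂ) R] [IsScalarTower ℂ (MvPolynomial κ ℂ) R]

theorem fh_evA (c : FhCoord X0 R) (M : κ → ι → ℂ)
    (hM : ∀ i, algebraMap (MvPolynomial κ ℂ) R (X i) = c.μ (∑ j, C (M i j) * X j))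
    (z : ι → ℂ) (e : R →ₐ[ℂ] ℂ) (he : ∀ p, e (c.μ p) = eval z p) :
    (e : R →+* ℂ).comp (algebraMap (MvPolynomial κ ℂ) R) = eval (fun i => ∑ j, M i j * z j) := by
  apply MvPolynomial.ringHom_ext
  · intro r
    have : algebraMap (MvPolynomial κ ℂ) R (C r) = algebraMap ℂ R r :=
      (IsScalarTower.algebraMap_apply ℂ (MvPolynomial κ ℂ) R r).symm
    simp [this]
  · intro i
    simp only [RingHom.comp_apply, hM, RingHom.coe_coe, he]
    simp

theorem fh_evP (c : FhCoord X0 R) (M : κ → ι → ℂ)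
    (hM : ∀ i, algebraMap (MvPolynomial κ ℂ) R (X i) = c.μ (∑ j, C (M i j) * X j))
    (z : ι → ℂ) (e : R →ₐ[ℂ] ℂ) (he : ∀ p, e (c.μ p) = eval z p)
    (P : Polynomial (MvPolynomial κ ℂ)) (h : MvPolynomial ι ℂ) :
    e (Polynomial.aeval (c.μ h) P) = (P.map (eval (fun i => ∑ j, M i j * z j))).eval (eval z h) := by
  rw [Polynomial.aeval_def, ← fh_evA c M hM z e he, Polynomial.eval_map, ← he h]
  exact Polynomial.hom_eval₂ P _ (e : R →+* ℂ) _

theorem fh_lying [IsDomain R] [Algebra.IsIntegral (MvPolynomial κ ℂ) R]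
    [FaithfulSMul (MvPolynomial κ ℂ) R] (c : FhCoord X0 R) (M : κ → ι → ℂ)
    (hM : ∀ i, algebraMap (MvPolynomial κ ℂ) R (X i) = c.μ (∑ j, C (M i j) * X j))
    (h : MvPolynomial ι ℂ) (u : κ → ℂ) (ζ : ℂ)
    (hζ : ((minpoly (MvPolynomial κ ℂ) (c.μ h)).map (eval u)).eval ζ = 0) :
    ∃ z ∈ X0, (fun i => ∑ j, M i j * z j) = u ∧ eval z h = ζ := by
  have hint : IsIntegral (MvPolynomial κ ℂ) (c.μ h) := Algebra.IsIntegral.isIntegral _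
  let ψ : Polynomial (MvPolynomial κ ℂ) →+* R := (Polynomial.aeval (c.μ h)).toRingHom
  letI : Algebra (Polynomial (MvPolynomial κ ℂ)) R := ψ.toAlgebra
  have : IsScalarTower (MvPolynomial κ ℂ) (Polynomial (MvPolynomial κ ℂ)) R := by
    refine IsScalarTower.of_algebraMap_eq fun a => ?_
    change _ = Polynomial.aeval (c.μ h) (Polynomial.C a)
    simp
  have : Algebra.IsIntegral (Polynomial (MvPolynomial κ ℂ)) R :=
    ⟨fun r => IsIntegral.tower_top (Algebra.IsIntegral.isIntegral (R := MvPolynomial κ ℂ) r)⟩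
  let χ : Polynomial (MvPolynomial κ ℂ) →+* ℂ := Polynomial.eval₂RingHom (eval u) ζ
  have hχs : Function.Surjective χ := by
    intro a
    exact ⟨Polynomial.C (C a), by simp [χ]⟩
  have hmax : (RingHom.ker χ).IsMaximal := RingHom.ker_isMaximal_of_surjective χ hχs
  obtain ⟨Q, hQ, hQ2⟩ := Ideal.exists_ideal_over_maximal_of_isIntegral (S := R) (RingHom.ker χ) (by
    intro P hP
    have hP' : Polynomial.aeval (c.μ h) P = 0 := hP
    obtain ⟨K, rfl⟩ := minpoly.isIntegrallyClosed_dvd hint hP'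
    rw [RingHom.mem_ker, map_mul]
    have : χ (minpoly (MvPolynomial κ ℂ) (c.μ h)) = 0 := by
      rw [← hζ, Polynomial.eval_map]; rfl
    rw [this, zero_mul])
  obtain ⟨z, hz, hzQ⟩ := c.pt Q hQ
  have hmem : ∀ P, ψ P ∈ Q ↔ χ P = 0 := by
    intro P
    rw [← RingHom.mem_ker, ← hQ2]
    rfl
  refine ⟨z, hz, ?_, ?_⟩
  · funext i
    have h1 : χ (Polynomial.C (X i - C (u i))) = 0 := by simp [χ]
    rw [← hmem] at h1
    have h2 : ψ (Polynomial.C (X i - C (u i))) = c.μ (∑ j, C (M i j) * X j - C (u i)) := by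
      have h3 : algebraMap (MvPolynomial κ ℂ) R (C (u i)) = algebraMap ℂ R (u i) :=
        (IsScalarTower.algebraMap_apply ℂ (MvPolynomial κ ℂ) R _).symm
      change Polynomial.aeval (c.μ h) (Polynomial.C (X i - C (u i))) = _
      rw [Polynomial.aeval_C, map_sub, map_sub, hM, h3]
      congr 1
      exact (c.μ.commutes (u i)).symm
    rw [h2, hzQ] at h1
    simpa [sub_eq_zero] using h1
  · have h1 : χ (Polynomial.X - Polynomial.C (C ζ)) = 0 := by simp [χ]
    rw [← hmem] at h1
    have h2 : ψ (Polynomial.X - Polynomial.C (C ζ)) = c.μ (h - C ζ) := by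
      have h3 : algebraMap (MvPolynomial κ ℂ) R (C ζ) = algebraMap ℂ R ζ :=
        (IsScalarTower.algebraMap_apply ℂ (MvPolynomial κ ℂ) R _).symm
      change Polynomial.aeval (c.μ h) (Polynomial.X - Polynomial.C (C ζ)) = _
      rw [map_sub, Polynomial.aeval_C, Polynomial.aeval_X, map_sub, h3]
      congr 1
      exact (c.μ.commutes ζ).symm
    rw [h2, hzQ] at h1
    simpa [sub_eq_zero] using h1

end


theorem fh_dim {ι κ : Type} [Fintype ι] [Fintype κ] {X0 : Set (ι → ℂ)} {R : Type} [CommRing R]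
    [Algebra ℂ R] [Algebra (MvPolynomial κ ℂ) R] [Algebra.IsIntegral (MvPolynomial κ ℂ) R]
    (c : FhCoord X0 R) : algDim X0 ≤ (Fintype.card κ : ℕ) := by
  have hker : ∀ T : Set (ι → ℂ), T ⊆ X0 → RingHom.ker c.μ ≤ vanishingIdeal ℂ T := by
    intro T hT p hp z hz
    obtain ⟨e, he⟩ := c.ev z (hT hz)
    have h1 : c.μ p = 0 := hp
    have := he p
    rw [h1, map_zero] at this
    simpa using this.symm
  have hpr : ∀ T : {T : Set (ι → ℂ) // IsAlgSet T ∧ AlgIrreducible T ∧ T ⊆ X0},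
      (Ideal.map c.μ (vanishingIdeal ℂ T.1)).IsPrime := by
    intro T
    have := fh_van_prime T.1 T.2.2.1
    exact Ideal.map_isPrime_of_surjective c.surj (hker _ T.2.2.2)
  have hcm : ∀ T : {T : Set (ι → ℂ) // IsAlgSet T ∧ AlgIrreducible T ∧ T ⊆ X0},
      Ideal.comap c.μ (Ideal.map c.μ (vanishingIdeal ℂ T.1)) = vanishingIdeal ℂ T.1 := by
    intro T
    rw [Ideal.comap_map_of_surjective _ c.surj, sup_eq_left]
    exact hker _ T.2.2.2
  let f : {T : Set (ι → ℂ) // IsAlgSet T ∧ AlgIrreducible T ∧ T ⊆ X0} →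
      (PrimeSpectrum (MvPolynomial κ ℂ))ᵒᵈ := fun T =>
    OrderDual.toDual ⟨Ideal.comap (algebraMap (MvPolynomial κ ℂ) R)
      (Ideal.map c.μ (vanishingIdeal ℂ T.1)), (hpr T).comap _⟩
  have hf : StrictMono f := by
    intro T T' hTT
    have hsub : T.1 ⊆ T'.1 := hTT.le
    have hle : (vanishingIdeal ℂ T'.1 : Ideal (MvPolynomial ι ℂ)) ≤ vanishingIdeal ℂ T.1 :=
      fun p hp z hz => hp z (hsub hz)
    have hlt : Ideal.map c.μ (vanishingIdeal ℂ T'.1) < Ideal.map c.μ (vanishingIdeal ℂ T.1) := by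
      refine lt_of_le_of_ne (Ideal.map_mono hle) fun heq => ?_
      have h1 := congrArg (Ideal.comap c.μ) heq
      rw [hcm, hcm] at h1
      refine hTT.not_ge ?_
      intro z hz
      refine fh_alg_eq T.1 T.2.1 z fun p hp => ?_
      rw [← h1] at hp
      simpa using hp z hz
    have := hpr T'
    have h2 := Ideal.IsIntegral.comap_lt_comap (R := MvPolynomial κ ℂ) hlt
    exact h2
  have h := Order.krullDim_le_of_strictMono f hf
  rw [Order.krullDim_orderDual] at h
  have h2 : ringKrullDim (MvPolynomial κ ℂ) = (Fintype.card κ : ℕ) := by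
    rw [MvPolynomial.ringKrullDim_of_isNoetherianRing, ringKrullDim_eq_zero_of_field, zero_add,
      Nat.card_eq_fintype_card]
    
  rw [← h2]
  exact h

theorem fh_primitive (A R : Type) [CommRing A] [IsDomain A] [CharZero A] [IsIntegrallyClosed A]
    [CommRing R] [IsDomain R] [Algebra A R] [FaithfulSMul A R] [Module.Finite A R]
    {ι : Type} [Fintype ι] (x : ι → R) :
    ∃ θ : R, ∃ D : A, D ≠ 0 ∧
      (∃ (D1 : A) (a b : Polynomial A), D1 ∣ D ∧ a * minpoly A θ +
        b * Polynomial.derivative (minpoly A θ) = Polynomial.C D1) ∧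
      ∀ j, ∃ (b : A) (P : Polynomial A), b ∣ D ∧ algebraMap A R b * x j = Polynomial.aeval θ P := by
  classical
  let K := FractionRing A
  let L := FractionRing R
  letI : Algebra K L := FractionRing.liftAlgebra A L
  have : IsScalarTower A K L := FractionRing.isScalarTower_liftAlgebra A L
  have : FiniteDimensional K L := inferInstance
  have : CharZero K := inferInstance
  have : Algebra.IsAlgebraic K L := Algebra.IsAlgebraic.of_finite K L
  have : Algebra.IsSeparable K L := inferInstance
  obtain ⟨α, hα⟩ := Field.exists_primitive_element K L
  obtain ⟨r, t, ht, rfl⟩ := IsFractionRing.div_surjective R α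
  have hint : ∀ r : R, IsIntegral A r := fun r => Algebra.IsIntegral.isIntegral r
  obtain ⟨a, ha, t', ht'⟩ := IsAlgebraic.exists_nonzero_dvd ((hint t).isAlgebraic) ht
  have hinj : Function.Injective (algebraMap R L) := IsFractionRing.injective R L
  have hinjA : Function.Injective (algebraMap A K) := IsFractionRing.injective A K
  have hinjAR : Function.Injective (algebraMap A R) := FaithfulSMul.algebraMap_injective A R
  have ht0 : t ≠ 0 := nonZeroDivisors.ne_zero ht
  have ht0' : algebraMap R L t ≠ 0 := fun h => ht0 (hinj (by rw [h, map_zero]))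
  let θ : R := r * t'
  have hθ : algebraMap R L θ = algebraMap K L (algebraMap A K a) *
      (algebraMap R L r / algebraMap R L t) := by
    rw [← IsScalarTower.algebraMap_apply A K L, IsScalarTower.algebraMap_apply A R L, ht',
      map_mul, map_mul, mul_comm _ (algebraMap R L r / algebraMap R L t), ← mul_assoc,
      div_mul_cancel₀ _ ht0']
  have haK : algebraMap A K a ≠ 0 := fun h => ha (hinjA (by rw [h, map_zero]))
  have hadj : IntermediateField.adjoin K {algebraMap R L θ} = ⊤ := by
    rw [eq_top_iff, ← hα, IntermediateField.adjoin_simple_le_iff]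
    have h1 : algebraMap R L r / algebraMap R L t =
        algebraMap K L (algebraMap A K a)⁻¹ * algebraMap R L θ := by
      rw [hθ, ← mul_assoc, ← map_mul, inv_mul_cancel₀ haK, map_one, one_mul]
    rw [h1]
    exact mul_mem (IntermediateField.algebraMap_mem _ _)
      (IntermediateField.mem_adjoin_simple_self K _)
  have hgen : ∀ y : L, ∃ q : Polynomial K, Polynomial.aeval (algebraMap R L θ) q = y := by
    intro y
    have h1 : y ∈ IntermediateField.adjoin K {algebraMap R L θ} := by rw [hadj]; trivial
    have h2 := IntermediateField.adjoin_simple_toSubalgebra_of_isAlgebraic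
      (Algebra.IsAlgebraic.isAlgebraic (R := K) (algebraMap R L θ))
    rw [← IntermediateField.mem_toSubalgebra, h2, Algebra.adjoin_singleton_eq_range_aeval] at h1
    exact h1
  have hclear : ∀ j, ∃ (b : A) (P : Polynomial A), b ≠ 0 ∧
      algebraMap A R b * x j = Polynomial.aeval θ P := by
    intro j
    obtain ⟨q, hq⟩ := hgen (algebraMap R L (x j))
    obtain ⟨b, hb, hbq⟩ := IsLocalization.integerNormalization_spec (nonZeroDivisors A) q
    refine ⟨b, IsLocalization.integerNormalization (nonZeroDivisors A) q,
      nonZeroDivisors.ne_zero hb, hinj ?_⟩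
    rw [map_mul, ← hq, ← Polynomial.aeval_algebraMap_apply,
      ← Polynomial.aeval_map_algebraMap K _
        (IsLocalization.integerNormalization (nonZeroDivisors A) q), hbq, ← IsScalarTower.algebraMap_apply A R L,
      AlgHom.map_smul_of_tower, Algebra.smul_def]
  have hmin := minpoly.isIntegrallyClosed_eq_field_fractions K L (hint θ)
  have hsep : (minpoly K (algebraMap R L θ)).Separable := Algebra.IsSeparable.isSeparable K _
  rw [hmin] at hsep
  obtain ⟨u, v, huv⟩ := hsep
  obtain ⟨c1, hc1, hu⟩ := IsLocalization.integerNormalization_spec (nonZeroDivisors A) u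
  obtain ⟨c2, hc2, hv⟩ := IsLocalization.integerNormalization_spec (nonZeroDivisors A) v
  choose b P hb hP using hclear
  refine ⟨θ, c1 * c2 * ∏ j, b j, ?_, ⟨c1 * c2, Polynomial.C c2 *
    IsLocalization.integerNormalization (nonZeroDivisors A) u, Polynomial.C c1 *
    IsLocalization.integerNormalization (nonZeroDivisors A) v, dvd_mul_right _ _, ?_⟩, ?_⟩
  · exact mul_ne_zero (mul_ne_zero (nonZeroDivisors.ne_zero hc1) (nonZeroDivisors.ne_zero hc2))
      (Finset.prod_ne_zero_iff.2 fun j _ => hb j)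
  · apply Polynomial.map_injective _ hinjA
    simp only [Polynomial.map_add, Polynomial.map_mul, Polynomial.map_C, hu, hv]
    rw [← Polynomial.derivative_map]
    have h1 : ∀ (c : A) (p : Polynomial K), c • p = Polynomial.C (algebraMap A K c) * p := by
      intro c p
      rw [← Polynomial.smul_eq_C_mul, algebraMap_smul]
    rw [h1, h1, map_mul, map_mul]
    linear_combination (Polynomial.C (algebraMap A K c1) * Polynomial.C (algebraMap A K c2)) * huv
  · intro j
    exact ⟨b j, P j, (Finset.dvd_prod_of_mem b (Finset.mem_univ j)).trans (dvd_mul_left _ _), hP j⟩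

theorem fh_alg_closed {ι : Type} (X0 : Set (ι → ℂ)) (hX : IsAlgSet X0) : IsClosed X0 := by
  obtain ⟨T, rfl⟩ := hX
  have : {x : ι → ℂ | ∀ p ∈ T, eval x p = 0} = ⋂ p ∈ T, {x | eval x p = 0} := by
    ext x; simp
  rw [this]
  exact isClosed_biInter fun p _ => isClosed_eq (MvPolynomial.continuous_eval p) continuous_const

theorem fh_small_root (g : Polynomial ℂ) (hg : g.Monic) (η : ℝ) (hη : 0 ≤ η)
    (h : ‖g.eval 0‖ < η ^ g.natDegree) : ∃ z, g.eval z = 0 ∧ ‖z‖ < η := by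
  by_contra hcon
  push Not at hcon
  have hsp := IsAlgClosed.splits g
  have h1 : g = (g.roots.map fun a => Polynomial.X - Polynomial.C a).prod := by
    have := hsp.eq_prod_roots
    rwa [hg.leadingCoeff, map_one, one_mul] at this
  have hcard : g.roots.card = g.natDegree := hsp.natDegree_eq_card_roots.symm
  have h2 : ∀ s : Multiset ℂ, (∀ a ∈ s, η ≤ ‖a‖) →
      η ^ s.card ≤ ‖((s.map fun a => Polynomial.X - Polynomial.C a).prod).eval 0‖ := by
    intro s
    induction s using Multiset.induction_on with
    | empty => simp
    | cons a s ih =>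
      intro hs
      simp only [Multiset.map_cons, Multiset.prod_cons, Polynomial.eval_mul, norm_mul,
        Multiset.card_cons, pow_succ']
      refine mul_le_mul ?_ (ih fun b hb => hs b (Multiset.mem_cons_of_mem hb)) (by positivity)
        (norm_nonneg _)
      simpa using hs a (Multiset.mem_cons_self a s)
  have h3 := h2 g.roots (fun a ha => hcon a (Polynomial.isRoot_of_mem_roots ha))
  rw [← h1, hcard] at h3
  linarith

theorem fh_sep_pt {ι : Type} (S : Set (ι → ℂ)) (hS : S.Finite) (z0 : ι → ℂ) :
    ∃ h : MvPolynomial ι ℂ, eval z0 h = 0 ∧ ∀ z ∈ S, z ≠ z0 → eval z h ≠ 0 := by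
  classical
  have : ∀ z : ι → ℂ, ∃ l : MvPolynomial ι ℂ, z ≠ z0 → eval z0 l = 1 ∧ eval z l = 0 := by
    intro z
    by_cases hz : z = z0
    · exact ⟨0, fun h => absurd hz h⟩
    · obtain ⟨j, hj⟩ := Function.ne_iff.1 hz
      refine ⟨C (z0 j - z j)⁻¹ * (X j - C (z j)), fun _ => ⟨?_, ?_⟩⟩
      · simp only [map_mul, map_sub, eval_C, eval_X]
        exact inv_mul_cancel₀ (sub_ne_zero.2 (Ne.symm hj))
      · simp
  choose l hl using this
  refine ⟨1 - ∏ z ∈ hS.toFinset.filter (· ≠ z0), l z, ?_, ?_⟩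
  · rw [map_sub, map_prod, Finset.prod_congr rfl (g := fun _ => (1 : ℂ))]
    · simp
    · intro z hz
      exact (hl z (Finset.mem_filter.1 hz).2).1
  · intro z hz hne
    rw [map_sub, map_prod, Finset.prod_eq_zero (i := z)]
    · simp
    · simp [hz, hne]
    · exact (hl z hne).2

section

variable {ι κ : Type} [Fintype ι] [Fintype κ] {X0 : Set (ι → ℂ)} {R : Type} [CommRing R]
  [Algebra ℂ R] [Algebra (MvPolynomial κ ℂ) R] [IsScalarTower ℂ (MvPolynomial κ ℂ) R]

theorem fh_minroot [Algebra.IsIntegral (MvPolynomial κ ℂ) R]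
    (c : FhCoord X0 R) (M : κ → ι → ℂ)
    (hM : ∀ i, algebraMap (MvPolynomial κ ℂ) R (X i) = c.μ (∑ j, C (M i j) * X j))
    (z : ι → ℂ) (hz : z ∈ X0) (h : MvPolynomial ι ℂ) :
    ((minpoly (MvPolynomial κ ℂ) (c.μ h)).map (eval (fun i => ∑ j, M i j * z j))).eval
      (eval z h) = 0 := by
  obtain ⟨e, he⟩ := c.ev z hz
  rw [← fh_evP c M hM z e he, minpoly.aeval, map_zero]

theorem fh_fib_finite [Algebra.IsIntegral (MvPolynomial κ ℂ) R]
    (c : FhCoord X0 R) (M : κ → ι → ℂ)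
    (hM : ∀ i, algebraMap (MvPolynomial κ ℂ) R (X i) = c.μ (∑ j, C (M i j) * X j))
    (u : κ → ℂ) : {z | z ∈ X0 ∧ (fun i => ∑ j, M i j * z j) = u}.Finite := by
  have hmon : ∀ h, (minpoly (MvPolynomial κ ℂ) (c.μ h)).Monic := fun h =>
    minpoly.monic (Algebra.IsIntegral.isIntegral _)
  refine Set.Finite.subset (Set.Finite.pi' (t := fun j =>
    {ζ : ℂ | ((minpoly (MvPolynomial κ ℂ) (c.μ (X j))).map (eval u)).IsRoot ζ}) fun j => ?_) ?_
  · exact Polynomial.finite_setOf_isRoot ((hmon (X j)).map (eval u)).ne_zero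
  · rintro z ⟨hz, rfl⟩ j
    have := fh_minroot c M hM z hz (X j)
    rw [eval_X] at this
    exact this

theorem fh_open [IsDomain R] [Algebra.IsIntegral (MvPolynomial κ ℂ) R]
    [FaithfulSMul (MvPolynomial κ ℂ) R] (hX : IsAlgSet X0) (c : FhCoord X0 R) (M : κ → ι → ℂ)
    (hM : ∀ i, algebraMap (MvPolynomial κ ℂ) R (X i) = c.μ (∑ j, C (M i j) * X j))
    (z0 : ι → ℂ) (hz0 : z0 ∈ X0) (U : Set (ι → ℂ)) (hU : U ∈ nhds z0) :
    ∀ᶠ u in nhds (fun i => ∑ j, M i j * z0 j), ∃ z ∈ X0, z ∈ U ∧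
      (fun i => ∑ j, M i j * z j) = u := by
  set u0 : κ → ℂ := fun i => ∑ j, M i j * z0 j with hu0
  let pr : (ι → ℂ) → (κ → ℂ) := fun z i => ∑ j, M i j * z j
  have hpr : Continuous pr := by
    refine continuous_pi fun i => ?_
    fun_prop
  have hmon : ∀ h, (minpoly (MvPolynomial κ ℂ) (c.μ h)).Monic := fun h =>
    minpoly.monic (Algebra.IsIntegral.isIntegral _)
  obtain ⟨h, hh0, hh1⟩ := fh_sep_pt _ (fh_fib_finite c M hM u0) z0
  let K : Set (ι → ℂ) := X0 ∩ pr ⁻¹' (Metric.closedBall u0 1) ∩ (interior U)ᶜ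
  have hKc : IsClosed K := ((fh_alg_closed X0 hX).inter
    (Metric.isClosed_closedBall.preimage hpr)).inter isOpen_interior.isClosed_compl
  have hbd : ∀ j : ι, ∃ B : ℝ, ∀ z ∈ K, ‖z j‖ ≤ B := by
    intro j
    let b : (κ → ℂ) → ℝ := fun u => 1 + ∑ i ∈ Finset.range
      (minpoly (MvPolynomial κ ℂ) (c.μ (X j))).natDegree,
      ‖eval u ((minpoly (MvPolynomial κ ℂ) (c.μ (X j))).coeff i)‖
    have hb : Continuous b := by
      refine continuous_const.add (continuous_finset_sum _ fun i _ => ?_)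
      exact (MvPolynomial.continuous_eval _).norm
    obtain ⟨B, hB⟩ := (isCompact_closedBall u0 1).bddAbove_image hb.continuousOn
    refine ⟨B, fun z hz => ?_⟩
    have h1 := fh_minroot c M hM z hz.1.1 (X j)
    rw [eval_X] at h1
    have h2 := fh_cauchy _ ((hmon (X j)).map _) _ h1
    rw [(hmon (X j)).natDegree_map] at h2
    refine h2.trans (le_trans (le_of_eq ?_) (hB ⟨pr z, hz.1.2, rfl⟩))
    simp [b, pr]
  choose B hB using hbd
  have hKcomp : IsCompact K := by
    refine (isCompact_univ_pi fun j => isCompact_closedBall (0 : ℂ) (B j)).of_isClosed_subset hKc ?_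
    intro z hz j _
    simpa using hB j z hz
  let φ : (ι → ℂ) → ℝ := fun z => ‖pr z - u0‖ + ‖eval z h‖
  have hφ : Continuous φ := (hpr.sub continuous_const).norm.add (MvPolynomial.continuous_eval h).norm
  have hφpos : ∀ z ∈ K, 0 < φ z := by
    intro z hz
    by_contra hcon
    have h1 : ‖pr z - u0‖ = 0 := by
      have := norm_nonneg (pr z - u0); have := norm_nonneg (eval z h)
      simp only [φ] at hcon; linarith
    have h2 : ‖eval z h‖ = 0 := by
      have := norm_nonneg (pr z - u0); have := norm_nonneg (eval z h)
      simp only [φ] at hcon; linarith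
    have h3 : pr z = u0 := sub_eq_zero.1 (norm_eq_zero.1 h1)
    have h4 : z = z0 := by
      by_contra hne
      exact hh1 z ⟨hz.1.1, h3⟩ hne (norm_eq_zero.1 h2)
    exact hz.2 (h4 ▸ mem_interior_iff_mem_nhds.2 hU)
  obtain ⟨η, hη, hηK⟩ : ∃ η : ℝ, 0 < η ∧ ∀ z ∈ K, η ≤ φ z := by
    rcases K.eq_empty_or_nonempty with hE | hE
    · exact ⟨1, one_pos, fun z hz => by rw [hE] at hz; exact absurd hz (by simp)⟩
    · obtain ⟨z1, hz1, hm⟩ := hKcomp.exists_isMinOn hE hφ.continuousOn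
      exact ⟨φ z1, hφpos z1 hz1, fun z hz => hm hz⟩
  set g := minpoly (MvPolynomial κ ℂ) (c.μ h) with hg
  have hg0 : eval u0 (g.coeff 0) = 0 := by
    have h1 := fh_minroot c M hM z0 hz0 h
    rw [hh0, ← Polynomial.coeff_zero_eq_eval_zero, Polynomial.coeff_map] at h1
    exact h1
  have hev1 : ∀ᶠ u in nhds u0, ‖eval u (g.coeff 0)‖ < (η / 2) ^ g.natDegree := by
    have h1 : Filter.Tendsto (fun u => ‖eval u (g.coeff 0)‖) (nhds u0)
        (nhds ‖eval u0 (g.coeff 0)‖) := (MvPolynomial.continuous_eval (g.coeff 0)).norm.tendsto u0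
    rw [hg0, norm_zero] at h1
    exact h1.eventually_lt_const (by positivity)
  have hev2 : ∀ᶠ u in nhds u0, ‖u - u0‖ < min 1 (η / 2) := by
    have : Metric.ball u0 (min 1 (η / 2)) ∈ nhds u0 := Metric.ball_mem_nhds _ (by positivity)
    filter_upwards [this] with u hu
    rwa [Metric.mem_ball, dist_eq_norm] at hu
  filter_upwards [hev1, hev2] with u h1 h2
  obtain ⟨ζ, hζ, hζn⟩ := fh_small_root (g.map (eval u)) ((hmon h).map _) (η / 2) (by positivity) (by
    rw [(hmon h).natDegree_map, ← Polynomial.coeff_zero_eq_eval_zero, Polynomial.coeff_map]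
    exact h1)
  obtain ⟨z, hz, hzu, hzh⟩ := fh_lying c M hM h u ζ hζ
  refine ⟨z, hz, ?_, hzu⟩
  by_contra hzU
  have hprz : pr z = u := hzu
  have hzK : z ∈ K := by
    refine ⟨⟨hz, ?_⟩, fun hc => hzU (interior_subset hc)⟩
    rw [Set.mem_preimage, hprz, Metric.mem_closedBall, dist_eq_norm]
    exact (h2.trans_le (min_le_left _ _)).le
  have h3 := hηK z hzK
  have h4 := h2.trans_le (min_le_right _ _)
  simp only [φ, hprz, hzh] at h3
  linarith

end

/-- Generic finite projection data. -/
structure FhProj {ι κ : Type} [Fintype ι] (X0 : Set (ι → ℂ)) (M : κ → ι → ℂ) where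
  F : Polynomial (MvPolynomial κ ℂ)
  θ : MvPolynomial ι ℂ
  D : MvPolynomial κ ℂ
  monic : F.Monic
  irr : Irreducible F
  D_ne : D ≠ 0
  root : ∀ z ∈ X0, (F.map (eval (fun i => ∑ j, M i j * z j))).eval (eval z θ) = 0
  sep : ∀ u, eval u D ≠ 0 → (F.map (eval u)).Separable
  lying : ∀ u ζ, (F.map (eval u)).eval ζ = 0 →
    ∃ z ∈ X0, (fun i => ∑ j, M i j * z j) = u ∧ eval z θ = ζ
  coord : ∀ j, ∃ (b : MvPolynomial κ ℂ) (P : Polynomial (MvPolynomial κ ℂ)), b ∣ D ∧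
    ∀ z ∈ X0, eval (fun i => ∑ j, M i j * z j) b * z j =
      (P.map (eval (fun i => ∑ j, M i j * z j))).eval (eval z θ)
  opn : ∀ z0 ∈ X0, ∀ U ∈ nhds z0, ∀ᶠ u in nhds (fun i => ∑ j, M i j * z0 j), ∃ z ∈ X0, z ∈ U ∧
      (fun i => ∑ j, M i j * z j) = u
  surj : ∀ u : κ → ℂ, ∃ z ∈ X0, (fun i => ∑ j, M i j * z j) = u

theorem fh_package1 {ι κ : Type} [Fintype ι] [Fintype κ] (X0 : Set (ι → ℂ)) (hX : IsAlgSet X0)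
    {R : Type} [CommRing R] [IsDomain R] [Algebra ℂ R] (c : FhCoord X0 R)
    (htr : Algebra.trdeg ℂ R = Fintype.card κ) (M0 : κ → ι → ℂ) (ε : ℝ) (hε : 0 < ε) :
    algDim X0 ≤ (Fintype.card κ : ℕ) ∧
    ∃ M : κ → ι → ℂ, (∀ i j, ‖M i j - M0 i j‖ < ε) ∧ Nonempty (FhProj X0 M) := by
  have hftC : Algebra.FiniteType ℂ R := Algebra.FiniteType.of_surjective c.μ c.surj
  let x : ι → R := fun j => c.μ (X j)
  have hx : ∀ r, r ∈ Algebra.adjoin ℂ (Set.range x) := by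
    intro r
    obtain ⟨p, rfl⟩ := c.surj r
    have h1 : c.μ = aeval x := by
      apply MvPolynomial.algHom_ext
      intro j
      simp [x]
    rw [h1, Algebra.adjoin_range_eq_range_aeval]
    exact ⟨p, rfl⟩
  obtain ⟨M, hMn, hinj, hint⟩ := fh_lemmaP x hx htr M0 ε hε
  let A := MvPolynomial κ ℂ
  let f : A →ₐ[ℂ] R := aeval (R := ℂ) (fun i => ∑ j, M i j • x j)
  let _ : Algebra A R := f.toRingHom.toAlgebra
  have hst : IsScalarTower ℂ A R := IsScalarTower.of_algebraMap_eq fun r => (f.commutes r).symm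
  have hfaith : FaithfulSMul A R := (faithfulSMul_iff_algebraMap_injective A R).2 hinj
  have hintg : Algebra.IsIntegral A R := ⟨fun r => hint r⟩
  have hft : Algebra.FiniteType A R := Algebra.FiniteType.of_restrictScalars_finiteType ℂ A R
  have hfin : Module.Finite A R := Algebra.IsIntegral.finite
  have hM : ∀ i, algebraMap A R (X i) = c.μ (∑ j, C (M i j) * X j) := by
    intro i
    change f (X i) = _
    simp only [f, map_sum, map_mul, x]
    erw [aeval_X]
    refine Finset.sum_congr rfl fun j _ => ?_
    rw [Algebra.smul_def]
    congr 1
    exact (c.μ.commutes (M i j)).symm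
  refine ⟨fh_dim (κ := κ) c, M, hMn, ?_⟩
  obtain ⟨θ', D, hD, ⟨D1, a, b, hD1, hab⟩, hco⟩ := fh_primitive A R x
  obtain ⟨θ, rfl⟩ := c.surj θ'
  have hi : IsIntegral A (c.μ θ) := Algebra.IsIntegral.isIntegral _
  refine ⟨{
    F := minpoly A (c.μ θ)
    θ := θ
    D := D
    monic := minpoly.monic hi
    irr := minpoly.irreducible hi
    D_ne := hD
    root := fun z hz => fh_minroot c M hM z hz θ
    sep := ?_
    lying := fun u ζ hζ => fh_lying c M hM θ u ζ hζ
    coord := ?_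
    opn := fun z0 hz0 U hU => fh_open hX c M hM z0 hz0 U hU
    surj := ?_ }⟩
  · intro u hu
    have hu1 : eval u D1 ≠ 0 := by
      intro h
      obtain ⟨k, rfl⟩ := hD1
      simp [h] at hu
    have h1 := congrArg (Polynomial.map (eval u)) hab
    simp only [Polynomial.map_add, Polynomial.map_mul, Polynomial.map_C,
      ← Polynomial.derivative_map] at h1
    refine ⟨Polynomial.C (eval u D1)⁻¹ * a.map (eval u), Polynomial.C (eval u D1)⁻¹ * b.map (eval u), ?_⟩
    rw [mul_assoc, mul_assoc, ← mul_add, h1, ← Polynomial.C_mul, inv_mul_cancel₀ hu1,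
      Polynomial.C_1]
  · intro j
    obtain ⟨b, P, hb, hP⟩ := hco j
    refine ⟨b, P, hb, fun z hz => ?_⟩
    obtain ⟨e, he⟩ := c.ev z hz
    rw [← fh_evP c M hM z e he, ← hP, map_mul, he, eval_X, ← fh_evA c M hM z e he]
    rfl
  · intro u
    have h1 : ((minpoly A (c.μ θ)).map (eval u)).degree ≠ 0 := by
      rw [(minpoly.monic hi).degree_map]
      exact (minpoly.degree_pos hi).ne'
    obtain ⟨ζ, hζ⟩ := IsAlgClosed.exists_root _ h1
    obtain ⟨z, hz, hzu, -⟩ := fh_lying c M hM θ u ζ hζ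
    exact ⟨z, hz, hzu⟩

theorem fh_package {ι : Type} [Fintype ι] (X0 : Set (ι → ℂ)) (hX : IsAlgSet X0)
    (hirr : AlgIrreducible X0) : ∃ d : ℕ, algDim X0 ≤ d ∧
    ∀ (κ : Type) [Fintype κ], Fintype.card κ = d → ∀ (M0 : κ → ι → ℂ) (ε : ℝ), 0 < ε →
    ∃ M : κ → ι → ℂ, (∀ i j, ‖M i j - M0 i j‖ < ε) ∧ Nonempty (FhProj X0 M) := by
  have hprime := fh_van_prime X0 hirr
  have hlt : Algebra.trdeg ℂ (MvPolynomial ι ℂ ⧸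
      (vanishingIdeal ℂ X0 : Ideal (MvPolynomial ι ℂ))) < Cardinal.aleph0 :=
    open Algebra in trdeg_lt_aleph0_of_finiteType
  obtain ⟨d, hd⟩ := Cardinal.lt_aleph0.1 hlt
  refine ⟨d, ?_, ?_⟩
  · have := (fh_package1 (κ := Fin d) X0 hX (fhCoordStd X0 hX) (by simpa using hd) (fun _ _ => 0) 1 one_pos).1
    simpa using this
  · intro κ _ hκ M0 ε hε
    exact (fh_package1 (κ := κ) X0 hX (fhCoordStd X0 hX) (by rw [hκ]; exact hd) M0 ε hε).2

/-- Product of two affine sets. -/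
def fhProd {α β : Type} (V : Set (α → ℂ)) (W : Set (β → ℂ)) : Set (α ⊕ β → ℂ) :=
  {z | z ∘ Sum.inl ∈ V ∧ z ∘ Sum.inr ∈ W}

theorem fhProd_alg {α β : Type} (V : Set (α → ℂ)) (W : Set (β → ℂ)) (hV : IsAlgSet V)
    (hW : IsAlgSet W) : IsAlgSet (fhProd V W) := by
  obtain ⟨S, rfl⟩ := hV
  obtain ⟨T, rfl⟩ := hW
  refine ⟨rename Sum.inl '' S ∪ rename Sum.inr '' T, ?_⟩
  ext z
  simp only [fhProd, Set.mem_ofPred_eq, Set.mem_union, Set.mem_image]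
  constructor
  · rintro ⟨h1, h2⟩ p (⟨q, hq, rfl⟩ | ⟨q, hq, rfl⟩)
    · rw [eval_rename]; exact h1 q hq
    · rw [eval_rename]; exact h2 q hq
  · intro h
    refine ⟨fun q hq => ?_, fun q hq => ?_⟩
    · rw [← eval_rename]; exact h _ (Or.inl ⟨q, hq, rfl⟩)
    · rw [← eval_rename]; exact h _ (Or.inr ⟨q, hq, rfl⟩)

theorem fh_pull_alg {α β : Type} (A : Set (α → ℂ)) (hA : IsAlgSet A) (J : Type)
    (f : J → α → MvPolynomial β ℂ) :
    IsAlgSet {w : β → ℂ | ∀ j, (fun i => eval w (f j i)) ∈ A} := by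
  obtain ⟨S, rfl⟩ := hA
  refine ⟨{p | ∃ j, ∃ q ∈ S, p = aeval (f j) q}, ?_⟩
  have key : ∀ (w : β → ℂ) j q, eval w (aeval (f j) q) = eval (fun i => eval w (f j i)) q := by
    intro w j q
    induction q using MvPolynomial.induction_on with
    | C a => simp
    | add p q hp hq => rw [map_add, map_add, map_add, hp, hq]
    | mul_X p i hp => rw [map_mul, map_mul, map_mul, hp, aeval_X, eval_X]
  ext w
  simp only [Set.mem_ofPred_eq]
  constructor
  · rintro h p ⟨j, q, hq, rfl⟩
    rw [key]; exact h j q hq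
  · intro h j q hq
    rw [← key]; exact h _ ⟨j, q, hq, rfl⟩

theorem fhProd_irr {α β : Type} (V : Set (α → ℂ)) (W : Set (β → ℂ)) (hV : AlgIrreducible V)
    (hW : AlgIrreducible W) : AlgIrreducible (fhProd V W) := by
  refine ⟨?_, ?_⟩
  · obtain ⟨v, hv⟩ := hV.1
    obtain ⟨w, hw⟩ := hW.1
    exact ⟨Sum.elim v w, by simpa [fhProd] using ⟨hv, hw⟩⟩
  · intro A B hA hB hAB
    have s1 : ∀ (A : Set (α ⊕ β → ℂ)), IsAlgSet A → ∀ w : β → ℂ,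
        IsAlgSet {v : α → ℂ | Sum.elim v w ∈ A} := by
      intro A hA w
      have := fh_pull_alg (β := α) A hA Unit (fun _ => Sum.elim X (fun i => C (w i)))
      convert this using 1
      ext v
      simp only [Set.mem_ofPred_eq, forall_const]
      have : (fun i => eval v (Sum.elim X (fun i => C (w i)) i : MvPolynomial α ℂ)) = Sum.elim v w := by
        ext i; rcases i with i | i <;> simp
      rw [this]
    have s2 : ∀ (A : Set (α ⊕ β → ℂ)), IsAlgSet A →
        IsAlgSet {w : β → ℂ | ∀ v : V, Sum.elim v.1 w ∈ A} := by
      intro A hA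
      have := fh_pull_alg (β := β) A hA V (fun v => Sum.elim (fun i => C (v.1 i)) X)
      convert this using 1
      ext w
      simp only [Set.mem_ofPred_eq]
      refine forall_congr' fun v => ?_
      have : (fun i => eval w (Sum.elim (fun i => C (v.1 i)) X i : MvPolynomial β ℂ)) =
          Sum.elim v.1 w := by
        ext i; rcases i with i | i <;> simp
      rw [this]
    have h1 : W ⊆ {w : β → ℂ | ∀ v : V, Sum.elim v.1 w ∈ A} ∪
        {w : β → ℂ | ∀ v : V, Sum.elim v.1 w ∈ B} := by
      intro w hw
      rcases hV.2 _ _ (s1 A hA w) (s1 B hB w) (by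
        intro v hv
        exact hAB (show Sum.elim v w ∈ fhProd V W by simpa [fhProd] using ⟨hv, hw⟩)) with h | h
      · left; exact fun v => h v.2
      · right; exact fun v => h v.2
    have h3 : ∀ (A : Set (α ⊕ β → ℂ)), W ⊆ {w : β → ℂ | ∀ v : V, Sum.elim v.1 w ∈ A} →
        fhProd V W ⊆ A := by
      intro A h z hz
      have := h hz.2 ⟨_, hz.1⟩
      simpa [Sum.elim_comp_inl_inr] using this
    rcases hW.2 _ _ (s2 A hA) (s2 B hB) h1 with h | h
    · left; exact h3 A h
    · right; exact h3 B h

theorem fhProd_mono {α β : Type} {V V' : Set (α → ℂ)} {W W' : Set (β → ℂ)} (h1 : V ⊆ V')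
    (h2 : W ⊆ W') : fhProd V W ⊆ fhProd V' W' := fun _ hz => ⟨h1 hz.1, h2 hz.2⟩

theorem fhProd_sub {α β : Type} {V V' : Set (α → ℂ)} {W W' : Set (β → ℂ)} (hV : V.Nonempty)
    (hW : W.Nonempty) (h : fhProd V W ⊆ fhProd V' W') : V ⊆ V' ∧ W ⊆ W' := by
  obtain ⟨v, hv⟩ := hV
  obtain ⟨w, hw⟩ := hW
  have key : ∀ v ∈ V, ∀ w ∈ W, v ∈ V' ∧ w ∈ W' := by
    intro v hv w hw
    have := h (show Sum.elim v w ∈ fhProd V W by simpa [fhProd] using ⟨hv, hw⟩)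
    simpa [fhProd] using this
  exact ⟨fun v' hv' => (key v' hv' w hw).1, fun w' hw' => (key v hv w' hw').2⟩

theorem fh_dim_nat {α : Type*} [Preorder α] [Nonempty α] (d : ℕ)
    (h : ∀ p : LTSeries α, p.length ≤ d) : ∃ p : LTSeries α, Order.krullDim α = p.length := by
  rcases finiteDimensionalOrder_or_infiniteDimensionalOrder α with h1 | h1
  · exact ⟨_, Order.krullDim_eq_length_of_finiteDimensionalOrder⟩
  · have := h (LTSeries.withLength α (d + 1))
    rw [LTSeries.length_withLength] at this
    omega

theorem fhProd_dim {α β : Type} (V : Set (α → ℂ)) (W : Set (β → ℂ)) (hVa : IsAlgSet V)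
    (hWa : IsAlgSet W) (hV : AlgIrreducible V)
    (hW : AlgIrreducible W) (d m : ℕ) (hd : algDim (fhProd V W) ≤ d)
    (hm : (m : WithBot ℕ∞) < algDim V + algDim W) : m < d := by
  have hnV : Nonempty {T : Set (α → ℂ) // IsAlgSet T ∧ AlgIrreducible T ∧ T ⊆ V} :=
    ⟨⟨V, hVa, hV, subset_rfl⟩⟩
  have hnW : Nonempty {T : Set (β → ℂ) // IsAlgSet T ∧ AlgIrreducible T ∧ T ⊆ W} :=
    ⟨⟨W, hWa, hW, subset_rfl⟩⟩
  let f : {T : Set (α → ℂ) // IsAlgSet T ∧ AlgIrreducible T ∧ T ⊆ V} →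
      {T : Set (β → ℂ) // IsAlgSet T ∧ AlgIrreducible T ∧ T ⊆ W} →
      {T : Set (α ⊕ β → ℂ) // IsAlgSet T ∧ AlgIrreducible T ∧ T ⊆ fhProd V W} :=
    fun S T => ⟨fhProd S.1 T.1, fhProd_alg _ _ S.2.1 T.2.1, fhProd_irr _ _ S.2.2.1 T.2.2.1,
      fhProd_mono S.2.2.2 T.2.2.2⟩
  have hf1 : ∀ T, StrictMono (fun S => f S T) := by
    intro T S S' h
    refine lt_of_le_not_ge (fhProd_mono h.le subset_rfl) fun hc => ?_
    exact h.not_ge (fhProd_sub S'.2.2.1.1 T.2.2.1.1 hc).1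
  have hf2 : ∀ S, StrictMono (fun T => f S T) := by
    intro S T T' h
    refine lt_of_le_not_ge (fhProd_mono subset_rfl h.le) fun hc => ?_
    exact h.not_ge (fhProd_sub S.2.2.1.1 T'.2.2.1.1 hc).2
  have key : ∀ (p : LTSeries {T : Set (α → ℂ) // IsAlgSet T ∧ AlgIrreducible T ∧ T ⊆ V})
      (q : LTSeries {T : Set (β → ℂ) // IsAlgSet T ∧ AlgIrreducible T ∧ T ⊆ W}),
      p.length + q.length ≤ d := by
    intro p q
    let r := RelSeries.smash (p.map (fun S => f S q.head) (hf1 _))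
      (q.map (fun T => f p.last T) (hf2 _)) (by simp)
    have h1 : r.length = p.length + q.length := rfl
    have h2 := (Order.LTSeries.length_le_krullDim r).trans hd
    rw [h1] at h2
    exact_mod_cast h2
  obtain ⟨p, hp⟩ := fh_dim_nat d (fun p => (Nat.le_add_right _ _).trans (key p (RelSeries.singleton _ hnW.some)))
  obtain ⟨q, hq⟩ := fh_dim_nat d (fun q => (Nat.le_add_left _ _).trans (key (RelSeries.singleton _ hnV.some) q))
  rw [algDim, algDim, hp, hq] at hm
  have h3 : m < p.length + q.length := by exact_mod_cast hm
  exact h3.trans_le (key p q)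

/-- The linear projection given by a matrix. -/
def fhPr {ι κ : Type} [Fintype ι] (M : κ → ι → ℂ) (z : ι → ℂ) : κ → ℂ := fun i => ∑ j, M i j * z j

/-- Normalisation. -/
def fhN {ι : Type} [Fintype ι] (z : ι → ℂ) : ι → ℂ := ((‖z‖ : ℂ)⁻¹) • z

theorem fhN_cont {ι : Type} [Fintype ι] (z : ι → ℂ) (hz : z ≠ 0) : ContinuousAt fhN z := by
  have h : ContinuousAt (fun z : ι → ℂ => ((‖z‖ : ℂ)⁻¹)) z := by
    refine ContinuousAt.inv₀ ?_ (by simpa using hz)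
    exact (Complex.continuous_ofReal.comp continuous_norm).continuousAt
  exact h.smul (continuousAt_id (x := z))

theorem fhN_norm {ι : Type} [Fintype ι] (z : ι → ℂ) (hz : z ≠ 0) : ‖fhN z‖ = 1 := by
  unfold fhN
  rw [norm_smul, norm_inv, Complex.norm_real, norm_norm, inv_mul_cancel₀ (norm_ne_zero_iff.2 hz)]

theorem fhPr_smul {ι κ : Type} [Fintype ι] (M : κ → ι → ℂ) (t : ℂ) (z : ι → ℂ) :
    fhPr M (t • z) = t • fhPr M z := by
  ext i
  simp only [fhPr, Pi.smul_apply, smul_eq_mul, Finset.mul_sum]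
  exact Finset.sum_congr rfl fun j _ => by ring

theorem fhPr_cont {ι κ : Type} [Fintype ι] :
    Continuous (fun a : (κ → ι → ℂ) × (ι → ℂ) => fhPr a.1 a.2) := by
  refine continuous_pi fun i => ?_
  unfold fhPr
  fun_prop

section

variable {ι κ : Type} [Fintype ι] [Fintype κ] {X0 : Set (ι → ℂ)} {M : κ → ι → ℂ}

theorem fh_zf (P : FhProj X0 M) : ∃ zf : (κ → ℂ) → ℂ → ι → ℂ,
    (∀ z ∈ X0, eval (fhPr M z) P.D ≠ 0 → zf (fhPr M z) (eval z P.θ) = z) ∧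
    ∀ u ζ, eval u P.D ≠ 0 → ContinuousAt (fun a : (κ → ℂ) × ℂ => zf a.1 a.2) (u, ζ) := by
  choose b Q hb hQ using P.coord
  have hne : ∀ u, eval u P.D ≠ 0 → ∀ j, eval u (b j) ≠ 0 := by
    intro u hu j h
    obtain ⟨k, hk⟩ := hb j
    rw [hk, map_mul, h, zero_mul] at hu
    exact hu rfl
  refine ⟨fun u ζ j => ((Q j).map (eval u)).eval ζ / eval u (b j), ?_, ?_⟩
  · intro z hz hD
    funext j
    have h1 : eval (fhPr M z) (b j) * z j = ((Q j).map (eval (fhPr M z))).eval (eval z P.θ) :=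
      hQ j z hz
    beta_reduce
    rw [← h1, mul_div_cancel_left₀ _ (hne _ hD j)]
  · intro u ζ hu
    refine continuousAt_pi.2 fun j => ContinuousAt.div ?_ ?_ (hne u hu j)
    · refine Continuous.continuousAt ?_
      have : (fun a : (κ → ℂ) × ℂ => ((Q j).map (eval a.1)).eval a.2) =
          fun a => ∑ i ∈ Finset.range ((Q j).natDegree + 1), eval a.1 ((Q j).coeff i) * a.2 ^ i := by
        funext a
        rw [Polynomial.eval_eq_sum_range' (Nat.lt_succ_of_le (Polynomial.natDegree_map_le))]
        simp
      rw [this]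
      refine continuous_finsetSum _ fun i _ => ?_
      exact ((MvPolynomial.continuous_eval _).comp continuous_fst).mul (continuous_snd.pow i)
    · exact ((MvPolynomial.continuous_eval (b j)).comp continuous_fst).continuousAt

open Classical in
theorem fh_line_factor (P : FhProj X0 M) (zf : (κ → ℂ) → ℂ → ι → ℂ)
    (hzf : ∀ z ∈ X0, eval (fhPr M z) P.D ≠ 0 → zf (fhPr M z) (eval z P.θ) = z)
    (hzc : ∀ u ζ, eval u P.D ≠ 0 → ContinuousAt (fun a : (κ → ℂ) × ℂ => zf a.1 a.2) (u, ζ))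
    (UA UB : Set (ι → ℂ)) (hUA : IsOpen UA) (hUB : IsOpen UB) (hdis : Disjoint UA UB)
    (p q : κ → ℂ) (hp : eval p P.D ≠ 0) (N : ℕ) (hN : ∀ j, (P.F.coeff j).totalDegree ≤ N)
    (hUV : ∀ s : ℂ, ∀ z ∈ X0, fhPr M z = p + s • (q - p) → z ≠ 0 ∧ fhN z ∈ UA ∪ UB) :
    ∃ H : Polynomial (Polynomial ℂ), H.Monic ∧ (∀ j, (H.coeff j).natDegree ≤ N * P.F.natDegree) ∧
      H ∣ P.F.map (fhLine p q) ∧ ∀ s : ℂ, eval (p + s • (q - p)) P.D ≠ 0 →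
        H.map (Polynomial.evalRingHom s) =
        ∏ z ∈ ((P.F.map (eval (p + s • (q - p)))).roots.toFinset.filter
          (fun ζ => fhN (zf (p + s • (q - p)) ζ) ∈ UA)), (Polynomial.X - Polynomial.C z) := by
  let T : Set ℂ := {s | eval (p + s • (q - p)) P.D = 0}
  have hTf : T.Finite := by
    have h1 : fhLine p q P.D ≠ 0 := by
      intro h
      have h2 := congrArg (fun f => f P.D) (fhLine_eval p q 0)
      simp only [RingHom.comp_apply, h, map_zero, zero_smul, add_zero] at h2
      exact hp h2.symm
    refine (Polynomial.finite_setOfPred_isRoot h1).subset ?_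
    intro s hs
    have h2 := congrArg (fun f => f P.D) (fhLine_eval p q s)
    simp only [RingHom.comp_apply] at h2
    have h3 : eval (p + s • (q - p)) P.D = 0 := hs
    rw [h3] at h2
    exact h2
  have hGm : ∀ s, (P.F.map (fhLine p q)).map (Polynomial.evalRingHom s) =
      P.F.map (eval (p + s • (q - p))) := by
    intro s
    rw [Polynomial.map_map, fhLine_eval]
  have hdeg : ∀ j, ((P.F.map (fhLine p q)).coeff j).natDegree ≤ N := by
    intro j
    rw [Polynomial.coeff_map]
    refine le_trans ?_ (hN j)
    refine (fh_top_coeff (P.F.coeff j) p (q - p) _ ?_).1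
    rw [fhLine, aeval_def]
    rfl
  obtain ⟨C0, hC0⟩ := fh_root_bound _ (P.monic.map (fhLine p q)) N hdeg
  have hpt : ∀ s ∉ T, ∀ ζ, (P.F.map (eval (p + s • (q - p)))).eval ζ = 0 →
      zf (p + s • (q - p)) ζ ≠ 0 ∧ fhN (zf (p + s • (q - p)) ζ) ∈ UA ∪ UB := by
    intro s hs ζ hζ
    obtain ⟨z, hz, hzu, hzζ⟩ := P.lying _ _ hζ
    have hzu' : fhPr M z = p + s • (q - p) := hzu
    have h1 := hzf z hz (by rw [hzu']; exact hs)
    rw [hzu', hzζ] at h1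
    rw [h1]
    exact hUV s z hz hzu'
  have hlc : Continuous (fun v : ℂ × ℂ => ((p + v.1 • (q - p), v.2) : (κ → ℂ) × ℂ)) := by
    fun_prop
  have hev : ∀ s ∉ T, ∀ ζ, (P.F.map (eval (p + s • (q - p)))).eval ζ = 0 →
      ∀ U : Set (ι → ℂ), IsOpen U → fhN (zf (p + s • (q - p)) ζ) ∈ U →
      ∀ᶠ v : ℂ × ℂ in nhds (s, ζ), fhN (zf (p + v.1 • (q - p)) v.2) ∈ U := by
    intro s hs ζ hζ U hU hmem
    have h1 : ContinuousAt (fun v : ℂ × ℂ => zf (p + v.1 • (q - p)) v.2) (s, ζ) :=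
      ContinuousAt.comp (f := fun v : ℂ × ℂ => ((p + v.1 • (q - p), v.2) : (κ → ℂ) × ℂ))
        (g := fun a : (κ → ℂ) × ℂ => zf a.1 a.2) (hzc _ _ hs) hlc.continuousAt
    have h2 : ContinuousAt (fun v : ℂ × ℂ => fhN (zf (p + v.1 • (q - p)) v.2)) (s, ζ) :=
      ContinuousAt.comp (g := fhN) (fhN_cont _ (hpt s hs ζ hζ).1) h1
    exact h2.eventually (hU.mem_nhds hmem)
  obtain ⟨H, hH1, hH2, hH3, hH4⟩ := fh_clopen (P.F.map (fhLine p q)) (P.monic.map _) T hTf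
    (by
      intro s hs
      rw [hGm]
      exact P.sep _ hs) C0 N (fun s _ z hz => hC0 s z hz)
    (fun s ζ => fhN (zf (p + s • (q - p)) ζ) ∈ UA)
    (by
      intro s hs ζ hζ hA
      rw [hGm] at hζ
      filter_upwards [hev s hs ζ hζ UA hUA hA] with v hv _ _
      exact hv)
    (by
      intro s hs ζ hζ hA
      rw [hGm] at hζ
      have hB : fhN (zf (p + s • (q - p)) ζ) ∈ UB := ((hpt s hs ζ hζ).2).resolve_left hA
      filter_upwards [hev s hs ζ hζ UB hUB hB] with v hv _ _ hc
      exact Set.disjoint_left.1 hdis hc hv)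
  rw [P.monic.natDegree_map] at hH2
  refine ⟨H, hH1, hH2, hH3, fun s hs => ?_⟩
  have := hH4 s hs
  rw [hGm] at this
  exact this

end

theorem fh_contra {ι κ : Type} [Fintype ι] [Fintype κ] {X0 : Set (ι → ℂ)} {M : κ → ι → ℂ}
    (P : FhProj X0 M) (UA UB : Set (ι → ℂ)) (hUA : IsOpen UA) (hUB : IsOpen UB)
    (hdis : Disjoint UA UB) (x y : ι → ℂ) (hx : x ∈ X0) (hy : y ∈ X0) (hx0 : x ≠ 0) (hy0 : y ≠ 0)
    (hxA : fhN x ∈ UA) (hyB : fhN y ∈ UB)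
    (Op Oq : Set (κ → ℂ)) (hOp : Op ∈ nhds (fhPr M x)) (hOq : Oq ∈ nhds (fhPr M y))
    (hUV : ∀ p ∈ Op, ∀ q ∈ Oq, ∀ s : ℂ, ∀ z ∈ X0, fhPr M z = p + s • (q - p) →
      z ≠ 0 ∧ fhN z ∈ UA ∪ UB) : False := by
  classical
  have hDo : IsOpen {u : κ → ℂ | eval u P.D ≠ 0} :=
    isOpen_ne_fun (MvPolynomial.continuous_eval P.D) continuous_const
  have hDne : ∀ O : Set (κ → ℂ), IsOpen O → O.Nonempty → ∃ u ∈ O, eval u P.D ≠ 0 := by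
    intro O hO hne
    by_contra hcon
    push Not at hcon
    exact P.D_ne (fh_open_zero P.D O hO hne hcon)
  have hxO : ∀ᶠ u in nhds (fhPr M x), ∃ z ∈ X0, z ∈ {z | fhN z ∈ UA} ∧ fhPr M z = u :=
    P.opn x hx {z | fhN z ∈ UA} ((fhN_cont x hx0).eventually (hUA.mem_nhds hxA))
  have hyO : ∀ᶠ u in nhds (fhPr M y), ∃ z ∈ X0, z ∈ {z | fhN z ∈ UB} ∧ fhPr M z = u :=
    P.opn y hy {z | fhN z ∈ UB} ((fhN_cont y hy0).eventually (hUB.mem_nhds hyB))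
  obtain ⟨Op', hOp1, hOp2, hOp3⟩ := mem_nhds_iff.1 (Filter.inter_mem hOp hxO)
  obtain ⟨Oq', hOq1, hOq2, hOq3⟩ := mem_nhds_iff.1 (Filter.inter_mem hOq hyO)
  obtain ⟨p, hpO, hpD⟩ := hDne Op' hOp2 ⟨_, hOp3⟩
  obtain ⟨q0, hq0O, hq0D⟩ := hDne Oq' hOq2 ⟨_, hOq3⟩
  obtain ⟨x', hx', hx'A, hx'p⟩ := (hOp1 hpO).2
  obtain ⟨zf, hzf, hzc⟩ := fh_zf P
  let N : ℕ := (Finset.range (P.F.natDegree + 1)).sup fun j => (P.F.coeff j).totalDegree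
  have hN : ∀ j, (P.F.coeff j).totalDegree ≤ N := by
    intro j
    by_cases hj : j ≤ P.F.natDegree
    · exact Finset.le_sup (f := fun j => (P.F.coeff j).totalDegree)
        (Finset.mem_range.2 (Nat.lt_succ_of_le hj))
    · rw [Polynomial.coeff_eq_zero_of_natDegree_lt (not_le.1 hj)]
      simp
  have hfac := fun q (hq : q ∈ Oq') => fh_line_factor P zf hzf hzc UA UB hUA hUB hdis p q hpD N hN
    (hUV p (hOp1 hpO).1 q (hOq1 hq).1)
  let S : (κ → ℂ) → Finset ℂ := fun u => (P.F.map (eval u)).roots.toFinset.filter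
          (fun ζ => fhN (zf u ζ) ∈ UA)
  have hroot : ∀ u ζ, ζ ∈ (P.F.map (eval u)).roots.toFinset ↔ (P.F.map (eval u)).eval ζ = 0 := by
    intro u ζ
    rw [Multiset.mem_toFinset, Polynomial.mem_roots (P.monic.map _).ne_zero]
    rfl
  have hdegprod : ∀ s : Finset ℂ, (∏ z ∈ s, (Polynomial.X - Polynomial.C z)).natDegree = s.card := by
    intro s
    rw [Polynomial.natDegree_prod_of_monic _ _ fun z _ => Polynomial.monic_X_sub_C z]
    simp
  refine fh_hensel P.F P.monic P.irr p (P.sep p hpD) (S p) ?_ ?_ ?_ (Oq' ∩ {u | eval u P.D ≠ 0})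
    (hOq2.inter hDo) ⟨q0, hq0O, hq0D⟩ (N * P.F.natDegree) ?_
  · intro α hα
    exact (hroot p α).1 (Finset.mem_filter.1 hα).1
  · refine ⟨eval x' P.θ, Finset.mem_filter.2 ⟨(hroot _ _).2 ?_, ?_⟩⟩
    · rw [← hx'p]; exact P.root x' hx'
    · have := hzf x' hx' (by rw [hx'p]; exact hpD)
      rw [hx'p] at this
      rw [this]
      exact hx'A
  · obtain ⟨y', hy', hy'B, hy'q⟩ := (hOq1 hq0O).2
    obtain ⟨H, hH1, -, -, hH4⟩ := hfac q0 hq0O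
    have h0 := congrArg Polynomial.natDegree (hH4 0 (by simpa using hpD))
    have h1 := congrArg Polynomial.natDegree (hH4 1 (by simpa using hq0D))
    rw [hdegprod, hH1.natDegree_map] at h0 h1
    simp only [zero_smul, add_zero, one_smul, add_sub_cancel] at h0 h1
    change (S p).card < _
    have h2 : (S p).card = (S q0).card := h0.symm.trans h1
    rw [h2]
    refine lt_of_lt_of_le (Finset.card_lt_card (t := (P.F.map (eval q0)).roots.toFinset) ?_) ?_
    · refine Finset.filter_ssubset.2 ⟨eval y' P.θ, (hroot _ _).2 ?_, ?_⟩
      · rw [← hy'q]; exact P.root y' hy'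
      · have := hzf y' hy' (by rw [hy'q]; exact hq0D)
        rw [hy'q] at this
        rw [this]
        exact fun h => Set.disjoint_left.1 hdis h hy'B
    · refine (Multiset.toFinset_card_le _).trans ((Polynomial.card_roots' _).trans ?_)
      exact Polynomial.natDegree_map_le
  · rintro q ⟨hq, -⟩
    obtain ⟨H, hH1, hH2, hH3, hH4⟩ := hfac q hq
    refine ⟨H, hH1, hH2, ?_, hH3⟩
    have := hH4 0 (by simpa using hpD)
    simp only [zero_smul, add_zero] at this
    exact this

section

variable {ι α : Type} [Fintype ι] [Fintype α]

theorem fh_near (X0 : Set (ι → ℂ))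
    (hP : ∀ (M0 : α ⊕ Fin 2 → ι → ℂ) (ε : ℝ), 0 < ε →
      ∃ M : α ⊕ Fin 2 → ι → ℂ, (∀ i j, ‖M i j - M0 i j‖ < ε) ∧ Nonempty (FhProj X0 M)) (M0 : α ⊕ Fin 2 → ι → ℂ) (Q : (α ⊕ Fin 2 → ι → ℂ) → Prop)
    (hQ : ∀ᶠ M in nhds M0, Q M) : ∃ M, Q M ∧ Nonempty (FhProj X0 M) := by
  obtain ⟨ε, hε, h⟩ := Metric.eventually_nhds_iff.1 hQ
  obtain ⟨M, hM, hF⟩ := hP M0 ε hε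
  refine ⟨M, h ?_, hF⟩
  rw [dist_pi_lt_iff hε]
  intro i
  rw [dist_pi_lt_iff hε]
  intro j
  rw [dist_eq_norm]
  exact hM i j

theorem fh_sphere_compact (X0 : Set (ι → ℂ)) (hX : IsAlgSet X0) : IsCompact (X0 ∩ Metric.sphere 0 1) :=
  (isCompact_sphere 0 1).inter_left (fh_alg_closed X0 hX)

theorem fh_nonempty (X0 : Set (ι → ℂ)) (hX : IsAlgSet X0)
    (hcone : ∀ t : ℂ, ∀ x ∈ X0, t • x ∈ X0) (L : α → ι → ℂ)
    (hP : ∀ (M0 : α ⊕ Fin 2 → ι → ℂ) (ε : ℝ), 0 < ε →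
      ∃ M : α ⊕ Fin 2 → ι → ℂ, (∀ i j, ‖M i j - M0 i j‖ < ε) ∧ Nonempty (FhProj X0 M)) : ∃ z ∈ X0, z ≠ 0 ∧ fhPr L z = 0 := by
  by_contra hcon
  push Not at hcon
  let M0 : α ⊕ Fin 2 → ι → ℂ := Sum.elim L 0
  have h1 : ∀ᶠ M in nhds M0, ∀ z ∈ X0 ∩ Metric.sphere 0 1, ∃ i, fhPr M z (Sum.inl i) ≠ 0 := by
    refine (fh_sphere_compact X0 hX).eventually_forall_of_forall_eventually ?_
    rintro z ⟨hz, hzs⟩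
    have hz0 : z ≠ 0 := by
      rintro rfl
      simp at hzs
    obtain ⟨i, hi⟩ := Function.ne_iff.1 (hcon z hz hz0)
    have hc : Continuous (fun a : (α ⊕ Fin 2 → ι → ℂ) × (ι → ℂ) => fhPr a.1 a.2 (Sum.inl i)) :=
      (continuous_apply _).comp fhPr_cont
    have := hc.continuousAt.eventually_ne (x := (M0, z)) (y := 0) hi
    filter_upwards [this] with a ha
    exact ⟨i, ha⟩
  obtain ⟨M, hM, ⟨P⟩⟩ := fh_near X0 hP M0 _ h1
  obtain ⟨z, hz, hzu⟩ := P.surj (Sum.elim (0 : α → ℂ) (1 : Fin 2 → ℂ))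
  have hzu' : fhPr M z = Sum.elim (0 : α → ℂ) (1 : Fin 2 → ℂ) := hzu
  have hz0 : z ≠ 0 := by
    rintro rfl
    have := congrFun hzu' (Sum.inr 0)
    simp [fhPr] at this
  obtain ⟨i, hi⟩ := hM (fhN z) ⟨hcone _ _ hz, by simpa using fhN_norm z hz0⟩
  apply hi
  rw [fhN, fhPr_smul, hzu']
  simp

theorem fh_connected (X0 : Set (ι → ℂ)) (hX : IsAlgSet X0)
    (hcone : ∀ t : ℂ, ∀ x ∈ X0, t • x ∈ X0) (L : α → ι → ℂ)
    (hP : ∀ (M0 : α ⊕ Fin 2 → ι → ℂ) (ε : ℝ), 0 < ε →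
      ∃ M : α ⊕ Fin 2 → ι → ℂ, (∀ i j, ‖M i j - M0 i j‖ < ε) ∧ Nonempty (FhProj X0 M)) (A B : Set (ι → ℂ)) (hA : IsClosed A) (hB : IsClosed B)
    (hAB : ∀ z ∈ X0, fhPr L z = 0 → z ∈ A ∪ B)
    (hAB0 : ∀ z ∈ X0, fhPr L z = 0 → z ∈ A → z ∈ B → z = 0)
    (x y : ι → ℂ) (hx : x ∈ X0) (hy : y ∈ X0) (hxL : fhPr L x = 0) (hyL : fhPr L y = 0)
    (hxA : x ∈ A) (hyB : y ∈ B) (hx0 : x ≠ 0) (hy0 : y ≠ 0) : False := by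
  -- the two pieces are stable under scaling
  have hscale : ∀ (A B : Set (ι → ℂ)), IsClosed A → IsClosed B →
      (∀ z ∈ X0, fhPr L z = 0 → z ∈ A ∪ B) →
      (∀ z ∈ X0, fhPr L z = 0 → z ∈ A → z ∈ B → z = 0) →
      ∀ z ∈ X0, fhPr L z = 0 → z ≠ 0 → z ∈ A → ∀ t : ℂ, t ≠ 0 → t • z ∈ A := by
    intro A B hA hB hAB hAB0 z hz hzL hz0 hzA t ht
    by_contra hcon
    have hconn : IsPreconnected ({0}ᶜ : Set ℂ) :=
      (isConnected_compl_singleton_of_one_lt_rank (by simp) 0).isPreconnected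
    have hc : Continuous (fun t : ℂ => t • z) := by fun_prop
    have hL : ∀ t : ℂ, fhPr L (t • z) = 0 := fun t => by rw [fhPr_smul, hzL, smul_zero]
    obtain ⟨t', ht'0, ht'A, ht'B⟩ := isPreconnected_closed_iff.1 hconn
      ((fun t : ℂ => t • z) ⁻¹' A) ((fun t : ℂ => t • z) ⁻¹' B) (hA.preimage hc) (hB.preimage hc)
      (fun s _ => hAB _ (hcone s z hz) (hL s)) ⟨1, by simp, by simpa using hzA⟩
      ⟨t, ht, (hAB _ (hcone t z hz) (hL t)).resolve_left hcon⟩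
    have := hAB0 _ (hcone t' z hz) (hL t') ht'A ht'B
    rw [smul_eq_zero] at this
    exact this.elim ht'0 hz0
  have hsA := hscale A B hA hB hAB hAB0
  have hsB := hscale B A hB hA (fun z hz h => (hAB z hz h).symm) (fun z hz h h1 h2 => hAB0 z hz h h2 h1)
  -- independence
  obtain ⟨i0, i1, hdet⟩ : ∃ i0 i1, x i0 * y i1 - x i1 * y i0 ≠ 0 := by
    by_contra hcon
    push Not at hcon
    obtain ⟨i, hi⟩ := Function.ne_iff.1 hx0
    have hi' : x i ≠ 0 := hi
    have hyx : y = (y i / x i) • x := by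
      ext j
      have := hcon i j
      simp only [Pi.smul_apply, smul_eq_mul]
      field_simp
      linear_combination this
    have hc0 : y i / x i ≠ 0 := by
      intro h
      rw [h, zero_smul] at hyx
      exact hy0 hyx
    have hyA : y ∈ A := by
      rw [hyx]
      exact hsA x hx hxL hx0 hxA _ hc0
    exact hy0 (hAB0 y hy hyL hyA hyB)
  have hN0 : ∀ z : ι → ℂ, z ≠ 0 → ((‖z‖ : ℂ)⁻¹) ≠ 0 := by
    intro z hz
    simpa using hz
  -- separating neighbourhoods
  let Z : Set (ι → ℂ) := {z | fhPr L z = 0}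
  have hLc : Continuous (fun z => fhPr L z) := fhPr_cont.comp (continuous_const.prodMk continuous_id)
  have hZ : IsClosed Z := isClosed_eq hLc continuous_const
  have hKA : IsCompact (X0 ∩ Metric.sphere 0 1 ∩ (Z ∩ A)) :=
    (fh_sphere_compact X0 hX).inter_right (hZ.inter hA)
  have hKB : IsCompact (X0 ∩ Metric.sphere 0 1 ∩ (Z ∩ B)) :=
    (fh_sphere_compact X0 hX).inter_right (hZ.inter hB)
  have hdisK : Disjoint (X0 ∩ Metric.sphere 0 1 ∩ (Z ∩ A)) (X0 ∩ Metric.sphere 0 1 ∩ (Z ∩ B)) := by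
    refine Set.disjoint_left.2 ?_
    rintro z ⟨⟨hz, hzs⟩, hzL, hzA⟩ ⟨-, -, hzB⟩
    have := hAB0 z hz hzL hzA hzB
    rw [this] at hzs
    simp at hzs
  obtain ⟨UA, UB, hUA, hUB, hKUA, hKUB, hdis⟩ :=
    SeparatedNhds.of_isCompact_isCompact hKA hKB hdisK
  have hxUA : fhN x ∈ UA := hKUA ⟨⟨hcone _ _ hx, by simpa using fhN_norm x hx0⟩,
    by change fhPr L (fhN x) = 0; rw [fhN, fhPr_smul, hxL, smul_zero],
    hsA x hx hxL hx0 hxA _ (hN0 x hx0)⟩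
  have hyUB : fhN y ∈ UB := hKUB ⟨⟨hcone _ _ hy, by simpa using fhN_norm y hy0⟩,
    by change fhPr L (fhN y) = 0; rw [fhN, fhPr_smul, hyL, smul_zero],
    hsB y hy hyL hy0 hyB _ (hN0 y hy0)⟩
  -- the bad compact set
  have hE : IsCompact (X0 ∩ Metric.sphere 0 1 ∩ (UA ∪ UB)ᶜ) :=
    (fh_sphere_compact X0 hX).inter_right (hUA.union hUB).isClosed_compl
  have hEL : ∀ z ∈ X0 ∩ Metric.sphere 0 1 ∩ (UA ∪ UB)ᶜ, fhPr L z ≠ 0 := by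
    rintro z ⟨⟨hz, hzs⟩, hzU⟩ hzL
    apply hzU
    rcases hAB z hz hzL with h | h
    · exact Or.inl (hKUA ⟨⟨hz, hzs⟩, hzL, h⟩)
    · exact Or.inr (hKUB ⟨⟨hz, hzs⟩, hzL, h⟩)
  classical
  let M0 : α ⊕ Fin 2 → ι → ℂ := Sum.elim L (fun k => Pi.single (if k = 0 then i0 else i1) 1)
  have hM0 : ∀ z, fhPr M0 z = Sum.elim (fhPr L z) (fun k => z (if k = 0 then i0 else i1)) := by
    intro z
    ext k
    rcases k with k | k
    · rfl
    · simp [fhPr, M0, Pi.single_apply]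
  let Δ : (α ⊕ Fin 2 → ℂ) → (α ⊕ Fin 2 → ℂ) → ℂ := fun p q =>
    p (Sum.inr 0) * q (Sum.inr 1) - p (Sum.inr 1) * q (Sum.inr 0)
  let Φ : (α ⊕ Fin 2 → ℂ) → (α ⊕ Fin 2 → ℂ) → (α ⊕ Fin 2 → ℂ) → α ⊕ Fin 2 → ℂ := fun u p q i =>
    Δ p q * u i - p i * Δ u q - q i * Δ p u
  have hΔ0 : Δ (fhPr M0 x) (fhPr M0 y) ≠ 0 := by
    simpa [Δ, hM0] using hdet
  have hev1 : ∀ᶠ w : (α ⊕ Fin 2 → ι → ℂ) × (α ⊕ Fin 2 → ℂ) × (α ⊕ Fin 2 → ℂ) in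
      nhds (M0, fhPr M0 x, fhPr M0 y), ∀ z ∈ X0 ∩ Metric.sphere 0 1 ∩ (UA ∪ UB)ᶜ,
      ∃ i, Φ (fhPr w.1 z) w.2.1 w.2.2 i ≠ 0 := by
    refine hE.eventually_forall_of_forall_eventually ?_
    intro z hz
    obtain ⟨i, hi⟩ := Function.ne_iff.1 (hEL z hz)
    have hc : Continuous (fun a : ((α ⊕ Fin 2 → ι → ℂ) × (α ⊕ Fin 2 → ℂ) × (α ⊕ Fin 2 → ℂ)) ×
        (ι → ℂ) => Φ (fhPr a.1.1 a.2) a.1.2.1 a.1.2.2 (Sum.inl i)) := by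
      have h1 : Continuous (fun a : ((α ⊕ Fin 2 → ι → ℂ) × (α ⊕ Fin 2 → ℂ) × (α ⊕ Fin 2 → ℂ)) ×
        (ι → ℂ) => fhPr a.1.1 a.2) :=
        fhPr_cont.comp ((continuous_fst.comp continuous_fst).prodMk continuous_snd)
      have h2 := fun k => (continuous_apply k).comp h1
      simp only [Function.comp_def] at h2
      have h3 := h2 (Sum.inl i)
      have h4 := h2 (Sum.inr 0)
      have h5 := h2 (Sum.inr 1)
      simp only [Φ, Δ]
      fun_prop
    have hne : Φ (fhPr M0 z) (fhPr M0 x) (fhPr M0 y) (Sum.inl i) ≠ 0 := by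
      simp only [Φ]
      have hxi : fhPr M0 x (Sum.inl i) = 0 := by rw [hM0]; simp [hxL]
      have hyi : fhPr M0 y (Sum.inl i) = 0 := by rw [hM0]; simp [hyL]
      have hzi : fhPr M0 z (Sum.inl i) = fhPr L z i := rfl
      rw [hxi, hyi, hzi, zero_mul, zero_mul, sub_zero, sub_zero]
      exact mul_ne_zero hΔ0 hi
    have := hc.continuousAt.eventually_ne (x := ((M0, fhPr M0 x, fhPr M0 y), z)) (y := 0) hne
    filter_upwards [this] with a ha
    exact ⟨Sum.inl i, ha⟩
  have hev2 : ∀ᶠ w : (α ⊕ Fin 2 → ι → ℂ) × (α ⊕ Fin 2 → ℂ) × (α ⊕ Fin 2 → ℂ) in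
      nhds (M0, fhPr M0 x, fhPr M0 y), Δ w.2.1 w.2.2 ≠ 0 := by
    have hc : Continuous (fun w : (α ⊕ Fin 2 → ι → ℂ) × (α ⊕ Fin 2 → ℂ) × (α ⊕ Fin 2 → ℂ) =>
        Δ w.2.1 w.2.2) := by
      simp only [Δ]
      fun_prop
    exact hc.continuousAt.eventually_ne (x := (M0, fhPr M0 x, fhPr M0 y)) (y := 0) hΔ0
  obtain ⟨O, hO1, hO2, hO3⟩ := mem_nhds_iff.1 (hev1.and hev2)
  have hMx : Continuous (fun M : α ⊕ Fin 2 → ι → ℂ => ((M, fhPr M x, fhPr M y) :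
      (α ⊕ Fin 2 → ι → ℂ) × (α ⊕ Fin 2 → ℂ) × (α ⊕ Fin 2 → ℂ))) :=
    continuous_id.prodMk ((fhPr_cont.comp (continuous_id.prodMk continuous_const)).prodMk
      (fhPr_cont.comp (continuous_id.prodMk continuous_const)))
  obtain ⟨M, hM, ⟨P⟩⟩ := fh_near X0 hP M0 _ (hMx.continuousAt.eventually (hO2.mem_nhds hO3))
  have hOM : ∀ᶠ w : (α ⊕ Fin 2 → ℂ) × (α ⊕ Fin 2 → ℂ) in nhds (fhPr M x, fhPr M y),
      (M, w) ∈ O := by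
    have hc : Continuous (fun w : (α ⊕ Fin 2 → ℂ) × (α ⊕ Fin 2 → ℂ) => (M, w)) := by fun_prop
    exact hc.continuousAt.eventually (hO2.mem_nhds hM)
  rw [nhds_prod_eq, Filter.eventually_iff, Filter.mem_prod_iff] at hOM
  obtain ⟨Op, hOp, Oq, hOq, hOpq⟩ := hOM
  refine fh_contra P UA UB hUA hUB hdis x y hx hy hx0 hy0 hxUA hyUB Op Oq hOp hOq ?_
  intro p hp q hq s z hz hzu
  have hw := hO1 (hOpq (Set.mk_mem_prod hp hq))
  obtain ⟨hw1, hw2⟩ := hw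
  have hz0 : z ≠ 0 := by
    rintro rfl
    have h0 : ∀ k, p k + s * (q k - p k) = 0 := by
      intro k
      have := congrFun hzu k
      simpa [fhPr] using this.symm
    apply hw2
    have e0 := h0 (Sum.inr 0)
    have e1 := h0 (Sum.inr 1)
    simp only [Δ]
    linear_combination (q (Sum.inr 1) - p (Sum.inr 1)) * e0 - (q (Sum.inr 0) - p (Sum.inr 0)) * e1
  refine ⟨hz0, ?_⟩
  by_contra hcon
  obtain ⟨i, hi⟩ := hw1 (fhN z) ⟨⟨hcone _ _ hz, by simpa using fhN_norm z hz0⟩, hcon⟩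
  apply hi
  rw [fhN, fhPr_smul, hzu]
  simp only [Φ, Δ, Pi.smul_apply, Pi.add_apply, Pi.sub_apply, smul_eq_mul]
  ring

end

/-- Fulton–Hansen connectedness theorem. Let `V, W ⊆ ℙⁿ` be irreducible
closed subvarieties (given by their affine cones in `ℂ^{n+1}`, so that the projective
dimensions are the cone dimensions minus one) with `dim V + dim W > n`. Then `V ∩ W` is
nonempty and connected: it admits no decomposition into two Zariski-closed pieces meeting
only at the cone vertex, each containing a nonzero point. -/
theorem stmt5 (n : ℕ) (V W : Set (Fin (n + 1) → ℂ))
    (hValg : IsAlgSet V) (hWalg : IsAlgSet W)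
    (hVcone : ∀ (t : ℂ), ∀ x ∈ V, t • x ∈ V)
    (hWcone : ∀ (t : ℂ), ∀ x ∈ W, t • x ∈ W)
    (hVirr : AlgIrreducible V) (hWirr : AlgIrreducible W)
    (hdim : ((n : WithBot ℕ∞) + 2) < algDim V + algDim W) :
    (∃ x ∈ V ∩ W, x ≠ 0) ∧
    ¬ ∃ A B : Set (Fin (n + 1) → ℂ), IsAlgSet A ∧ IsAlgSet B ∧
        V ∩ W ⊆ A ∪ B ∧ A ∩ B ∩ (V ∩ W) ⊆ {0} ∧
        (∃ x ∈ V ∩ W ∩ A, x ≠ 0) ∧ (∃ x ∈ V ∩ W ∩ B, x ≠ 0) := by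
  have hXa := fhProd_alg V W hValg hWalg
  have hXi := fhProd_irr V W hVirr hWirr
  have hXc : ∀ t : ℂ, ∀ z ∈ fhProd V W, t • z ∈ fhProd V W :=
    fun t z hz => ⟨hVcone t _ hz.1, hWcone t _ hz.2⟩
  obtain ⟨d, hd, hpk⟩ := fh_package (fhProd V W) hXa hXi
  have hnd : n + 2 < d := fhProd_dim V W hValg hWalg hVirr hWirr d (n + 2) hd
    (by push_cast; exact hdim)
  have hcard : Fintype.card (Fin (d - 2) ⊕ Fin 2) = d := by
    simp only [Fintype.card_sum, Fintype.card_fin]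
    omega
  have hP := hpk (Fin (d - 2) ⊕ Fin 2) hcard
  let L : Fin (d - 2) → Fin (n + 1) ⊕ Fin (n + 1) → ℂ := fun i =>
    Sum.elim (fun k => if k.val = i.val then 1 else 0) (fun k => if k.val = i.val then -1 else 0)
  have hL : ∀ z, fhPr L z = 0 ↔ z ∘ Sum.inl = z ∘ Sum.inr := by
    intro z
    have e : ∀ i, fhPr L z i = ∑ k : Fin (n + 1),
        (if k.val = i.val then z (Sum.inl k) - z (Sum.inr k) else 0) := by
      intro i
      simp only [fhPr, L, Fintype.sum_sum_type, Sum.elim_inl, Sum.elim_inr]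
      rw [← Finset.sum_add_distrib]
      refine Finset.sum_congr rfl fun k _ => ?_
      split_ifs <;> ring
    constructor
    · intro h
      ext k
      have hk := congrFun h ⟨k.val, by omega⟩
      rw [e] at hk
      simp only [Fin.val_inj, Pi.zero_apply] at hk
      rw [Finset.sum_ite_eq' Finset.univ k] at hk
      simpa [sub_eq_zero] using hk
    · intro h
      ext i
      rw [e]
      refine Finset.sum_eq_zero fun k _ => ?_
      have := congrFun h k
      simp only [Function.comp_apply] at this
      simp [this]
  have hdiag : ∀ z ∈ fhProd V W, fhPr L z = 0 → z ∘ Sum.inl ∈ V ∩ W := by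
    intro z hz h
    exact ⟨hz.1, by rw [(hL z).1 h]; exact hz.2⟩
  have hzero : ∀ z, fhPr L z = 0 → z ∘ Sum.inl = 0 → z = 0 := by
    intro z h h0
    have h1 := (hL z).1 h
    ext k
    rcases k with k | k
    · exact congrFun h0 k
    · rw [h1] at h0
      exact congrFun h0 k
  have hmem : ∀ x ∈ V ∩ W, Sum.elim x x ∈ fhProd V W := fun x hx => ⟨hx.1, hx.2⟩
  have hmemL : ∀ x : Fin (n + 1) → ℂ, fhPr L (Sum.elim x x) = 0 := fun x => (hL _).2 rfl
  have hmem0 : ∀ x : Fin (n + 1) → ℂ, x ≠ 0 → (Sum.elim x x : _ → ℂ) ≠ 0 := by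
    intro x hx h
    apply hx
    ext k
    exact congrFun h (Sum.inl k)
  have hc : Continuous (fun z : Fin (n + 1) ⊕ Fin (n + 1) → ℂ => z ∘ Sum.inl) :=
    continuous_pi fun k => continuous_apply (Sum.inl k)
  constructor
  · obtain ⟨z, hz, hz0, hzL⟩ := fh_nonempty (fhProd V W) hXa hXc L hP
    exact ⟨z ∘ Sum.inl, hdiag z hz hzL, fun h => hz0 (hzero z hzL h)⟩
  · rintro ⟨A, B, hA, hB, hAB, hAB0, ⟨x, ⟨hx, hxA⟩, hx0⟩, ⟨y, ⟨hy, hyB⟩, hy0⟩⟩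
    exact fh_connected (fhProd V W) hXa hXc L hP _ _
      ((fh_alg_closed A hA).preimage hc) ((fh_alg_closed B hB).preimage hc)
      (fun z hz h => hAB (hdiag z hz h))
      (fun z hz h h1 h2 => hzero z h (hAB0 ⟨⟨h1, h2⟩, hdiag z hz h⟩))
      (Sum.elim x x) (Sum.elim y y) (hmem x hx) (hmem y hy) (hmemL x) (hmemL y)
      hxA hyB (hmem0 x hx0) (hmem0 y hy0)
end
end

section
/- Let X ⊂ ℙⁿ be a complete intersection of irreducible hypersurfaces with dim X = r ≥ 2. If the singular locus of X has codimension ≥ 2 in X, then X is irreducible. -/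
open MvPolynomial

noncomputable section

section ModulePart

open scoped Pointwise
open RingTheory.Sequence IsLocalRing CategoryTheory Abelian

def DepthGE (A : Type) [CommRing A] [IsLocalRing A] (k : ℕ) (M : Type) [AddCommGroup M]
    [Module A M] : Prop :=
  ∃ rs : List A, rs.length = k ∧ (∀ r ∈ rs, r ∈ maximalIdeal A) ∧ IsRegular M rs

variable {A : Type} [CommRing A] [IsLocalRing A] [IsNoetherianRing A]
variable {M : Type} [AddCommGroup M] [Module A M] [Module.Finite A M]

omit [IsNoetherianRing A] [Module.Finite A M] in
lemma DepthGE.nontriv {k : ℕ} (h : DepthGE A k M) : Nontrivial M := by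
  obtain ⟨rs, -, -, h⟩ := h
  exact h.nontrivial

omit [IsNoetherianRing A] in
lemma smul_top_lt [Nontrivial M] : maximalIdeal A • (⊤ : Submodule A M) < ⊤ := by
  refine lt_top_iff_ne_top.mpr fun h => ?_
  have := Submodule.eq_bot_of_le_smul_of_le_jacobson_bot (maximalIdeal A) (⊤ : Submodule A M)
    Module.Finite.fg_top h.ge (maximalIdeal_le_jacobson _)
  exact top_ne_bot this

lemma DepthGE.exchange {k : ℕ} (h : DepthGE A (k + 1) M) {x : A} (hx : x ∈ maximalIdeal A)
    (hreg : IsSMulRegular M x) : DepthGE A k (QuotSMulTop x M) := by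
  have := h.nontriv
  have : Nontrivial (QuotSMulTop x M) := nontrivial_quotSMulTop_of_mem_maximalIdeal M hx
  obtain ⟨rs, hl, hm, hr⟩ := h
  have hsupp : Module.support A (ModuleCat.of A (A ⧸ maximalIdeal A)) =
      PrimeSpectrum.zeroLocus (maximalIdeal A) := by
    change Module.support A (A ⧸ maximalIdeal A) = _
    rw [Module.support_eq_zeroLocus, Ideal.annihilator_quotient]
  have h1 := ModuleCat.subsingleton_ext_of_exists_isRegular (maximalIdeal A)
    (ModuleCat.of A (A ⧸ maximalIdeal A)) hsupp.subset (ModuleCat.of A M) smul_top_lt rs hm hr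
  refine ModuleCat.exists_isRegular_of_exists_subsingleton_ext (maximalIdeal A) k
    (ModuleCat.of A (QuotSMulTop x M)) smul_top_lt (ModuleCat.of A (A ⧸ maximalIdeal A)) hsupp ?_
  intro i hi
  have zero1 := AddCommGrpCat.isZero_of_iff_subsingleton.mpr (h1 i (by omega))
  have zero2 := AddCommGrpCat.isZero_of_iff_subsingleton.mpr (h1 (i + 1) (by omega))
  have hreg' : IsSMulRegular (ModuleCat.of A M) x := hreg
  exact AddCommGrpCat.subsingleton_of_isZero <| ShortComplex.Exact.isZero_of_both_zeros
    ((Ext.covariant_sequence_exact₃' (ModuleCat.of A (A ⧸ maximalIdeal A))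
      hreg'.smulShortComplex_shortExact) i (i + 1) rfl)
    (zero1.eq_zero_of_src _) (zero2.eq_zero_of_tgt _)

lemma ass_step {x : A} (hx : x ∈ maximalIdeal A) (hreg : IsSMulRegular M x) {p : Ideal A}
    (hp : p ∈ associatedPrimes A M) :
    ∃ q ∈ associatedPrimes A (QuotSMulTop x M), p ≤ q ∧ x ∈ q := by
  obtain ⟨-, u, hu⟩ := isAssociatedPrime_iff.mp hp
  have hpp : p.IsPrime := hp.1
  let N : Submodule A M :=
    { carrier := {v | ∀ a ∈ p, a • v = 0}
      add_mem' := fun {v w} hv hw a ha => by rw [smul_add, hv a ha, hw a ha, add_zero]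
      zero_mem' := fun a _ => smul_zero a
      smul_mem' := fun c v hv a ha => by rw [smul_comm, hv a ha, smul_zero] }
  have huN : u ∈ N := fun a ha => by
    rw [hu] at ha
    simpa [Submodule.mem_colon_singleton] using ha
  have hu0 : u ≠ 0 := by
    rintro rfl
    apply hpp.ne_top
    rw [hu, Ideal.eq_top_iff_one]
    simp [Submodule.mem_colon_singleton]
  have : ∃ v ∈ N, v ∉ x • (⊤ : Submodule A M) := by
    by_contra! hcon
    have hN : N = ⊥ := by
      refine Submodule.eq_bot_of_le_smul_of_le_jacobson_bot (maximalIdeal A) N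
        (IsNoetherian.noetherian N) ?_ (maximalIdeal_le_jacobson _)
      intro v hv
      obtain ⟨w, -, rfl⟩ := hcon v hv
      refine Submodule.smul_mem_smul hx ?_
      intro a ha
      apply hreg
      have := hv a ha
      change a • x • w = 0 at this
      change x • a • w = x • 0
      rw [smul_comm, this, smul_zero]
    rw [hN] at huN
    exact hu0 huN
  obtain ⟨v, hvN, hvx⟩ := this
  let v' : QuotSMulTop x M := Submodule.Quotient.mk v
  have hv' : v' ≠ 0 := fun h => hvx ((Submodule.Quotient.mk_eq_zero _).mp h)
  obtain ⟨q, hq, hle⟩ := exists_le_isAssociatedPrime_of_isNoetherianRing A v' hv'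
  refine ⟨q, hq, fun a ha => hle ?_, hle ?_⟩
  · rw [Submodule.mem_colon_singleton, Submodule.mem_bot]
    change Submodule.Quotient.mk (a • v) = _
    rw [hvN a ha]
    rfl
  · rw [Submodule.mem_colon_singleton, Submodule.mem_bot]
    refine (Submodule.Quotient.mk_eq_zero _).mpr ?_
    exact Submodule.smul_mem_pointwise_smul _ _ _ trivial

omit [IsLocalRing A] [IsNoetherianRing A] in
lemma supp_quot (q : Ideal A) : Module.support A (A ⧸ q) = PrimeSpectrum.zeroLocus q := by
  rw [Module.support_eq_zeroLocus, Ideal.annihilator_quotient]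

lemma DepthGE.le_dim {k : ℕ} (h : DepthGE A k M) {p : Ideal A}
    (hp : p ∈ associatedPrimes A M) : (k : WithBot ℕ∞) ≤ Module.supportDim A (A ⧸ p) := by
  induction k generalizing M p with
  | zero =>
    have : p.IsPrime := hp.1
    have : Nontrivial (A ⧸ p) := Ideal.Quotient.nontrivial_iff.mpr this.ne_top
    have := Module.supportDim_ne_bot_of_nontrivial A (A ⧸ p)
    obtain ⟨n, hn⟩ := WithBot.ne_bot_iff_exists.mp this
    rw [← hn]
    simp
  | succ k ih =>
    obtain ⟨rs, hl, hm, hr⟩ := h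
    match rs, hl, hm, hr with
    | x :: rs, hl, hm, hr =>
      rw [isRegular_cons_iff] at hr
      have hx : x ∈ maximalIdeal A := hm x (by simp)
      obtain ⟨q, hq, hpq, hxq⟩ := ass_step hx hr.1 hp
      have h2 := ih (M := QuotSMulTop x M)
        ⟨rs, by simpa using hl, fun r h => hm r (by simp [h]), hr.2⟩ hq
      have hpp : p.IsPrime := hp.1
      have hxp : x ∉ p := by
        intro hxp
        have : x ∈ ⋃ p ∈ associatedPrimes A M, (p : Set A) := Set.mem_biUnion hp hxp
        rw [biUnion_associatedPrimes_eq_compl_regular] at this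
        exact this hr.1
      have hreg : IsSMulRegular (A ⧸ p) x := by
        rw [isSMulRegular_quotient_iff_mem_of_smul_mem]
        intro y hy
        exact (hpp.mem_or_mem hy).resolve_left hxp
      have h3 := Module.supportDim_quotSMulTop_succ_eq_supportDim hreg hx
      rw [← h3]
      push_cast
      refine add_le_add_left (h2.trans ?_) 1
      refine Order.krullDim_le_of_strictMono (fun a ↦ ⟨a.1, ?_⟩) (fun {_ _} lt ↦ lt)
      have ha : a.1 ∈ PrimeSpectrum.zeroLocus (q : Set A) := supp_quot q ▸ a.2
      rw [Module.support_quotSMulTop, supp_quot]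
      refine ⟨fun y hy => ha (hpq hy), ?_⟩
      simpa using ha hxq

lemma supportDim_le_list (ys : List A) (hys : ∀ y ∈ ys, y ∈ maximalIdeal A) :
    Module.supportDim A M ≤
      Module.supportDim A (M ⧸ (Ideal.ofList ys • ⊤ : Submodule A M)) + ys.length := by
  induction ys generalizing M with
  | nil =>
    have : (Ideal.ofList ([] : List A) • ⊤ : Submodule A M) = ⊥ := by simp
    rw [Module.supportDim_eq_of_equiv (Submodule.quotEquivOfEqBot _ this)]
    simp
  | cons y ys ih =>
    have h1 := Module.supportDim_le_supportDim_quotSMulTop_succ (R := A) (M := M)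
      (hys y (by simp))
    have h2 := ih (M := QuotSMulTop y M) (fun z hz => hys z (by simp [hz]))
    rw [Module.supportDim_eq_of_equiv
      (Submodule.quotOfListConsSMulTopEquivQuotSMulTopInner M y ys)]
    refine h1.trans ((add_le_add_left h2 1).trans ?_)
    rw [add_assoc, List.length_cons, Nat.cast_add, Nat.cast_one]

omit [IsNoetherianRing A] [Module.Finite A M] in
lemma DepthGE.congr {M' : Type} [AddCommGroup M'] [Module A M'] {k : ℕ} (h : DepthGE A k M)
    (e : M ≃ₗ[A] M') : DepthGE A k M' := by
  obtain ⟨rs, hl, hm, hr⟩ := h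
  exact ⟨rs, hl, hm, (e.isRegular_congr rs).mp hr⟩

lemma DepthGE.quot_list {j : ℕ} (ys : List A) (hys : ∀ y ∈ ys, y ∈ maximalIdeal A)
    (h : DepthGE A (j + ys.length) M)
    (hd : Module.supportDim A (M ⧸ (Ideal.ofList ys • ⊤ : Submodule A M)) ≤ j) :
    DepthGE A j (M ⧸ (Ideal.ofList ys • ⊤ : Submodule A M)) := by
  induction ys generalizing M with
  | nil =>
    have : (Ideal.ofList ([] : List A) • ⊤ : Submodule A M) = ⊥ := by simp
    exact h.congr (Submodule.quotEquivOfEqBot _ this).symm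
  | cons y ys ih =>
    have e := Submodule.quotOfListConsSMulTopEquivQuotSMulTopInner M y ys
    rw [Module.supportDim_eq_of_equiv e] at hd
    have hy := hys y (by simp)
    have hys' : ∀ z ∈ ys, z ∈ maximalIdeal A := fun z hz => hys z (by simp [hz])
    have hle := supportDim_le_list (M := QuotSMulTop y M) ys hys'
    have hle2 : Module.supportDim A (QuotSMulTop y M) ≤ ((j + ys.length : ℕ) : WithBot ℕ∞) := by
      refine hle.trans ?_
      push_cast
      exact add_le_add_left hd _
    have hreg : IsSMulRegular M y := by
      by_contra hcon
      have : y ∈ ({ r : A | IsSMulRegular M r }ᶜ : Set A) := hcon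
      rw [← biUnion_associatedPrimes_eq_compl_regular] at this
      simp only [Set.mem_iUnion] at this
      obtain ⟨p, hp, hyp⟩ := this
      have hpp : p.IsPrime := hp.1
      have h1 := h.le_dim hp
      have h2 : Module.supportDim A (A ⧸ p) ≤ Module.supportDim A (QuotSMulTop y M) := by
        refine Order.krullDim_le_of_strictMono (fun a ↦ ⟨a.1, ?_⟩) (fun {_ _} lt ↦ lt)
        have ha : a.1 ∈ PrimeSpectrum.zeroLocus (p : Set A) := supp_quot p ▸ a.2
        rw [Module.support_quotSMulTop]
        refine ⟨?_, by simpa using ha hyp⟩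
        obtain ⟨-, u, hu⟩ := isAssociatedPrime_iff.mp hp
        rw [Module.mem_support_iff_exists_annihilator]
        refine ⟨u, fun z hz => ha ?_⟩
        rw [hu]
        rw [Submodule.mem_annihilator_span_singleton] at hz
        simpa [Submodule.mem_colon_singleton] using hz
      have h3 := (h1.trans h2).trans hle2
      simp only [List.length_cons] at h3
      have h4 : j + (ys.length + 1) ≤ j + ys.length := by exact_mod_cast h3
      omega
    have h' : DepthGE A (j + ys.length) (QuotSMulTop y M) :=
      DepthGE.exchange (k := j + ys.length) h hy hreg
    exact (ih hys' h' hd).congr e.symm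

lemma exists_regular {k : ℕ} (h : DepthGE A k M) (K : Ideal A)
    (hK : ∀ q : Ideal A, q.IsPrime → K ≤ q → Module.supportDim A (A ⧸ q) < k) :
    ∃ x ∈ K, IsSMulRegular M x := by
  by_contra! hcon
  have h1 : (K : Set A) ⊆ ⋃ p ∈ associatedPrimes A M, (p : Set A) := by
    rw [biUnion_associatedPrimes_eq_compl_regular]
    exact fun x hx => hcon x hx
  obtain ⟨p, hp, hle⟩ := (Ideal.subset_union_prime_finite (associatedPrimes.finite A M)
    (f := id) ⊤ ⊤ (fun i hi _ _ => hi.1)).mp h1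
  exact absurd (h.le_dim hp) (not_le.mpr (hK p hp.1 hle))

lemma idem_argument {e : ℕ} (F I J : Ideal A) (h : DepthGE A (e + 2) (A ⧸ F)) (hIJ : I * J ≤ F)
    (hK : ∀ q : Ideal A, q.IsPrime → I ⊔ J ≤ q → Module.supportDim A (A ⧸ q) ≤ e) :
    I ≤ F ∨ J ≤ F := by
  by_cases hI : I = ⊤
  · right; simpa [hI] using hIJ
  by_cases hJ : J = ⊤
  · left; simpa [hJ] using hIJ
  have hIm := le_maximalIdeal hI
  have hJm := le_maximalIdeal hJ
  obtain ⟨x, hxK, hx⟩ := exists_regular h (I ⊔ J) (fun q hq hle =>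
    (hK q hq hle).trans_lt (by exact_mod_cast (by omega : e < e + 2)))
  obtain ⟨y, hyK, hy⟩ := exists_regular (h.exchange (sup_le hIm hJm hxK) hx) (I ⊔ J)
    (fun q hq hle => (hK q hq hle).trans_lt (by exact_mod_cast (by omega : e < e + 1)))
  rw [isSMulRegular_quotient_iff_mem_of_smul_mem] at hx
  simp only [smul_eq_mul] at hx
  have hy' : ∀ g : A, y * g ∈ F ⊔ Ideal.span {x} → g ∈ F ⊔ Ideal.span {x} := by
    rw [isSMulRegular_quotient_iff_mem_of_smul_mem] at hy
    have key : ∀ g : A, (Submodule.Quotient.mk g : A ⧸ F) ∈ (x • ⊤ : Submodule A (A ⧸ F)) ↔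
        g ∈ F ⊔ Ideal.span {x} := by
      intro g
      rw [Submodule.mem_sup]
      constructor
      · rintro ⟨w, -, hw⟩
        obtain ⟨w, rfl⟩ := Submodule.Quotient.mk_surjective _ w
        change (Submodule.Quotient.mk (x • w) : A ⧸ F) = _ at hw
        rw [Submodule.Quotient.eq] at hw
        refine ⟨g - x * w, ?_, x * w, Ideal.mem_span_singleton.mpr ⟨w, rfl⟩, by ring⟩
        rw [← neg_mem_iff]
        simpa using! hw
      · rintro ⟨f, hf, z, hz, rfl⟩
        obtain ⟨w, rfl⟩ := Ideal.mem_span_singleton.mp hz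
        refine ⟨Submodule.Quotient.mk w, trivial, ?_⟩
        change (Submodule.Quotient.mk (x • w) : A ⧸ F) = _
        rw [Submodule.Quotient.eq, ← neg_mem_iff]
        simpa using hf
    intro g hg
    rw [← key] at hg ⊢
    exact hy _ hg
  obtain ⟨a, ha, b, hb, rfl⟩ := Submodule.mem_sup.mp hxK
  obtain ⟨a', ha', b', hb', rfl⟩ := Submodule.mem_sup.mp hyK
  have hmul : ∀ {s t}, s ∈ I → t ∈ J → s * t ∈ F := fun hs ht => hIJ (Ideal.mul_mem_mul hs ht)
  have h1 : a ∈ F ⊔ Ideal.span {a + b} := by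
    apply hy'
    rw [Submodule.mem_sup]
    refine ⟨a * b' - a' * b, sub_mem (hmul ha hb') (hmul ha' hb), (a + b) * a',
      Ideal.mem_span_singleton.mpr ⟨a', rfl⟩, by ring⟩
  obtain ⟨g, hg, z, hz, hgz⟩ := Submodule.mem_sup.mp h1
  obtain ⟨ε, rfl⟩ := Ideal.mem_span_singleton.mp hz
  -- a = g + (a+b) ε
  have h2 : ε * (1 - ε) ∈ F := by
    apply hx; apply hx
    have : (a + b) * ((a + b) * (ε * (1 - ε))) = (a - g) * (b + g) := by
      have e1 : (a + b) * ε = a - g := by linear_combination hgz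
      have e2 : (a + b) * (1 - ε) = b + g := by rw [mul_sub, e1]; ring
      calc _ = ((a + b) * ε) * ((a + b) * (1 - ε)) := by ring
        _ = _ := by rw [e1, e2]
    rw [this, show (a - g) * (b + g) = a * b + (a - b - g) * g by ring]
    exact add_mem (hmul ha hb) (F.mul_mem_left _ hg)
  rcases isUnit_or_isUnit_one_sub_self ε with hu | hu
  · -- 1 - ε ∈ F, so b ∈ F
    have h3 : 1 - ε ∈ F := (Ideal.unit_mul_mem_iff_mem F hu).mp h2
    have hbF : b ∈ F := by
      have : b = (a + b) * (1 - ε) - g := by rw [mul_sub, mul_one]; linear_combination hgz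
      rw [this]
      exact sub_mem (F.mul_mem_left _ h3) hg
    right
    intro t ht
    apply hx
    rw [add_mul]
    exact add_mem (hmul ha ht) (F.mul_mem_right _ hbF)
  · have h3 : ε ∈ F := by
      rw [mul_comm] at h2
      exact (Ideal.unit_mul_mem_iff_mem F hu).mp h2
    have haF : a ∈ F := by
      rw [← hgz]
      exact add_mem hg (F.mul_mem_left _ h3)
    left
    intro t ht
    apply hx
    rw [add_mul]
    refine add_mem (F.mul_mem_right _ haF) ?_
    rw [mul_comm]
    exact hmul ht hb

end ModulePart

section RLR

open RingTheory.Sequence IsLocalRing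
open scoped Pointwise

lemma exists_prime_dim {A : Type} [CommRing A] {d : ℕ} (h : (d : WithBot ℕ∞) ≤ ringKrullDim A) :
    ∃ p : Ideal A, p.IsPrime ∧ (d : WithBot ℕ∞) ≤ ringKrullDim (A ⧸ p) := by
  obtain ⟨l, hl⟩ := Order.le_krullDim_iff.mp h
  refine ⟨l.head.asIdeal, l.head.2, ?_⟩
  rw [ringKrullDim_quotient]
  rw [Order.le_krullDim_iff]
  refine ⟨⟨l.length, fun i => ⟨l i, ?_⟩, fun i => l.step i⟩, hl⟩
  exact l.head_le i

lemma wb_cancel {a : WithBot ℕ∞} {d : ℕ} (h : ((d + 1 : ℕ) : WithBot ℕ∞) ≤ a + 1) :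
    (d : WithBot ℕ∞) ≤ a := by
  rw [Nat.cast_add, Nat.cast_one] at h
  induction a using WithBot.recBotCoe with
  | bot => simp at h
  | coe a =>
    have h' : ((d : ℕ∞) : WithBot ℕ∞) + ((1 : ℕ∞) : WithBot ℕ∞) ≤ (a : WithBot ℕ∞) + ((1 : ℕ∞) : WithBot ℕ∞) := h
    rw [← WithBot.coe_add, ← WithBot.coe_add, WithBot.coe_le_coe] at h'
    have := (ENat.add_le_add_iff_right (by simp)).mp h'
    exact WithBot.coe_le_coe.mpr this

lemma dim_le_gens {A : Type} [CommRing A] [IsLocalRing A] [IsNoetherianRing A] {d : ℕ}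
    (g : Fin d → A) (hg : Ideal.span (Set.range g) = maximalIdeal A) : ringKrullDim A ≤ d := by
  refine (ringKrullDim_le_spanFinrank_maximalIdeal A).trans ?_
  rw [← hg]
  have h1 := Submodule.spanFinrank_span_le_ncard_of_finite (R := A) (Set.finite_range g)
  have h2 : (Set.range g).ncard ≤ d := by
    rw [← Set.image_univ]
    refine (Set.ncard_image_le Set.finite_univ).trans ?_
    simp [Set.ncard_univ]
  exact_mod_cast h1.trans h2

lemma dim_quot_one {B : Type} [CommRing B] [IsLocalRing B] [IsNoetherianRing B] {x : B}
    (hx : x ∈ maximalIdeal B) : ringKrullDim B ≤ ringKrullDim (B ⧸ Ideal.span {x}) + 1 := by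
  have h := ringKrullDim_le_ringKrullDim_quotient_add_encard ({x} : Set B) (by
    rw [IsLocalRing.ringJacobson_eq_maximalIdeal]; simpa using hx)
  simpa using h

lemma rlr (d : ℕ) : ∀ (A : Type) [CommRing A] [IsLocalRing A] [IsNoetherianRing A]
    (g : Fin d → A) (_ : Ideal.span (Set.range g) = maximalIdeal A)
    (_ : (d : WithBot ℕ∞) ≤ ringKrullDim A), IsDomain A ∧ DepthGE A d A := by
  induction d with
  | zero =>
    intro A _ _ _ g hg _
    have hm : maximalIdeal A = ⊥ := by rw [← hg]; simp
    have hF : IsField A := IsLocalRing.isField_iff_maximalIdeal_eq.mpr hm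
    refine ⟨hF.isDomain, [], rfl, by simp, IsRegular.nil _ _⟩
  | succ d ih =>
    intro A _ _ _ g hg hdim
    have hgm : ∀ i, g i ∈ maximalIdeal A := fun i => hg ▸ Ideal.subset_span ⟨i, rfl⟩
    set x := g 0 with hx
    have hxm : x ∈ maximalIdeal A := hgm 0
    have hne : Ideal.span {x} ≠ ⊤ := by
      intro h
      have : Ideal.span {x} ≤ maximalIdeal A := by simpa [Ideal.span_le] using hxm
      rw [h] at this
      exact (maximalIdeal.isMaximal A).ne_top (top_le_iff.mp this)
    let A' := A ⧸ Ideal.span {x}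
    have : Nontrivial A' := Ideal.Quotient.nontrivial_iff.mpr hne
    have hloc : IsLocalRing A' :=
      IsLocalRing.of_surjective' (Ideal.Quotient.mk _) Ideal.Quotient.mk_surjective
    let π : A →+* A' := Ideal.Quotient.mk _
    have hπ : Function.Surjective π := Ideal.Quotient.mk_surjective
    have hmax : (maximalIdeal A).map π = maximalIdeal A' := by
      have h1 : ((maximalIdeal A).map π).IsMaximal := by
        refine Ideal.IsMaximal.map_of_surjective_of_ker_le hπ ?_
        rw [Ideal.mk_ker]
        simpa [Ideal.span_le] using hxm
      exact IsLocalRing.eq_maximalIdeal h1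
    let g' : Fin d → A' := fun i => π (g i.succ)
    have hg' : Ideal.span (Set.range g') = maximalIdeal A' := by
      rw [← hmax, ← hg, Ideal.map_span]
      apply le_antisymm
      · refine Ideal.span_mono ?_
        rintro _ ⟨i, rfl⟩
        exact ⟨_, ⟨i.succ, rfl⟩, rfl⟩
      · rw [Ideal.span_le]
        rintro _ ⟨_, ⟨i, rfl⟩, rfl⟩
        refine Fin.cases ?_ (fun i => ?_) i
        · have : π (g 0) = 0 := Ideal.Quotient.eq_zero_iff_mem.mpr (Ideal.mem_span_singleton_self _)
          rw [this]
          exact zero_mem _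
        · exact Ideal.subset_span ⟨i, rfl⟩
    have hdim' : (d : WithBot ℕ∞) ≤ ringKrullDim A' := by
      have h1 := dim_quot_one hxm
      exact wb_cancel (hdim.trans h1)
    obtain ⟨hdom, hdep⟩ := ih A' g' hg' hdim'
    have hle := dim_le_gens g' hg'
    obtain ⟨p, hp, hpd⟩ := exists_prime_dim hdim
    have hxp : x ∉ p := by
      intro hxp
      have h1 : ringKrullDim (A ⧸ p) ≤ ringKrullDim A' :=
        ringKrullDim_le_of_surjective (Ideal.Quotient.factor (by simpa [Ideal.span_le] using hxp))
          (Ideal.Quotient.factor_surjective _)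
      have h2 : ((d + 1 : ℕ) : WithBot ℕ∞) ≤ d := (hpd.trans h1).trans hle
      have h3 : d + 1 ≤ d := by exact_mod_cast h2
      omega
    have hpx : p ≤ Ideal.span {x} := by
      intro z hz
      by_contra hzx
      have hz0 : π z ≠ 0 := fun h => hzx (Ideal.Quotient.eq_zero_iff_mem.mp h)
      have h1 := ringKrullDim_quotient_succ_le_of_nonZeroDivisor
        (mem_nonZeroDivisors_of_ne_zero hz0)
      have : Nontrivial (A ⧸ p) := Ideal.Quotient.nontrivial_iff.mpr hp.ne_top
      have hlocp : IsLocalRing (A ⧸ p) :=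
        IsLocalRing.of_surjective' (Ideal.Quotient.mk _) Ideal.Quotient.mk_surjective
      let ρ : A →+* A ⧸ p := Ideal.Quotient.mk _
      have hxρ : ρ x ∈ maximalIdeal (A ⧸ p) := by
        rw [mem_maximalIdeal, mem_nonunits_iff]
        intro hu
        obtain ⟨y, hy⟩ := hu.exists_right_inv
        obtain ⟨y, rfl⟩ := Ideal.Quotient.mk_surjective y
        have h5 : x * y - 1 ∈ p := by
          rw [← Ideal.Quotient.eq_zero_iff_mem, map_sub, map_mul, map_one]
          exact sub_eq_zero.mpr hy
        have h6 := le_maximalIdeal hp.ne_top h5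
        have h7 : (1 : A) ∈ maximalIdeal A := by
          have := sub_mem (Ideal.mul_mem_right y _ hxm) h6
          simpa using this
        exact (Ideal.ne_top_iff_one _).mp (maximalIdeal.isMaximal A).ne_top h7
      have h2 := dim_quot_one hxρ
      let φ : A →+* (A ⧸ p) ⧸ Ideal.span {ρ x} := (Ideal.Quotient.mk _).comp ρ
      have hφ : Function.Surjective φ :=
        Ideal.Quotient.mk_surjective.comp Ideal.Quotient.mk_surjective
      let φ' : A' →+* (A ⧸ p) ⧸ Ideal.span {ρ x} := Ideal.Quotient.lift _ φ (by
        intro a ha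
        obtain ⟨b, rfl⟩ := Ideal.mem_span_singleton.mp ha
        refine Ideal.Quotient.eq_zero_iff_mem.mpr ?_
        rw [map_mul]
        exact Ideal.mul_mem_right _ _ (Ideal.mem_span_singleton_self _))
      let φ'' : A' ⧸ Ideal.span {π z} →+* (A ⧸ p) ⧸ Ideal.span {ρ x} :=
        Ideal.Quotient.lift _ φ' (by
        intro a ha
        obtain ⟨b, rfl⟩ := Ideal.mem_span_singleton.mp ha
        have : φ' (π z) = 0 := by
          change Ideal.Quotient.mk _ (ρ z) = 0
          have : ρ z = 0 := Ideal.Quotient.eq_zero_iff_mem.mpr hz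
          rw [this, map_zero]
        rw [map_mul, this, zero_mul])
      have hφ'' : Function.Surjective φ'' := by
        intro y
        obtain ⟨a, rfl⟩ := hφ y
        exact ⟨Ideal.Quotient.mk _ (π a), rfl⟩
      have h3 := ringKrullDim_le_of_surjective φ'' hφ''
      have h4 : ((d + 1 : ℕ) : WithBot ℕ∞) ≤ d :=
        hpd.trans (h2.trans ((add_le_add_left h3 1).trans (h1.trans hle)))
      have h5 : d + 1 ≤ d := by exact_mod_cast h4
      omega
    have hp0 : p = ⊥ := by
      refine Submodule.eq_bot_of_le_smul_of_le_jacobson_bot (maximalIdeal A) p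
        (IsNoetherian.noetherian p) ?_ (maximalIdeal_le_jacobson _)
      intro z hz
      obtain ⟨w, rfl⟩ := Ideal.mem_span_singleton.mp (hpx hz)
      exact Submodule.smul_mem_smul hxm ((hp.mem_or_mem hz).resolve_left hxp)
    have hAdom : IsDomain A := by
      rw [hp0] at hp
      exact by
        have := hp
        exact @IsDomain.of_bot_isPrime A _ hp
    refine ⟨hAdom, ?_⟩
    have hx0 : x ≠ 0 := fun h => hxp (h ▸ zero_mem _)
    have hreg : IsSMulRegular A x := IsSMulRegular.of_ne_zero hx0
    obtain ⟨rs, hl, hm, hr⟩ := hdep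
    obtain ⟨rs, rfl⟩ := List.map_surjective_iff.mpr hπ rs
    have hrs : ∀ r ∈ rs, r ∈ maximalIdeal A := by
      intro r hr
      have h1 := hm (π r) (List.mem_map_of_mem hr)
      by_contra hcon
      have : IsUnit r := by simpa using hcon
      exact (mem_maximalIdeal _).mp h1 (this.map π)
    have h1 : IsWeaklyRegular A' rs :=
      (isWeaklyRegular_map_algebraMap_iff (R := A) (S := A') A' rs).mp hr.toIsWeaklyRegular
    have hsp : Ideal.span {x} = x • (⊤ : Ideal A) := by
      simp [← Submodule.ideal_span_singleton_smul]
    have h2 : IsWeaklyRegular (QuotSMulTop x A) rs :=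
      ((Submodule.quotEquivOfEq _ _ hsp).isWeaklyRegular_congr rs).mp h1
    have hall : ∀ r ∈ x :: rs, r ∈ maximalIdeal A := by
      intro r hr
      rcases List.mem_cons.mp hr with rfl | hr
      · exact hxm
      · exact hrs r hr
    refine ⟨x :: rs, by simpa using hl, hall, ?_⟩
    exact IsRegular.of_isWeaklyRegular_of_mem_maximalIdeal _ hall (IsWeaklyRegular.cons hreg h2)

end RLR

section Geom1

open IsLocalRing

/-- the maximal ideal of a point -/
abbrev ptI {N : ℕ} (x : Fin N → ℂ) : Ideal (MvPolynomial (Fin N) ℂ) := vanishingIdeal ℂ {x}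

lemma mem_ptI {N : ℕ} (x : Fin N → ℂ) (p : MvPolynomial (Fin N) ℂ) :
    p ∈ ptI x ↔ eval x p = 0 := by
  rw [mem_vanishingIdeal_singleton_iff, MvPolynomial.aeval_eq_eval]

instance ptI_max {N : ℕ} (x : Fin N → ℂ) : (ptI x).IsMaximal :=
  isMaximal_iff_eq_vanishingIdeal_singleton.mpr ⟨x, rfl⟩

instance ptI_prime {N : ℕ} (x : Fin N → ℂ) : (ptI x).IsPrime := (ptI_max x).isPrime

lemma ptI_height {N : ℕ} (x : Fin N → ℂ) :
    (N : WithBot ℕ∞) ≤ ((ptI x).height : WithBot ℕ∞) := by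
  have h1 : ringKrullDim (MvPolynomial (Fin N) ℂ) = N := by
    rw [MvPolynomial.ringKrullDim_of_isNoetherianRing]
    simp [ringKrullDim_eq_zero_of_field]
  rw [← h1, ringKrullDim_le_iff_isMaximal_height_le]
  intro m hm
  obtain ⟨y, rfl⟩ := isMaximal_iff_eq_vanishingIdeal_singleton.mp hm
  have h2 : ∀ a b : Fin N → ℂ, (aeval (fun i => X i + C (a i - b i)) :
      MvPolynomial (Fin N) ℂ →ₐ[ℂ] MvPolynomial (Fin N) ℂ).comp
      (aeval (fun i => X i + C (b i - a i))) = AlgHom.id ℂ _ := by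
    intro a b
    ext i
    simp [MvPolynomial.algHom_C]
    ring
  let e : MvPolynomial (Fin N) ℂ ≃ₐ[ℂ] MvPolynomial (Fin N) ℂ :=
    AlgEquiv.ofAlgHom _ _ (h2 y x) (h2 x y)
  have h3 : Ideal.comap e.toRingEquiv (ptI x) = ptI y := by
    ext p
    rw [Ideal.mem_comap, mem_ptI, mem_ptI]
    have : eval x (e p) = eval y p := by
      change eval x (aeval (fun i => X i + C (y i - x i)) p) = _
      have : ((MvPolynomial.aeval x : MvPolynomial (Fin N) ℂ →ₐ[ℂ] ℂ).comp
        (aeval (fun i => X i + C (y i - x i)))) = MvPolynomial.aeval y := by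
        ext i
        simp
      have h := DFunLike.congr_fun this p
      simpa [MvPolynomial.aeval_eq_eval] using h
    exact (congrArg (· = 0) this).to_iff
  have h4 := RingEquiv.height_comap e.toRingEquiv (ptI x)
  rw [h3] at h4
  rw [← h4]

lemma loc_dim {N : ℕ} (x : Fin N → ℂ) :
    (N : WithBot ℕ∞) ≤ ringKrullDim (Localization.AtPrime (ptI x)) := by
  rw [IsLocalization.AtPrime.ringKrullDim_eq_height (ptI x)]
  exact ptI_height x

lemma taylor2 {N : ℕ} (x : Fin N → ℂ) (p : MvPolynomial (Fin N) ℂ) :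
    p - C (eval x p) - ∑ j, C (eval x (pderiv j p)) * (X j - C (x j)) ∈ (ptI x) ^ 2 := by
  have hY : ∀ j, (X j - C (x j) : MvPolynomial (Fin N) ℂ) ∈ ptI x := fun j => by
    simp [mem_ptI]
  induction p using MvPolynomial.induction_on with
  | C a => simp
  | add p q hp hq =>
    have := add_mem hp hq
    convert this using 1
    simp only [map_add, add_mul, Finset.sum_add_distrib]
    ring
  | mul_X p i hp =>
    set L := ∑ j, C (eval x (pderiv j p)) * (X j - C (x j) : MvPolynomial (Fin N) ℂ) with hL
    have hLm : L ∈ ptI x := Ideal.sum_mem _ fun j _ => Ideal.mul_mem_left _ _ (hY j)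
    have h1 := Ideal.mul_mem_right (X i) _ hp
    have h2 : L * (X i - C (x i)) ∈ (ptI x) ^ 2 := by
      rw [pow_two]; exact Ideal.mul_mem_mul hLm (hY i)
    convert add_mem h1 h2 using 1
    have : ∑ j, C (eval x (pderiv j (p * X i))) * (X j - C (x j) : MvPolynomial (Fin N) ℂ)
        = C (x i) * L + C (eval x p) * (X i - C (x i)) := by
      rw [hL, Finset.mul_sum]
      have : ∀ j, C (eval x (pderiv j (p * X i))) * (X j - C (x j) : MvPolynomial (Fin N) ℂ)
        = C (x i) * (C (eval x (pderiv j p)) * (X j - C (x j))) +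
          (if j = i then C (eval x p) * (X i - C (x i)) else 0) := by
        intro j
        rw [Derivation.leibniz, pderiv_X]
        by_cases h : j = i
        · subst h
          simp
          ring
        · simp [h, Pi.single_apply, Ne.symm h]
          ring
      simp_rw [this, Finset.sum_add_distrib]
      simp
    rw [this]
    simp only [map_mul, eval_X]
    ring

lemma ptI_span {N : ℕ} (x : Fin N → ℂ) :
    ptI x = Ideal.span (Set.range fun j => (X j - C (x j) : MvPolynomial (Fin N) ℂ)) := by
  apply le_antisymm
  · intro p hp
    rw [mem_ptI] at hp
    have key : ∀ p : MvPolynomial (Fin N) ℂ, p - C (eval x p) ∈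
        Ideal.span (Set.range fun j => (X j - C (x j) : MvPolynomial (Fin N) ℂ)) := by
      intro p
      induction p using MvPolynomial.induction_on with
      | C a => simp
      | add p q hp hq =>
        have := add_mem hp hq
        convert this using 1
        simp only [map_add]; ring
      | mul_X p i hp =>
        have h1 := Ideal.mul_mem_right (X i) _ hp
        have h2 := Ideal.mul_mem_left (Ideal.span (Set.range fun j =>
          (X j - C (x j) : MvPolynomial (Fin N) ℂ))) (C (eval x p)) (Ideal.subset_span ⟨i, rfl⟩)
        convert add_mem h1 h2 using 1
        simp only [map_mul, eval_X]; ring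
    have := key p
    simpa [hp] using this
  · rw [Ideal.span_le]
    rintro _ ⟨j, rfl⟩
    simp [mem_ptI]

lemma loc_max_span {N : ℕ} (x : Fin N → ℂ) :
    Ideal.span (Set.range fun j => algebraMap (MvPolynomial (Fin N) ℂ)
      (Localization.AtPrime (ptI x)) (X j - C (x j))) =
      maximalIdeal (Localization.AtPrime (ptI x)) := by
  rw [← Localization.AtPrime.map_eq_maximalIdeal]
  refine Eq.trans ?_ (congrArg (Ideal.map (algebraMap (MvPolynomial (Fin N) ℂ)
      (Localization.AtPrime (ptI x)))) (ptI_span x)).symm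
  rw [Ideal.map_span, ← Set.range_comp]
  rfl

lemma origin_depth {N : ℕ} (x : Fin N → ℂ) :
    DepthGE (Localization.AtPrime (ptI x)) N (Localization.AtPrime (ptI x)) :=
  (rlr N _ _ (loc_max_span x) (loc_dim x)).2


lemma matrix_compl {c N k : ℕ} (hck : N = c + k) (J : Matrix (Fin c) (Fin N) ℂ)
    (hJ : Function.Surjective J.mulVecLin) :
    ∃ (U : Matrix (Fin N) (Fin c) ℂ) (V : Matrix (Fin N) (Fin k) ℂ)
      (T : Matrix (Fin k) (Fin N) ℂ), U * J + V * T = 1 := by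
  obtain ⟨u, hu⟩ := J.mulVecLin.exists_rightInverse_of_surjective (LinearMap.range_eq_top.mpr hJ)
  have hk : Module.finrank ℂ (LinearMap.ker J.mulVecLin) = k := by
    have := J.mulVecLin.finrank_range_add_finrank_ker
    rw [LinearMap.range_eq_top.mpr hJ, finrank_top] at this
    simp at this
    omega
  let e : LinearMap.ker J.mulVecLin ≃ₗ[ℂ] (Fin k → ℂ) :=
    LinearEquiv.ofFinrankEq _ _ (by simp [hk])
  let π : (Fin N → ℂ) →ₗ[ℂ] LinearMap.ker J.mulVecLin :=
    LinearMap.codRestrict _ (LinearMap.id - u ∘ₗ J.mulVecLin) (fun v => by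
      have := DFunLike.congr_fun hu (J.mulVecLin v)
      rw [LinearMap.mem_ker, LinearMap.sub_apply, map_sub]
      simp only [LinearMap.comp_apply, LinearMap.id_apply] at this ⊢
      rw [this, sub_self])
  refine ⟨LinearMap.toMatrix' u, LinearMap.toMatrix' ((Submodule.subtype _) ∘ₗ e.symm.toLinearMap),
    LinearMap.toMatrix' (e.toLinearMap ∘ₗ π), ?_⟩
  have hJ' : J = LinearMap.toMatrix' J.mulVecLin := by simp [← Matrix.toLin'_apply']
  have hJ2 : LinearMap.toMatrix' u * J = LinearMap.toMatrix' (u ∘ₗ J.mulVecLin) := by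
    rw [LinearMap.toMatrix'_comp, ← hJ']
  rw [← LinearMap.toMatrix'_comp, hJ2, ← map_add, ← LinearMap.toMatrix'_id]
  congr 1
  ext v
  simp [π]

lemma smooth_domain {n r : ℕ} (hrn : r ≤ n) (f : Fin (n - r) → MvPolynomial (Fin (n + 1)) ℂ)
    (x : Fin (n + 1) → ℂ) (hx : ∀ i, eval x (f i) = 0)
    (hJ : Function.Surjective (Matrix.mulVecLin
        (fun (i : Fin (n - r)) (j : Fin (n + 1)) => eval x (pderiv j (f i))))) :
    ((Ideal.span (Set.range f)).map (algebraMap _ (Localization.AtPrime (ptI x)))).IsPrime := by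
  set B := Localization.AtPrime (ptI x)
  let φ : MvPolynomial (Fin (n + 1)) ℂ →+* B := algebraMap _ B
  obtain ⟨U, V, T, hUVT⟩ := matrix_compl (k := r + 1) (by omega) _ hJ
  set J : Matrix (Fin (n - r)) (Fin (n + 1)) ℂ := fun i j => eval x (pderiv j (f i)) with hJdef
  let Y : Fin (n + 1) → MvPolynomial (Fin (n + 1)) ℂ := fun j => X j - C (x j)
  let l : Fin (r + 1) → MvPolynomial (Fin (n + 1)) ℂ := fun k => ∑ j, C (T k j) * Y j
  set I : Ideal B := (Ideal.span (Set.range f)).map φ with hI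
  have hIm : I ≤ maximalIdeal B := by
    rw [← Localization.AtPrime.map_eq_maximalIdeal]
    apply Ideal.map_mono
    rw [Ideal.span_le]
    rintro _ ⟨i, rfl⟩
    exact (mem_ptI x _).mpr (hx i)
  have hlm : ∀ k, φ (l k) ∈ maximalIdeal B := by
    intro k
    rw [← Localization.AtPrime.map_eq_maximalIdeal]
    apply Ideal.mem_map_of_mem
    exact Ideal.sum_mem _ fun j _ => Ideal.mul_mem_left _ _ ((mem_ptI x _).mpr (by simp [Y]))
  let L : Ideal B := Ideal.span (Set.range fun k => φ (l k))
  have hYmem : ∀ j, φ (Y j) ∈ I ⊔ L ⊔ maximalIdeal B • maximalIdeal B := by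
    intro j
    have e1 : Y j = ∑ i, C (U j i) * (∑ j', C (J i j') * Y j') + ∑ k, C (V j k) * l k := by
      have h2 : ∀ j', (∑ i, U j i * J i j') + ∑ k, V j k * T k j' = if j = j' then 1 else 0 := by
        intro j'
        have := congrFun (congrFun hUVT j) j'
        rw [Matrix.add_apply, Matrix.mul_apply, Matrix.mul_apply, Matrix.one_apply] at this
        exact this
      have : ∑ j', C ((∑ i, U j i * J i j') + ∑ k, V j k * T k j') * Y j' = Y j := by
        simp_rw [h2]
        simp
      rw [← this]
      simp only [l, map_add, map_sum, map_mul, add_mul, Finset.sum_add_distrib, Finset.sum_mul,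
        Finset.mul_sum]
      congr 1
      · rw [Finset.sum_comm]
        simp only [mul_assoc]
      · rw [Finset.sum_comm]
        simp only [mul_assoc]
    rw [e1, map_add, map_sum, map_sum]
    refine add_mem (Ideal.sum_mem _ fun i _ => ?_) (Ideal.sum_mem _ fun k _ => ?_)
    · rw [map_mul]
      apply Ideal.mul_mem_left
      have h1 := taylor2 x (f i)
      rw [hx i, C_0, sub_zero] at h1
      have h2 : φ (f i - ∑ j', C (J i j') * Y j') ∈ maximalIdeal B • maximalIdeal B := by
        rw [smul_eq_mul, ← pow_two, ← Localization.AtPrime.map_eq_maximalIdeal, ← Ideal.map_pow]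
        exact Ideal.mem_map_of_mem _ h1
      have h3 : φ (f i) ∈ I := Ideal.mem_map_of_mem _ (Ideal.subset_span ⟨i, rfl⟩)
      have : φ (∑ j', C (J i j') * Y j') = φ (f i) - φ (f i - ∑ j', C (J i j') * Y j') := by
        rw [map_sub]; ring
      rw [this]
      exact sub_mem (Ideal.mem_sup_left (Ideal.mem_sup_left h3)) (Ideal.mem_sup_right h2)
    · rw [map_mul]
      apply Ideal.mul_mem_left
      exact Ideal.mem_sup_left (Ideal.mem_sup_right (Ideal.subset_span ⟨k, rfl⟩))
  have hmax : maximalIdeal B ≤ I ⊔ L := by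
    apply Submodule.le_of_le_smul_of_le_jacobson_bot (I := maximalIdeal B)
      (IsNoetherian.noetherian _) (maximalIdeal_le_jacobson _)
    conv_lhs => rw [← loc_max_span x]
    rw [Ideal.span_le]
    rintro _ ⟨j, rfl⟩
    exact hYmem j
  have hIne : I ≠ ⊤ := fun h => (maximalIdeal.isMaximal B).ne_top (top_le_iff.mp (h ▸ hIm))
  have : Nontrivial (B ⧸ I) := Ideal.Quotient.nontrivial_iff.mpr hIne
  have : IsLocalRing (B ⧸ I) :=
    IsLocalRing.of_surjective' (Ideal.Quotient.mk I) Ideal.Quotient.mk_surjective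
  have hmq : Ideal.span (Set.range fun k => Ideal.Quotient.mk I (φ (l k))) =
      maximalIdeal (B ⧸ I) := by
    have h1 : (maximalIdeal B).map (Ideal.Quotient.mk I) = maximalIdeal (B ⧸ I) :=
      IsLocalRing.map_maximalIdeal_of_surjective _ Ideal.Quotient.mk_surjective
    have h2 : L.map (Ideal.Quotient.mk I) =
        Ideal.span (Set.range fun k => Ideal.Quotient.mk I (φ (l k))) := by
      rw [Ideal.map_span, ← Set.range_comp]; rfl
    rw [← h2, ← h1]
    apply le_antisymm
    · apply Ideal.map_mono
      rw [Ideal.span_le]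
      rintro _ ⟨k, rfl⟩
      exact hlm k
    · refine (Ideal.map_mono hmax).trans ?_
      rw [Ideal.map_sup, Ideal.map_quotient_self, bot_sup_eq]
  have hdim : ((r + 1 : ℕ) : WithBot ℕ∞) ≤ ringKrullDim (B ⧸ I) := by
    have hI2 : I = Ideal.span (Set.range (φ ∘ f)) := by
      rw [hI, Ideal.map_span, ← Set.range_comp]
    have h1 := ringKrullDim_le_ringKrullDim_quotient_add_encard (Set.range (φ ∘ f)) (by
      rw [IsLocalRing.ringJacobson_eq_maximalIdeal]
      rintro _ ⟨i, rfl⟩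
      exact hIm (Ideal.mem_map_of_mem _ (Ideal.subset_span ⟨i, rfl⟩)))
    rw [← hI2] at h1
    have h2 : (Set.range (φ ∘ f)).encard ≤ ((n - r : ℕ) : ℕ∞) := by
      rw [← Set.image_univ]
      refine (Set.encard_image_le _ _).trans ?_
      simp
    have h3 := (loc_dim x).trans (h1.trans (add_le_add_right (WithBot.coe_le_coe.mpr h2) _))
    have h4 : ∀ (k : ℕ) (a : WithBot ℕ∞), ((r + 1 + k : ℕ) : WithBot ℕ∞) ≤ a + (k : ℕ) →
        ((r + 1 : ℕ) : WithBot ℕ∞) ≤ a := by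
      intro k
      induction k with
      | zero => intro a h; simpa using h
      | succ k ih =>
        intro a h
        apply ih
        apply wb_cancel
        rw [add_assoc (r + 1), add_assoc a, ← Nat.cast_one (R := WithBot ℕ∞), ← Nat.cast_add]
        exact h
    apply h4 (n - r)
    have : r + 1 + (n - r) = n + 1 := by omega
    rw [this]
    exact h3
  obtain ⟨hdom, -⟩ := rlr (r + 1) (B ⧸ I) _ hmq hdim
  exact (Ideal.Quotient.isDomain_iff_prime I).mp hdom

lemma smooth_unique {n r : ℕ} (hrn : r ≤ n) (f : Fin (n - r) → MvPolynomial (Fin (n + 1)) ℂ)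
    (x : Fin (n + 1) → ℂ) (hx : ∀ i, eval x (f i) = 0)
    (hJ : Function.Surjective (Matrix.mulVecLin
        (fun (i : Fin (n - r)) (j : Fin (n + 1)) => eval x (pderiv j (f i)))))
    {p : Ideal (MvPolynomial (Fin (n + 1)) ℂ)} (hp : p ∈ (Ideal.span (Set.range f)).minimalPrimes)
    (hpx : p ≤ ptI x) :
    p = ((Ideal.span (Set.range f)).map (algebraMap _ (Localization.AtPrime (ptI x)))).comap
      (algebraMap _ (Localization.AtPrime (ptI x))) := by
  have hpr := smooth_domain hrn f x hx hJ
  have hpp : p.IsPrime := hp.1.1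
  apply le_antisymm
  · apply hp.2 ⟨Ideal.IsPrime.comap _, Ideal.le_comap_map⟩
    have : (p.map (algebraMap _ (Localization.AtPrime (ptI x)))).comap
      (algebraMap _ (Localization.AtPrime (ptI x))) = p :=
      IsLocalization.under_map_of_isPrime_disjoint (ptI x).primeCompl _ hpp
        (Set.disjoint_left.mpr fun a ha hb => ha (hpx hb))
    conv_rhs => rw [← this]
    exact Ideal.comap_mono (Ideal.map_mono hp.1.2)
  · have : (p.map (algebraMap _ (Localization.AtPrime (ptI x)))).comap
      (algebraMap _ (Localization.AtPrime (ptI x))) = p :=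
      IsLocalization.under_map_of_isPrime_disjoint (ptI x).primeCompl _ hpp
        (Set.disjoint_left.mpr fun a ha hb => ha (hpx hb))
    conv_rhs => rw [← this]
    exact Ideal.comap_mono (Ideal.map_mono hp.1.2)

end Geom1

section Geom2

open IsLocalRing

lemma isAlgSet_zeroLocus {N : ℕ} (I : Ideal (MvPolynomial (Fin N) ℂ)) :
    IsAlgSet (zeroLocus ℂ I) := by
  refine ⟨I, ?_⟩
  ext x
  simp [mem_zeroLocus_iff, MvPolynomial.aeval_eq_eval]

lemma algIrr_zeroLocus {N : ℕ} (P : Ideal (MvPolynomial (Fin N) ℂ)) (hP : P.IsPrime) :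
    AlgIrreducible (zeroLocus ℂ P) := by
  have hV : vanishingIdeal ℂ (zeroLocus ℂ P) = P := IsPrime.vanishingIdeal_zeroLocus P
  constructor
  · rw [Set.nonempty_iff_ne_empty]
    intro h
    rw [h, vanishingIdeal_empty] at hV
    exact hP.ne_top hV.symm
  · rintro _ _ ⟨TA, rfl⟩ ⟨TB, rfl⟩ hAB
    by_contra! hcon
    obtain ⟨h1, h2⟩ := hcon
    obtain ⟨a, haZ, ha⟩ := Set.not_subset.mp h1
    obtain ⟨b, hbZ, hb⟩ := Set.not_subset.mp h2
    simp only [Set.mem_setOf_eq, not_forall] at ha hb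
    obtain ⟨p, hp, hpa⟩ := ha
    obtain ⟨q, hq, hqb⟩ := hb
    have hpq : p * q ∈ P := by
      rw [← hV, mem_vanishingIdeal_iff]
      intro x hx
      rw [MvPolynomial.aeval_eq_eval, map_mul]
      rcases hAB hx with h | h
      · simp [h p hp]
      · simp [h q hq]
    rcases hP.mem_or_mem hpq with h | h
    · exact hpa (by simpa [MvPolynomial.aeval_eq_eval] using haZ p h)
    · exact hqb (by simpa [MvPolynomial.aeval_eq_eval] using hbZ q h)

lemma dim_loc {N : ℕ} (x : Fin N → ℂ) (q : Ideal (Localization.AtPrime (ptI x)))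
    (W : Set (Fin N → ℂ))
    (hW : zeroLocus ℂ (q.comap (algebraMap (MvPolynomial (Fin N) ℂ) _)) ⊆ W) :
    Module.supportDim (Localization.AtPrime (ptI x)) (Localization.AtPrime (ptI x) ⧸ q)
      ≤ algDim W := by
  rw [Module.supportDim_quotient_eq_ringKrullDim, ringKrullDim_quotient, algDim,
    ← Order.krullDim_orderDual (α := {T : Set (Fin N → ℂ) // _})]
  let c : Ideal (Localization.AtPrime (ptI x)) → Ideal (MvPolynomial (Fin N) ℂ) :=
    fun I => I.comap (algebraMap (MvPolynomial (Fin N) ℂ) _)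
  have hc : ∀ P : PrimeSpectrum (Localization.AtPrime (ptI x)), (c P.asIdeal).IsPrime :=
    fun P => Ideal.IsPrime.comap _
  refine Order.krullDim_le_of_strictMono (fun P => OrderDual.toDual
    ⟨zeroLocus ℂ (c P.1.asIdeal), isAlgSet_zeroLocus _, algIrr_zeroLocus _ (hc P.1), ?_⟩) ?_
  · refine subset_trans (zeroLocus_anti_mono (Ideal.comap_mono ?_)) hW
    exact P.2
  · intro P P' hPP'
    have hle : P.1.asIdeal ≤ P'.1.asIdeal := hPP'.le
    rw [OrderDual.toDual_lt_toDual]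
    refine lt_of_le_not_ge (zeroLocus_anti_mono (Ideal.comap_mono hle)) ?_
    intro h
    have h' : zeroLocus ℂ (c P.1.asIdeal) ≤ zeroLocus ℂ (c P'.1.asIdeal) := h
    have h2 := vanishingIdeal_anti_mono (k := ℂ) h'
    have := hc P.1
    have := hc P'.1
    rw [IsPrime.vanishingIdeal_zeroLocus, IsPrime.vanishingIdeal_zeroLocus] at h2
    have h3 : P'.1.asIdeal ≤ P.1.asIdeal :=
      (IsLocalization.under_le_under_iff (ptI x).primeCompl _).mp h2
    exact absurd hPP' (not_lt_of_ge h3)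

lemma prime_sInf_le {R : Type} [CommRing R] {s : Set (Ideal R)} (hs : s.Finite) {m : Ideal R}
    (hm : m.IsPrime) (h : sInf s ≤ m) : ∃ p ∈ s, p ≤ m := by
  have := (Ideal.IsPrime.inf_le' (s := hs.toFinset) (f := id) hm).mp (by
    rw [Finset.inf_id_eq_sInf]
    simpa using h)
  simpa using this

lemma hom_scale {N k : ℕ} {p : MvPolynomial (Fin N) ℂ} (hp : p.IsHomogeneous k)
    (x : Fin N → ℂ) (t : ℂ) : eval (fun i => x i * t) p = t ^ k * eval x p := by
  rw [eval_eq, eval_eq, Finset.mul_sum]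
  refine Finset.sum_congr rfl fun d hd => ?_
  have h1 := hp (mem_support_iff.mp hd)
  have h2 : ∏ i ∈ d.support, t ^ d i = t ^ k := by
    rw [Finset.prod_pow_eq_pow_sum, ← h1, Finsupp.weight_apply, Finsupp.sum]
    simp
  simp_rw [mul_pow]
  rw [Finset.prod_mul_distrib, h2]
  ring

lemma concl {N c t : ℕ} (f : Fin c → MvPolynomial (Fin N) ℂ) (d : Fin c → ℕ)
    (hhom : ∀ i, (f i).IsHomogeneous (d i)) (I : Ideal (MvPolynomial (Fin N) ℂ))
    (h : (I ^ t).map (algebraMap _ (Localization.AtPrime (ptI (0 : Fin N → ℂ)))) ≤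
      (Ideal.span (Set.range f)).map (algebraMap _ (Localization.AtPrime (ptI (0 : Fin N → ℂ)))))
    (x : Fin N → ℂ) (hx : ∀ i, eval x (f i) = 0) : x ∈ zeroLocus ℂ I := by
  intro g hg
  have h1 := h (Ideal.mem_map_of_mem _ (Ideal.pow_mem_pow hg t))
  rw [IsLocalization.algebraMap_mem_map_algebraMap_iff (ptI (0 : Fin N → ℂ)).primeCompl] at h1
  obtain ⟨s, hs, hsg⟩ := h1
  let ψ : MvPolynomial (Fin N) ℂ →ₐ[ℂ] Polynomial ℂ :=
    aeval (fun i => Polynomial.C (x i) * Polynomial.X)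
  have hψ : ∀ p τ, (ψ p).eval τ = eval (fun i => x i * τ) p := by
    intro p τ
    have : (Polynomial.aeval τ).comp ψ = (aeval (fun i => x i * τ) :
        MvPolynomial (Fin N) ℂ →ₐ[ℂ] ℂ) := by
      ext i
      simp [ψ]
    have := DFunLike.congr_fun this p
    simpa [MvPolynomial.aeval_eq_eval, Polynomial.aeval_def, Polynomial.eval₂_eq_eval_map] using this
  have hF : ∀ p ∈ Ideal.span (Set.range f), ψ p = 0 := by
    intro p hp
    have : Ideal.span (Set.range f) ≤ RingHom.ker ψ := by
      rw [Ideal.span_le]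
      rintro _ ⟨i, rfl⟩
      refine (RingHom.mem_ker).mpr (Polynomial.funext fun τ => ?_)
      rw [hψ, hom_scale (hhom i), hx i]
      simp
    exact this hp
  have h2 := hF _ hsg
  rw [map_mul, map_pow] at h2
  have h3 : ψ s ≠ 0 := by
    intro h0
    apply hs
    refine (mem_ptI _ _).mpr ?_
    have := hψ s 0
    rw [h0] at this
    simp only [mul_zero, Polynomial.eval_zero] at this
    exact this.symm
  have h4 : ψ g = 0 := eq_zero_of_pow_eq_zero ((mul_eq_zero.mp h2).resolve_left h3)
  have h5 := hψ g 1
  rw [h4] at h5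
  simp only [mul_one, Polynomial.eval_zero] at h5
  rw [MvPolynomial.aeval_eq_eval]
  exact h5.symm

lemma zeroLocus_F {N c : ℕ} (f : Fin c → MvPolynomial (Fin N) ℂ) :
    zeroLocus ℂ (Ideal.span (Set.range f)) = {x | ∀ i, eval x (f i) = 0} := by
  rw [zeroLocus_span]
  ext x
  simp [MvPolynomial.aeval_eq_eval]

lemma quot_depth {n r : ℕ} (hrn : r ≤ n) (f : Fin (n - r) → MvPolynomial (Fin (n + 1)) ℂ)
    (hf0 : ∀ i, eval 0 (f i) = 0)
    (hdim : algDim {x | ∀ i, eval x (f i) = 0} = ((r + 1 : ℕ) : WithBot ℕ∞)) :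
    DepthGE (Localization.AtPrime (ptI (0 : Fin (n + 1) → ℂ))) (r + 1)
      (Localization.AtPrime (ptI (0 : Fin (n + 1) → ℂ)) ⧸ (Ideal.span (Set.range f)).map
        (algebraMap _ (Localization.AtPrime (ptI (0 : Fin (n + 1) → ℂ))))) := by
  set A := Localization.AtPrime (ptI (0 : Fin (n + 1) → ℂ))
  let φ : MvPolynomial (Fin (n + 1)) ℂ →+* A := algebraMap _ A
  let ys : List A := List.ofFn (fun i => φ (f i))
  have hys : Ideal.ofList ys • (⊤ : Submodule A A) = (Ideal.span (Set.range f)).map φ := by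
    rw [Ideal.map_span, ← Set.range_comp, smul_eq_mul, Ideal.mul_top, Ideal.ofList]
    congr 1
    ext a
    simp [ys, List.mem_ofFn]
  have hd : Module.supportDim A (A ⧸ (Ideal.span (Set.range f)).map φ) ≤ ((r + 1 : ℕ) : WithBot ℕ∞) := by
    rw [← hdim, ← zeroLocus_F]
    exact dim_loc _ _ _ (zeroLocus_anti_mono Ideal.le_comap_map)
  have h1 := DepthGE.quot_list (M := A) (j := r + 1) ys ?_ ?_ ?_
  · exact h1.congr (Submodule.quotEquivOfEq _ _ hys)
  · intro y hy
    simp only [ys, List.mem_ofFn] at hy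
    obtain ⟨i, rfl⟩ := hy
    rw [← Localization.AtPrime.map_eq_maximalIdeal]
    exact Ideal.mem_map_of_mem _ ((mem_ptI _ _).mpr (hf0 i))
  · have : r + 1 + ys.length = n + 1 := by simp [ys]; omega
    rw [this]
    exact origin_depth 0
  · rw [hys]
    exact hd

end Geom2

/-- Let `X ⊆ ℙⁿ` be a complete intersection of `n − r` irreducible
hypersurfaces with `dim X = r ≥ 2` (cone dimension `r + 1`). If the singular locus of `X`
(where the Jacobian of the defining equations drops rank) has codimension `≥ 2` in `X`
(cone dimension `≤ r − 1`), then `X` is irreducible. -/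
theorem stmt8 (n r : ℕ) (hr : 2 ≤ r) (hrn : r ≤ n)
    (f : Fin (n - r) → MvPolynomial (Fin (n + 1)) ℂ)
    (d : Fin (n - r) → ℕ) (hd : ∀ i, 1 ≤ d i)
    (hhom : ∀ i, (f i).IsHomogeneous (d i))
    (hirr : ∀ i, Irreducible (f i))
    (X : Set (Fin (n + 1) → ℂ))
    (hX : X = {x | ∀ i, eval x (f i) = 0})
    (hdim : algDim X = ((r + 1 : ℕ) : WithBot ℕ∞))
    (hsing : algDim {x | x ∈ X ∧ ¬ Function.Surjective (Matrix.mulVecLin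
        (fun (i : Fin (n - r)) (j : Fin (n + 1)) => eval x (pderiv j (f i))))}
      ≤ ((r - 1 : ℕ) : WithBot ℕ∞)) :
    AlgIrreducible X := by
  have hf0 : ∀ i, eval 0 (f i) = 0 := by
    intro i
    have h := hom_scale (hhom i) 0 0
    rw [zero_pow (by have := hd i; omega), zero_mul] at h
    simpa using h
  refine ⟨⟨0, by rw [hX]; exact hf0⟩, ?_⟩
  intro A₁ B₁ hA hB hAB
  set F := Ideal.span (Set.range f) with hF
  have hXF : X = zeroLocus ℂ F := by rw [hX, hF, zeroLocus_F]
  have hfin : F.minimalPrimes.Finite := F.finite_minimalPrimes_of_isNoetherianRing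
  have hclosed : ∀ S : Set (Fin (n + 1) → ℂ), IsAlgSet S →
      zeroLocus ℂ (vanishingIdeal ℂ S) ⊆ S := by
    rintro _ ⟨T, rfl⟩ x hx p hp
    have := hx p (by
      rw [mem_vanishingIdeal_iff]
      intro y hy
      rw [MvPolynomial.aeval_eq_eval]
      exact hy p hp)
    simpa [MvPolynomial.aeval_eq_eval] using this
  let PA : Set (Ideal (MvPolynomial (Fin (n + 1)) ℂ)) :=
    {p ∈ F.minimalPrimes | vanishingIdeal ℂ A₁ ≤ p}
  let PB : Set (Ideal (MvPolynomial (Fin (n + 1)) ℂ)) :=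
    {p ∈ F.minimalPrimes | ¬ vanishingIdeal ℂ A₁ ≤ p}
  have hPA : ∀ p ∈ PA, vanishingIdeal ℂ A₁ ≤ p := fun p hp => hp.2
  have hPB : ∀ p ∈ PB, vanishingIdeal ℂ B₁ ≤ p := by
    intro p hp
    have hpp : p.IsPrime := hp.1.1.1
    refine (hpp.mul_le.mp ?_).resolve_left hp.2
    have h1 : vanishingIdeal ℂ A₁ * vanishingIdeal ℂ B₁ ≤ vanishingIdeal ℂ X := by
      rw [Ideal.mul_le]
      intro a ha b hb
      rw [mem_vanishingIdeal_iff] at ha hb ⊢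
      intro x hx
      rw [map_mul]
      rcases hAB hx with h | h
      · rw [ha x h, zero_mul]
      · rw [hb x h, mul_zero]
    refine h1.trans ?_
    rw [hXF, vanishingIdeal_zeroLocus_eq_radical]
    exact hpp.radical_le_iff.mpr hp.1.1.2
  have hIJ : sInf PA * sInf PB ≤ F.radical := by
    rw [← Ideal.sInf_minimalPrimes]
    refine le_sInf fun p hp => ?_
    by_cases h : vanishingIdeal ℂ A₁ ≤ p
    · exact Ideal.mul_le_left.trans (sInf_le ⟨hp, h⟩)
    · exact Ideal.mul_le_right.trans (sInf_le ⟨hp, h⟩)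
  obtain ⟨t, ht⟩ := Ideal.exists_pow_le_of_le_radical_of_fg hIJ (IsNoetherian.noetherian _)
  have hFA : ∀ p ∈ F.minimalPrimes, F ≤ p := fun p hp => hp.1.2
  have hsingmem : ∀ x, sInf PA ≤ ptI x → sInf PB ≤ ptI x →
      x ∈ {x | x ∈ X ∧ ¬ Function.Surjective (Matrix.mulVecLin
        (fun (i : Fin (n - r)) (j : Fin (n + 1)) => eval x (pderiv j (f i))))} := by
    intro x h1 h2
    obtain ⟨p, hp, hpx⟩ := prime_sInf_le (hfin.subset (Set.sep_subset _ _)) (ptI_prime x) h1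
    obtain ⟨q, hq, hqx⟩ := prime_sInf_le (hfin.subset (Set.sep_subset _ _)) (ptI_prime x) h2
    have hx : ∀ i, eval x (f i) = 0 := fun i =>
      (mem_ptI x _).mp (hpx (hFA p hp.1 (Ideal.subset_span ⟨i, rfl⟩)))
    refine ⟨by rw [hX]; exact hx, fun hJ => ?_⟩
    have e1 := smooth_unique hrn f x hx hJ hp.1 hpx
    have e2 := smooth_unique hrn f x hx hJ hq.1 hqx
    apply hq.2
    rw [e2, ← e1]
    exact hp.2
  have hkey := idem_argument (e := r - 1)
    (F.map (algebraMap _ (Localization.AtPrime (ptI (0 : Fin (n + 1) → ℂ)))))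
    ((sInf PA ^ t).map (algebraMap _ (Localization.AtPrime (ptI (0 : Fin (n + 1) → ℂ)))))
    ((sInf PB ^ t).map (algebraMap _ (Localization.AtPrime (ptI (0 : Fin (n + 1) → ℂ)))))
    (by
      have : r - 1 + 2 = r + 1 := by omega
      rw [this]
      exact quot_depth hrn f hf0 (hX ▸ hdim))
    (by
      rw [← Ideal.map_mul, ← mul_pow]
      exact Ideal.map_mono ht)
    (by
      intro q hq hle
      refine (dim_loc 0 q _ ?_).trans hsing
      intro x hx
      have hqc : (q.comap (algebraMap (MvPolynomial (Fin (n + 1)) ℂ) _)).IsPrime :=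
        Ideal.IsPrime.comap _
      have hqx : q.comap (algebraMap (MvPolynomial (Fin (n + 1)) ℂ) _) ≤ ptI x := by
        intro p hp
        rw [mem_vanishingIdeal_singleton_iff]
        exact hx p hp
      have h1 : sInf PA ≤ q.comap (algebraMap (MvPolynomial (Fin (n + 1)) ℂ) _) :=
        Ideal.IsPrime.le_of_pow_le (n := t) (Ideal.map_le_iff_le_comap.mp (le_sup_left.trans hle))
      have h2 : sInf PB ≤ q.comap (algebraMap (MvPolynomial (Fin (n + 1)) ℂ) _) :=
        Ideal.IsPrime.le_of_pow_le (n := t) (Ideal.map_le_iff_le_comap.mp (le_sup_right.trans hle))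
      exact hsingmem x (h1.trans hqx) (h2.trans hqx))
  rcases hkey with h | h
  · left
    intro x hx
    apply hclosed A₁ hA
    exact zeroLocus_anti_mono (le_sInf hPA) (concl f d hhom _ h x (by rw [hX] at hx; exact hx))
  · right
    intro x hx
    apply hclosed B₁ hB
    exact zeroLocus_anti_mono (le_sInf hPB) (concl f d hhom _ h x (by rw [hX] at hx; exact hx))
end
end
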